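/- arXiv:1707.02081 — 2 statements merged into one kernel-verified Lean document; each statement's English description precedes it below -/
import Mathlib

section
/- Let C be a small addable class of finite simple graphs such that for every n ≥ 1 the set of connected graphs in C on the vertex set Fin n is nonempty, and let φ be a sentence of first-order logic in the language of graphs. Let p_n denote the probability that a graph drawn uniformly at random from the connected graphs in C on the vertex set Fin n satisfies φ. Then lim_{n→∞} p_n exists and is equal to either 0 or 1. -/
open Filter Topology FirstOrder

/-- A class of finite simple graphs, given as a property of simple graphs
on arbitrary finite vertex types. -/
abbrev GraphClassOn := ∀ (V : Type) [Finite V], SimpleGraph V → Prop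

/-- The class is invariant under graph isomorphism. -/
def ClassIsoInvariant (C : GraphClassOn) : Prop :=
  ∀ (V W : Type) [Finite V] [Finite W] (G : SimpleGraph V) (H : SimpleGraph W),
    Nonempty (G ≃g H) → (C V G ↔ C W H)

/-- The class is bridge-addable: one may add an edge between two vertices lying in
distinct connected components. -/
def ClassBridgeAddable (C : GraphClassOn) : Prop :=
  ∀ (V : Type) [Finite V] (G : SimpleGraph V) (u v : V),
    C V G → ¬G.Reachable u v → C V (G ⊔ SimpleGraph.fromEdgeSet {s(u, v)})

/-- The class is decomposable: a graph belongs to the class iff each of its connected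
components does. -/
def ClassDecomposable (C : GraphClassOn) : Prop :=
  ∀ (V : Type) [Finite V] (G : SimpleGraph V),
    C V G ↔ ∀ c : G.ConnectedComponent, C c.supp (G.induce c.supp)

/-- Addable = decomposable and bridge-addable. -/
def ClassAddable (C : GraphClassOn) : Prop :=
  ClassDecomposable C ∧ ClassBridgeAddable C

/-- The number of graphs in the class on the vertex set `Fin n`. -/
noncomputable def classCount (C : GraphClassOn) (n : ℕ) : ℕ :=
  Nat.card {G : SimpleGraph (Fin n) // C (Fin n) G}

/-- The class is small: `c_n ≤ d^n · n!` for some real `d`. -/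
def ClassSmall (C : GraphClassOn) : Prop :=
  ∃ d : ℝ, ∀ n : ℕ, (classCount C n : ℝ) ≤ d ^ n * n.factorial

/-- The class is smooth: `c_n / (n · c_{n-1})` tends to a finite limit. -/
def ClassSmooth (C : GraphClassOn) : Prop :=
  ∃ γ : ℝ, Tendsto (fun n : ℕ => (classCount C n : ℝ) / (n * classCount C (n - 1)))
    atTop (𝓝 γ)

/-- The probability that a uniformly random graph from the class on `Fin n`
satisfies the property `P`. -/
noncomputable def classProb (C : GraphClassOn) (n : ℕ) (P : SimpleGraph (Fin n) → Prop) : ℝ :=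
  (Nat.card {G : SimpleGraph (Fin n) // C (Fin n) G ∧ P G} : ℝ) / (classCount C n : ℝ)

/-- The probability that a uniformly random *connected* graph from the class on `Fin n`
satisfies the property `P`. -/
noncomputable def connClassProb (C : GraphClassOn) (n : ℕ)
    (P : SimpleGraph (Fin n) → Prop) : ℝ :=
  (Nat.card {G : SimpleGraph (Fin n) // (C (Fin n) G ∧ G.Connected) ∧ P G} : ℝ) /
    (Nat.card {G : SimpleGraph (Fin n) // C (Fin n) G ∧ G.Connected} : ℝ)

/-- Satisfaction of a first-order sentence in the language of graphs in a simple graph. -/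
def SatFO {V : Type} (G : SimpleGraph V) (φ : Language.graph.Sentence) : Prop :=
  letI := G.structure
  V ⊨ φ

/-- The rooted graph `(H, r)` appears in `G` on the vertex set `W`:
the induced subgraph of `G` on `W` is isomorphic to `H` via an isomorphism sending some
`w ∈ W` to `r`, every edge of `G` joining `W` to its complement is incident on `w`,
and there is exactly one such edge. -/
def AppearsAt {VH V : Type} (H : SimpleGraph VH) (r : VH) (G : SimpleGraph V)
    (W : Set V) : Prop :=
  ∃ (w : V) (hw : w ∈ W) (e : G.induce W ≃g H),
    e ⟨w, hw⟩ = r ∧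
    (∀ a ∈ W, ∀ b ∉ W, G.Adj a b → a = w) ∧
    (∃! b, b ∉ W ∧ G.Adj w b)

/-- The rooted graph `(H, r)` appears in `G`. -/
def Appears {VH V : Type} (H : SimpleGraph VH) (r : VH) (G : SimpleGraph V) : Prop :=
  ∃ W : Set V, AppearsAt H r G W

/-- The number of appearances of the rooted graph `(H, r)` in `G`, i.e. the number of
vertex sets `W` witnessing an appearance. -/
noncomputable def numAppearances {VH V : Type} (H : SimpleGraph VH) (r : VH)
    (G : SimpleGraph V) : ℕ :=
  Nat.card {W : Set V // AppearsAt H r G W}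

/-- The number of connected components of `G` whose induced subgraph is isomorphic
to `H`. -/
noncomputable def numComponentsIso {V VH : Type} (G : SimpleGraph V)
    (H : SimpleGraph VH) : ℕ :=
  Nat.card {c : G.ConnectedComponent // Nonempty (G.induce c.supp ≃g H)}

/-! ## Part 1: Ehrenfeucht-Fraisse games and locality -/

namespace FOZ

section Games

variable {V W : Type}

/-- A set of pairs is a partial isomorphism. -/
def PIso (G : SimpleGraph V) (H : SimpleGraph W) (S : Set (V × W)) : Prop :=
  ∀ p ∈ S, ∀ q ∈ S, (p.1 = q.1 ↔ p.2 = q.2) ∧ (G.Adj p.1 q.1 ↔ H.Adj p.2 q.2)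

/-- The `k`-round back-and-forth relation. -/
def EF (G : SimpleGraph V) (H : SimpleGraph W) : ℕ → Set (V × W) → Prop
  | 0, S => PIso G H S
  | k + 1, S => EF G H k S ∧ (∀ x, ∃ y, EF G H k (insert (x, y) S)) ∧
      (∀ y, ∃ x, EF G H k (insert (x, y) S))

/-- The local `k`-round back-and-forth relation. -/
def LEF (G : SimpleGraph V) (H : SimpleGraph W) : ℕ → Set (V × W) → Prop
  | 0, S => PIso G H S
  | k + 1, S => LEF G H k S ∧
      (∀ x, (∃ p ∈ S, G.dist x p.1 ≤ 2 ^ k) →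
        ∃ y, (∃ p ∈ S, H.dist y p.2 ≤ 2 ^ k) ∧ LEF G H k (insert (x, y) S)) ∧
      (∀ y, (∃ p ∈ S, H.dist y p.2 ≤ 2 ^ k) →
        ∃ x, (∃ p ∈ S, G.dist x p.1 ≤ 2 ^ k) ∧ LEF G H k (insert (x, y) S))

theorem EF.mono {G : SimpleGraph V} {H : SimpleGraph W} {k l : ℕ} (h : k ≤ l) {S : Set (V × W)}
    (hS : EF G H l S) : EF G H k S := by
  induction h with
  | refl => exact hS
  | step _ ih => exact ih hS.1

theorem EF.pIso {G : SimpleGraph V} {H : SimpleGraph W} {k : ℕ} {S : Set (V × W)}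
    (hS : EF G H k S) : PIso G H S := hS.mono (Nat.zero_le k)

/-- Quantifier rank. -/
def qr {α : Type} : ∀ {n : ℕ}, Language.graph.BoundedFormula α n → ℕ
  | _, .falsum => 0
  | _, .equal _ _ => 0
  | _, .rel _ _ => 0
  | _, .imp f g => max (qr f) (qr g)
  | _, .all f => qr f + 1

theorem range_snoc_pair {n : ℕ} (a : Fin n → V) (b : Fin n → W) (x : V) (y : W) :
    (Set.range fun i : Fin (n + 1) =>
      ((Fin.snoc a x : Fin (n + 1) → V) i, (Fin.snoc b y : Fin (n + 1) → W) i)) =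
    insert (x, y) (Set.range fun i : Fin n => (a i, b i)) := by
  ext p
  simp only [Set.mem_range, Set.mem_insert_iff]
  constructor
  · rintro ⟨i, rfl⟩
    induction i using Fin.lastCases with
    | last => left; simp
    | cast i => right; exact ⟨i, by simp⟩
  · rintro (rfl | ⟨i, rfl⟩)
    · exact ⟨Fin.last n, by simp⟩
    · exact ⟨i.castSucc, by simp⟩

theorem term_var {n : ℕ} (t : Language.graph.Term (Empty ⊕ Fin n)) :
    ∃ i, t = Language.Term.var (Sum.inr i) := by
  cases t with
  | var x =>
    cases x with
    | inl x => exact x.elim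
    | inr i => exact ⟨i, rfl⟩
  | func f ts => exact Empty.elim f

theorem realize_iff (G : SimpleGraph V) (H : SimpleGraph W) {n : ℕ}
    (φ : Language.graph.BoundedFormula Empty n) : ∀ {k : ℕ}, qr φ ≤ k →
    ∀ (a : Fin n → V) (b : Fin n → W), EF G H k (Set.range fun i => (a i, b i)) →
    (@Language.BoundedFormula.Realize _ V G.structure _ _ φ default a ↔
      @Language.BoundedFormula.Realize _ W H.structure _ _ φ default b) := by
  induction φ with
  | falsum => intro k hk a b h; exact Iff.rfl
  | equal t₁ t₂ =>
    intro k hk a b h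
    obtain ⟨i, rfl⟩ := term_var t₁
    obtain ⟨j, rfl⟩ := term_var t₂
    exact (h.pIso _ ⟨i, rfl⟩ _ ⟨j, rfl⟩).1
  | rel R ts =>
    intro k hk a b h
    cases R
    obtain ⟨i, hi⟩ := term_var (ts 0)
    obtain ⟨j, hj⟩ := term_var (ts 1)
    have := (h.pIso _ ⟨i, rfl⟩ _ ⟨j, rfl⟩).2
    simp only [Language.BoundedFormula.Realize]
    change G.Adj (@Language.Term.realize _ _ G.structure _ _ (ts 0))
      (@Language.Term.realize _ _ G.structure _ _ (ts 1)) ↔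
      H.Adj (@Language.Term.realize _ _ H.structure _ _ (ts 0))
      (@Language.Term.realize _ _ H.structure _ _ (ts 1))
    rw [hi, hj]
    exact this
  | imp f g ihf ihg =>
    intro k hk a b h
    simp only [qr, max_le_iff] at hk
    simp only [Language.BoundedFormula.Realize]
    rw [ihf hk.1 a b h, ihg hk.2 a b h]
  | all f ih =>
    intro k hk a b h
    simp only [qr] at hk
    obtain ⟨k, rfl⟩ : ∃ l, k = l + 1 := ⟨k - 1, by omega⟩
    simp only [Language.BoundedFormula.Realize]
    constructor
    · intro hf y
      obtain ⟨x, hx⟩ := h.2.2 y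
      rw [← range_snoc_pair] at hx
      exact (ih (by omega) _ _ hx).1 (hf x)
    · intro hf x
      obtain ⟨y, hx⟩ := h.2.1 x
      rw [← range_snoc_pair] at hx
      exact (ih (by omega) _ _ hx).2 (hf y)

theorem satFO_iff (G : SimpleGraph V) (H : SimpleGraph W) (φ : Language.graph.Sentence)
    (h : EF G H (qr φ) ∅) : SatFO G φ ↔ SatFO H φ := by
  unfold SatFO
  have := realize_iff G H φ le_rfl default default
    (by convert h; simp)
  exact this

theorem LEF.pIso {G : SimpleGraph V} {H : SimpleGraph W} {k : ℕ} {S : Set (V × W)}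
    (hS : LEF G H k S) : PIso G H S := by
  induction k with
  | zero => exact hS
  | succ k ih => exact ih hS.1

theorem LEF_union {G : SimpleGraph V} {H : SimpleGraph W} (hG : G.Connected) (hH : H.Connected)
    (k : ℕ) : ∀ (S T : Set (V × W)), LEF G H k S → LEF G H k T →
    (∀ p ∈ S, ∀ q ∈ T, 2 ^ k < G.dist p.1 q.1) → (∀ p ∈ S, ∀ q ∈ T, 2 ^ k < H.dist p.2 q.2) →
    LEF G H k (S ∪ T) := by
  induction k with
  | zero =>
    intro S T hS hT hd hd'
    have key : ∀ p ∈ S, ∀ q ∈ T, p.1 ≠ q.1 ∧ p.2 ≠ q.2 ∧ ¬ G.Adj p.1 q.1 ∧ ¬ H.Adj p.2 q.2 := by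
      intro p hp q hq
      have h1 := hd p hp q hq
      have h2 := hd' p hp q hq
      refine ⟨?_, ?_, ?_, ?_⟩
      · intro h; rw [h] at h1; simp at h1
      · intro h; rw [h] at h2; simp at h2
      · intro h; rw [SimpleGraph.dist_eq_one_iff_adj.2 h] at h1; simp at h1
      · intro h; rw [SimpleGraph.dist_eq_one_iff_adj.2 h] at h2; simp at h2
    rintro p (hp | hp) q (hq | hq)
    · exact hS p hp q hq
    · have := key p hp q hq
      tauto
    · obtain ⟨h1, h2, h3, h4⟩ := key q hq p hp
      rw [G.adj_comm, H.adj_comm]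
      exact ⟨⟨fun h => absurd h.symm h1, fun h => absurd h.symm h2⟩, by tauto⟩
    · exact hT p hp q hq
  | succ k ih =>
    intro S T hS hT hd hd'
    have e : 2 ^ (k + 1) = 2 ^ k + 2 ^ k := by ring
    -- one-sided extension
    have ext : ∀ (S T : Set (V × W)), LEF G H (k+1) S → LEF G H (k+1) T →
        (∀ p ∈ S, ∀ q ∈ T, 2 ^ (k+1) < G.dist p.1 q.1) →
        (∀ p ∈ S, ∀ q ∈ T, 2 ^ (k+1) < H.dist p.2 q.2) → ∀ x y,
        (∃ p ∈ S, G.dist x p.1 ≤ 2 ^ k) → (∃ p ∈ S, H.dist y p.2 ≤ 2 ^ k) →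
        LEF G H k (insert (x, y) S) → LEF G H k (insert (x, y) (S ∪ T)) := by
      intro S T hS hT hd hd' x y ⟨p, hp, hpx⟩ ⟨p', hp', hpy⟩ h
      rw [← Set.insert_union]
      refine ih _ _ h hT.1 ?_ ?_
      · rintro r (rfl | hr) q hq
        · have h1 := hd p hp q hq
          have h2 := hG.dist_triangle (u := p.1) (v := x) (w := q.1)
          rw [SimpleGraph.dist_comm (u := p.1) (v := x)] at h2
          simp only
          omega
        · have := hd r hr q hq; omega
      · rintro r (rfl | hr) q hq
        · have h1 := hd' p' hp' q hq
          have h2 := hH.dist_triangle (u := p'.2) (v := y) (w := q.2)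
          rw [SimpleGraph.dist_comm (u := p'.2) (v := y)] at h2
          simp only
          omega
        · have := hd' r hr q hq; omega
    have hdc : ∀ p ∈ T, ∀ q ∈ S, 2 ^ (k+1) < G.dist p.1 q.1 := by
      intro p hp q hq; rw [SimpleGraph.dist_comm]; exact hd q hq p hp
    have hdc' : ∀ p ∈ T, ∀ q ∈ S, 2 ^ (k+1) < H.dist p.2 q.2 := by
      intro p hp q hq; rw [SimpleGraph.dist_comm]; exact hd' q hq p hp
    refine ⟨ih S T hS.1 hT.1 (fun p hp q hq => ?_) (fun p hp q hq => ?_), ?_, ?_⟩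
    · have := hd p hp q hq; omega
    · have := hd' p hp q hq; omega
    · rintro x ⟨p, hp | hp, hpx⟩
      · obtain ⟨y, ⟨p', hp', hpy⟩, hy⟩ := hS.2.1 x ⟨p, hp, hpx⟩
        exact ⟨y, ⟨p', Or.inl hp', hpy⟩,
          ext S T hS hT hd hd' x y ⟨p, hp, hpx⟩ ⟨p', hp', hpy⟩ hy⟩
      · obtain ⟨y, ⟨p', hp', hpy⟩, hy⟩ := hT.2.1 x ⟨p, hp, hpx⟩
        refine ⟨y, ⟨p', Or.inr hp', hpy⟩, ?_⟩
        rw [Set.union_comm]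
        exact ext T S hT hS hdc hdc' x y ⟨p, hp, hpx⟩ ⟨p', hp', hpy⟩ hy
    · rintro y ⟨p, hp | hp, hpx⟩
      · obtain ⟨x, ⟨p', hp', hpy⟩, hy⟩ := hS.2.2 y ⟨p, hp, hpx⟩
        exact ⟨x, ⟨p', Or.inl hp', hpy⟩,
          ext S T hS hT hd hd' x y ⟨p', hp', hpy⟩ ⟨p, hp, hpx⟩ hy⟩
      · obtain ⟨x, ⟨p', hp', hpy⟩, hy⟩ := hT.2.2 y ⟨p, hp, hpx⟩
        refine ⟨x, ⟨p', Or.inr hp', hpy⟩, ?_⟩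
        rw [Set.union_comm]
        exact ext T S hT hS hdc hdc' x y ⟨p', hp', hpy⟩ ⟨p, hp, hpx⟩ hy

/-- Among many scattered points one is far from a small set. -/
theorem exists_far {H : SimpleGraph W} (hH : H.Connected) {q N r : ℕ} (hq : q < N)
    (Y : Fin N → W) (hY : ∀ i j, i ≠ j → 2 * r < H.dist (Y i) (Y j))
    (S : Set W) (hS : S.Finite) (hc : S.ncard ≤ q) :
    ∃ i, ∀ s ∈ S, r < H.dist s (Y i) := by
  by_contra! hcon
  choose s hs hd using hcon
  have hinj : Function.Injective s := by
    intro i j hij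
    by_contra hne
    have h1 := hY i j hne
    have h2 := hd i
    have h3 := hd j
    have h4 := hH.dist_triangle (u := Y i) (v := s i) (w := Y j)
    rw [SimpleGraph.dist_comm (u := Y i) (v := s i)] at h4
    rw [hij] at h2 h4
    omega
  have h1 : (Set.range s).ncard ≤ S.ncard :=
    Set.ncard_le_ncard (by rintro _ ⟨i, rfl⟩; exact hs i) hS
  rw [Set.ncard_range_of_injective hinj] at h1
  simp at h1
  omega

theorem EF_of_LEF {G : SimpleGraph V} {H : SimpleGraph W} (hG : G.Connected) (hH : H.Connected)
    {q N : ℕ} (hN : q < N)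
    (h1 : ∀ k < q, ∀ x : V, ∃ Y : Fin N → W,
      (∀ i j, i ≠ j → 2 * 2 ^ k < H.dist (Y i) (Y j)) ∧ ∀ i, LEF G H k {(x, Y i)})
    (h2 : ∀ k < q, ∀ y : W, ∃ X : Fin N → V,
      (∀ i j, i ≠ j → 2 * 2 ^ k < G.dist (X i) (X j)) ∧ ∀ i, LEF G H k {(X i, y)})
    (k : ℕ) : ∀ (S : Set (V × W)), S.Finite → S.ncard + k ≤ q → LEF G H k S → EF G H k S := by
  induction k with
  | zero => intro S _ _ h; exact h
  | succ k ih =>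
    intro S hf hc hS
    have hins : ∀ x y, (insert (x, y) S).Finite ∧ (insert (x, y) S).ncard + k ≤ q := by
      intro x y
      refine ⟨hf.insert _, ?_⟩
      have := Set.ncard_insert_le (x, y) S
      omega
    refine ⟨ih S hf (by omega) hS.1, ?_, ?_⟩
    · intro x
      by_cases hx : ∃ p ∈ S, G.dist x p.1 ≤ 2 ^ k
      · obtain ⟨y, _, hy⟩ := hS.2.1 x hx
        exact ⟨y, ih _ (hins x y).1 (hins x y).2 hy⟩
      · push Not at hx
        obtain ⟨Y, hY, hL⟩ := h1 k (by omega) x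
        obtain ⟨i, hi⟩ := exists_far hH hN Y hY (Prod.snd '' S) (hf.image _)
          ((Set.ncard_image_le hf).trans (by omega))
        refine ⟨Y i, ih _ (hins _ _).1 (hins _ _).2 ?_⟩
        have := LEF_union hG hH k S {(x, Y i)} hS.1 (hL i)
          (by rintro p hp q rfl; rw [SimpleGraph.dist_comm]; exact hx p hp)
          (by rintro p hp q rfl; exact hi _ ⟨p, hp, rfl⟩)
        rwa [Set.union_singleton] at this
    · intro y
      by_cases hx : ∃ p ∈ S, H.dist y p.2 ≤ 2 ^ k
      · obtain ⟨x, _, hy⟩ := hS.2.2 y hx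
        exact ⟨x, ih _ (hins x y).1 (hins x y).2 hy⟩
      · push Not at hx
        obtain ⟨X, hX, hL⟩ := h2 k (by omega) y
        obtain ⟨i, hi⟩ := exists_far hG hN X hX (Prod.fst '' S) (hf.image _)
          ((Set.ncard_image_le hf).trans (by omega))
        refine ⟨X i, ih _ (hins _ _).1 (hins _ _).2 ?_⟩
        have := LEF_union hG hH k S {(X i, y)} hS.1 (hL i)
          (by rintro p hp q rfl; exact hi _ ⟨p, hp, rfl⟩)
          (by rintro p hp q rfl; rw [SimpleGraph.dist_comm]; exact hx p hp)
        rwa [Set.union_singleton] at this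

/-- Local types. -/
def Typ : ℕ → ℕ → Type
  | 0, n => Set (Fin n × Fin n) × Set (Fin n × Fin n)
  | k + 1, n => Typ k n × Set (Typ k (n + 1))

instance Typ.finite : ∀ k n : ℕ, Finite (Typ k n)
  | 0, n => inferInstanceAs (Finite (Set (Fin n × Fin n) × Set (Fin n × Fin n)))
  | k + 1, n => by
    have := Typ.finite k n
    have := Typ.finite k (n + 1)
    exact inferInstanceAs (Finite (Typ k n × Set (Typ k (n + 1))))

/-- The local type of a tuple. -/
def ltp (G : SimpleGraph V) : ∀ (k n : ℕ), (Fin n → V) → Typ k n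
  | 0, _, a => ({p | a p.1 = a p.2}, {p | G.Adj (a p.1) (a p.2)})
  | k + 1, n, a => (ltp G k n a,
      {t | ∃ x : V, (∃ i, G.dist x (a i) ≤ 2 ^ k) ∧ ltp G k (n + 1) (Fin.snoc a x) = t})

theorem LEF_of_ltp (G : SimpleGraph V) (H : SimpleGraph W) (k : ℕ) :
    ∀ {n : ℕ} (a : Fin n → V) (b : Fin n → W), ltp G k n a = ltp H k n b →
    LEF G H k (Set.range fun i => (a i, b i)) := by
  induction k with
  | zero =>
    rintro n a b h _ ⟨i, rfl⟩ _ ⟨j, rfl⟩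
    have h1 := congrArg Prod.fst h
    have h2 := congrArg Prod.snd h
    simp only [ltp] at h1 h2
    exact ⟨Set.ext_iff.1 h1 (i, j), Set.ext_iff.1 h2 (i, j)⟩
  | succ k ih =>
    intro n a b h
    have h1 : ltp G k n a = ltp H k n b := congrArg Prod.fst h
    have h2 := congrArg Prod.snd h
    simp only [ltp] at h2
    refine ⟨ih a b h1, ?_, ?_⟩
    · rintro x ⟨_, ⟨i, rfl⟩, hi⟩
      obtain ⟨y, ⟨j, hj⟩, e⟩ := (Set.ext_iff.1 h2 (ltp G k (n + 1) (Fin.snoc a x))).1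
        ⟨x, ⟨i, hi⟩, rfl⟩
      refine ⟨y, ⟨_, ⟨j, rfl⟩, hj⟩, ?_⟩
      rw [← range_snoc_pair]
      exact ih _ _ e.symm
    · rintro y ⟨_, ⟨i, rfl⟩, hi⟩
      obtain ⟨x, ⟨j, hj⟩, e⟩ := (Set.ext_iff.1 h2 (ltp H k (n + 1) (Fin.snoc b y))).2
        ⟨y, ⟨i, hi⟩, rfl⟩
      refine ⟨x, ⟨_, ⟨j, rfl⟩, hj⟩, ?_⟩
      rw [← range_snoc_pair]
      exact ih _ _ e

/-- `f` embeds `G` in `H` as an induced subgraph attached only at the root `y`. -/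
structure Pend (G : SimpleGraph V) (H : SimpleGraph W) (y : V) (f : V → W) : Prop where
  inj : Function.Injective f
  adj : ∀ a b, H.Adj (f a) (f b) ↔ G.Adj a b
  closed : ∀ a, a ≠ y → ∀ w, H.Adj (f a) w → w ∈ Set.range f

theorem Pend.lift {G : SimpleGraph V} {H : SimpleGraph W} {y : V} {f : V → W}
    (hf : Pend G H y f) (hG : G.Connected) {u w : W} (p : H.Walk u w) :
    ∀ a, u = f a → p.length ≤ G.dist a y → ∃ x, w = f x ∧ G.dist a x ≤ p.length := by
  induction p with
  | nil => intro a ha _; exact ⟨a, ha, by simp⟩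
  | @cons u v w h p ih =>
    rintro a rfl hl
    rw [SimpleGraph.Walk.length_cons] at hl ⊢
    have hne : a ≠ y := by rintro rfl; simp at hl
    obtain ⟨b, rfl⟩ := hf.closed a hne v h
    have hab := (hf.adj a b).1 h
    have h1 : G.dist a b = 1 := SimpleGraph.dist_eq_one_iff_adj.2 hab
    have h2 := hG.dist_triangle (u := a) (v := b) (w := y)
    obtain ⟨x, hx, hd⟩ := ih b rfl (by omega)
    have h3 := hG.dist_triangle (u := a) (v := b) (w := x)
    exact ⟨x, hx, by omega⟩

theorem Pend.dist_le {G : SimpleGraph V} {H : SimpleGraph W} {y : V} {f : V → W}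
    (hf : Pend G H y f) (hG : G.Connected) (a b : V) : H.dist (f a) (f b) ≤ G.dist a b := by
  obtain ⟨p, hp⟩ := hG.exists_walk_length_eq_dist a b
  let F : G →g H := ⟨f, fun {a b} h => (hf.adj a b).2 h⟩
  have := SimpleGraph.dist_le (p.map F)
  rw [SimpleGraph.Walk.length_map, hp] at this
  exact this

theorem Pend.ltp_eq {G : SimpleGraph V} {H : SimpleGraph W} {y : V} {f : V → W}
    (hf : Pend G H y f) (hG : G.Connected) (hH : H.Connected) (k : ℕ) :
    ∀ {n : ℕ} (a : Fin n → V), (∀ i, 2 ^ k < G.dist (a i) y) →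
      ltp H k n (fun i => f (a i)) = ltp G k n a := by
  induction k with
  | zero =>
    intro n a _
    simp only [ltp]
    congr 1
    · ext p; exact hf.inj.eq_iff
    · ext p; exact hf.adj _ _
  | succ k ih =>
    intro n a ha
    have e : 2 ^ (k + 1) = 2 ^ k + 2 ^ k := by ring
    simp only [ltp]
    have key : ∀ x i, G.dist x (a i) ≤ 2 ^ k →
        ltp H k (n + 1) (Fin.snoc (fun i => f (a i)) (f x)) = ltp G k (n + 1) (Fin.snoc a x) := by
      intro x i hx
      rw [← ih]
      · congr 1
        ext j
        induction j using Fin.lastCases with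
        | last => simp
        | cast j => simp
      · intro j
        induction j using Fin.lastCases with
        | last =>
          have h1 := ha i
          have h2 := hG.dist_triangle (u := a i) (v := x) (w := y)
          rw [SimpleGraph.dist_comm (u := a i) (v := x)] at h2
          simp only [Fin.snoc_last]
          omega
        | cast j =>
          have := ha j
          simp only [Fin.snoc_castSucc]
          omega
    congr 1
    · exact ih a (fun i => by have := ha i; omega)
    · ext t
      constructor
      · rintro ⟨w, ⟨i, hi⟩, rfl⟩
        obtain ⟨p, hp⟩ := hH.exists_walk_length_eq_dist (f (a i)) w
        rw [SimpleGraph.dist_comm] at hi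
        have := ha i
        obtain ⟨x, rfl, hx⟩ := hf.lift hG p (a i) rfl (by omega)
        have hx' : G.dist x (a i) ≤ 2 ^ k := by rw [SimpleGraph.dist_comm]; omega
        exact ⟨x, ⟨i, hx'⟩, (key x i hx').symm⟩
      · rintro ⟨x, ⟨i, hi⟩, rfl⟩
        exact ⟨f x, ⟨i, (hf.dist_le hG x (a i)).trans hi⟩, key x i hi⟩

theorem Pend.dist_out {G : SimpleGraph V} {H : SimpleGraph W} {y : V} {f : V → W}
    (hf : Pend G H y f) (hG : G.Connected) {u w : W} (p : H.Walk u w) (hw : w ∉ Set.range f) :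
    ∀ a, u = f a → G.dist a y + H.dist (f y) w ≤ p.length := by
  induction p with
  | nil => rintro a rfl; exact absurd ⟨a, rfl⟩ hw
  | @cons u v w h p ih =>
    rintro a rfl
    by_cases hne : a = y
    · subst hne
      have := SimpleGraph.dist_le (SimpleGraph.Walk.cons h p)
      simpa using this
    obtain ⟨b, rfl⟩ := hf.closed a hne v h
    have hab := (hf.adj a b).1 h
    have h1 : G.dist a b = 1 := SimpleGraph.dist_eq_one_iff_adj.2 hab
    have h2 := hG.dist_triangle (u := a) (v := b) (w := y)
    have := ih hw b rfl
    rw [SimpleGraph.Walk.length_cons]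
    omega

theorem Pend.dist_out' {G : SimpleGraph V} {H : SimpleGraph W} {y : V} {f : V → W}
    (hf : Pend G H y f) (hG : G.Connected) (hH : H.Connected) (a : V) {w : W}
    (hw : w ∉ Set.range f) : G.dist a y + H.dist (f y) w ≤ H.dist (f a) w := by
  obtain ⟨p, hp⟩ := hH.exists_walk_length_eq_dist (f a) w
  rw [← hp]
  exact hf.dist_out hG p hw a rfl

theorem Pend.dist_two {G : SimpleGraph V} {H : SimpleGraph W} {y : V} {f g : V → W}
    (hf : Pend G H y f) (hg : Pend G H y g) (hG : G.Connected) (hH : H.Connected)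
    (hd : Disjoint (Set.range f) (Set.range g)) (a : V) :
    2 * G.dist a y ≤ H.dist (f a) (g a) := by
  have h1 := hf.dist_out' hG hH a (w := g a)
    (fun h => Set.disjoint_left.1 hd h ⟨a, rfl⟩)
  have h2 := hg.dist_out' hG hH a (w := f y)
    (fun h => Set.disjoint_left.1 hd ⟨y, rfl⟩ h)
  rw [SimpleGraph.dist_comm (u := g a)] at h2
  omega

end Games

end FOZ

/-! ## Part 2: attaching pendant copies inside an addable class -/

namespace FOZ

section Attach

variable {U J K : Type}

/-- Adjacency for `attachP`. -/
def attachAdj (G : SimpleGraph U) (H : SimpleGraph K) (y : K) (t : J → U) (P : J → Prop) :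
    U ⊕ J × K → U ⊕ J × K → Prop
  | .inl a, .inl b => G.Adj a b
  | .inl a, .inr (j, k) => P j ∧ k = y ∧ a = t j
  | .inr (j, k), .inl a => P j ∧ k = y ∧ a = t j
  | .inr (j, k), .inr (i, l) => j = i ∧ H.Adj k l

/-- `G` together with copies of `H` indexed by `J`; the copies with `P j` are attached
by an edge between the root and `t j`. -/
def attachP (G : SimpleGraph U) (H : SimpleGraph K) (y : K) (t : J → U) (P : J → Prop) :
    SimpleGraph (U ⊕ J × K) where
  Adj := attachAdj G H y t P
  symm := ⟨by
    rintro (a | ⟨j, k⟩) (b | ⟨j', k'⟩) h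
    · exact SimpleGraph.Adj.symm (G := G) h
    · exact h
    · exact h
    · exact ⟨h.1.symm, h.2.symm⟩⟩
  loopless := ⟨by
    rintro (a | ⟨j, k⟩) h
    · exact G.loopless.irrefl _ h
    · exact H.loopless.irrefl _ h.2⟩

/-- All copies attached. -/
def attach (G : SimpleGraph U) (H : SimpleGraph K) (y : K) (t : J → U) :
    SimpleGraph (U ⊕ J × K) := attachP G H y t (fun _ => True)

variable {G : SimpleGraph U} {H : SimpleGraph K} {y : K} {t : J → U}

@[simp] theorem attach_ll {a b : U} : (attach G H y t).Adj (.inl a) (.inl b) ↔ G.Adj a b := Iff.rfl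

@[simp] theorem attach_lr {a : U} {j : J} {k : K} :
    (attach G H y t).Adj (.inl a) (.inr (j, k)) ↔ k = y ∧ a = t j := by
  change (True ∧ _) ↔ _
  simp

@[simp] theorem attach_rl {a : U} {j : J} {k : K} :
    (attach G H y t).Adj (.inr (j, k)) (.inl a) ↔ k = y ∧ a = t j := by
  change (True ∧ _) ↔ _
  simp

@[simp] theorem attach_rr {j j' : J} {k k' : K} :
    (attach G H y t).Adj (.inr (j, k)) (.inr (j', k')) ↔ j = j' ∧ H.Adj k k' := Iff.rfl

/-- A property closed under adjacency propagates in a connected graph. -/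
theorem conn_induct {X : Type} {G : SimpleGraph X} (hG : G.Connected) (P : X → Prop)
    (hP : ∀ a b, G.Adj a b → P a → P b) {a : X} (ha : P a) (b : X) : P b := by
  obtain ⟨p⟩ := hG.preconnected a b
  induction p with
  | nil => exact ha
  | cons h p ih => exact ih (hP _ _ h ha)

theorem reach_induct {X : Type} {G : SimpleGraph X} (P : X → Prop)
    (hP : ∀ a b, G.Adj a b → P a → P b) {a b : X} (hr : G.Reachable a b) (ha : P a) : P b := by
  obtain ⟨p⟩ := hr
  induction p with
  | nil => exact ha
  | cons h p ih => exact ih (hP _ _ h ha)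

theorem attach_connected (hG : G.Connected) (hH : H.Connected) : (attach G H y t).Connected := by
  obtain ⟨a⟩ := hG.nonempty
  have h1 : ∀ b, (attach G H y t).Reachable (.inl a) (.inl b) :=
    conn_induct hG _ (fun b c hbc hb => hb.trans (SimpleGraph.Adj.reachable (attach_ll.2 hbc)))
      (SimpleGraph.Reachable.refl _)
  have h2 : ∀ j k, (attach G H y t).Reachable (.inl a) (.inr (j, k)) := by
    intro j
    refine conn_induct hH _ (a := y) (fun b c hbc hb => hb.trans
      (SimpleGraph.Adj.reachable (attach_rr.2 ⟨rfl, hbc⟩))) ?_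
    exact (h1 (t j)).trans (SimpleGraph.Adj.reachable (attach_lr.2 ⟨rfl, rfl⟩))
  have h3 : ∀ v, (attach G H y t).Reachable (.inl a) v := by
    rintro (b | ⟨j, k⟩)
    · exact h1 b
    · exact h2 j k
  rw [SimpleGraph.connected_iff]
  exact ⟨fun u v => (h3 u).symm.trans (h3 v), ⟨.inl a⟩⟩

/-- Membership from closed connected pieces. -/
theorem mem_of_pieces {C : GraphClassOn} (hIso : ClassIsoInvariant C) (hD : ClassDecomposable C)
    {V : Type} [Finite V] (X : SimpleGraph V)
    (h : ∀ v, ∃ (L : Type) (_ : Finite L) (F : SimpleGraph L) (f : L → V), C L F ∧ F.Connected ∧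
      Function.Injective f ∧ (∀ a b, X.Adj (f a) (f b) ↔ F.Adj a b) ∧
      (∀ a w, X.Adj (f a) w → w ∈ Set.range f) ∧ v ∈ Set.range f) : C V X := by
  rw [hD V X]
  intro c
  induction c using SimpleGraph.ConnectedComponent.ind with
  | h v =>
    obtain ⟨L, _, F, f, hC, hF, hinj, hadj, hcl, ⟨l, rfl⟩⟩ := h v
    have hs : (X.connectedComponentMk (f l)).supp = Set.range f := by
      ext w
      rw [SimpleGraph.ConnectedComponent.mem_supp_iff, SimpleGraph.ConnectedComponent.eq]
      constructor
      · intro hr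
        refine reach_induct (· ∈ Set.range f) ?_ hr.symm ⟨l, rfl⟩
        rintro _ b hb ⟨a, rfl⟩
        exact hcl a b hb
      · rintro ⟨a, rfl⟩
        refine conn_induct hF (fun a => X.Reachable (f a) (f l)) ?_ (SimpleGraph.Reachable.refl _) a
        intro a b hab ha
        exact (SimpleGraph.Adj.reachable ((hadj a b).2 hab)).symm.trans ha
    refine (hIso L _ F _ ⟨⟨(Equiv.ofInjective f hinj).trans (Equiv.setCongr hs.symm), ?_⟩⟩).1 hC
    intro a b
    simp [hadj]

theorem attachP_mem {C : GraphClassOn} (hIso : ClassIsoInvariant C) (hA : ClassAddable C)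
    [Finite U] [Finite J] [Finite K] (hG : C U G) (hGc : G.Connected) (hH : C K H)
    (hHc : H.Connected) (P : Finset J) : C (U ⊕ J × K) (attachP G H y t (· ∈ P)) := by
  classical
  induction P using Finset.induction_on with
  | empty =>
    apply mem_of_pieces hIso hA.1
    rintro (a | ⟨j, k⟩)
    · refine ⟨U, inferInstance, G, Sum.inl, hG, hGc, Sum.inl_injective, fun a b => Iff.rfl, ?_,
        ⟨a, rfl⟩⟩
      rintro a (b | ⟨j, k⟩) h
      · exact ⟨b, rfl⟩
      · exact absurd h.1 (by simp)
    · refine ⟨K, inferInstance, H, fun k => .inr (j, k), hH, hHc, ?_, ?_, ?_, ⟨k, rfl⟩⟩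
      · intro a b hab; simpa using hab
      · intro a b
        change (j = j ∧ _) ↔ _
        simp
      · rintro a (b | ⟨j', k'⟩) h
        · exact absurd h.1 (by simp)
        · obtain ⟨rfl, _⟩ := h
          exact ⟨k', rfl⟩
  | insert j P hj ih =>
    have := hA.2 _ _ (.inl (t j)) (.inr (j, y)) ih ?_
    · convert this using 1
      ext a b
      rw [SimpleGraph.sup_adj, SimpleGraph.fromEdgeSet_adj]
      rcases a with a | ⟨i, k⟩ <;> rcases b with b | ⟨i', k'⟩ <;>
        simp only [attachP, attachAdj, Finset.mem_insert, Set.mem_singleton_iff, Sym2.eq_iff] <;>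
        simp <;> grind
    · intro hr
      have := reach_induct (fun v => ∃ k, v = .inr (j, k)) ?_ hr.symm ⟨y, rfl⟩
      · simp at this
      · rintro _ (b | ⟨j', k'⟩) h ⟨k, rfl⟩
        · exact absurd h.1 hj
        · obtain ⟨rfl, _⟩ := h
          exact ⟨k', rfl⟩

theorem attach_mem {C : GraphClassOn} (hIso : ClassIsoInvariant C) (hA : ClassAddable C)
    [Finite U] [Finite J] [Finite K] (hG : C U G) (hGc : G.Connected) (hH : C K H)
    (hHc : H.Connected) : C (U ⊕ J × K) (attach G H y t) := by
  classical
  have := Fintype.ofFinite J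
  have := attachP_mem (y := y) (t := t) hIso hA hG hGc hH hHc (Finset.univ : Finset J)
  simpa [attach] using this

/-- Transport along an equivalence. -/
def tr {X T : Type} (σ : X ≃ T) (F : SimpleGraph X) : SimpleGraph T := F.comap σ.symm

theorem tr_adj {X T : Type} (σ : X ≃ T) (F : SimpleGraph X) (a b : X) :
    (tr σ F).Adj (σ a) (σ b) ↔ F.Adj a b := by simp [tr]

theorem tr_iso {X T : Type} (σ : X ≃ T) (F : SimpleGraph X) : Nonempty (F ≃g tr σ F) :=
  ⟨⟨σ, by intro a b; exact tr_adj σ F a b⟩⟩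

/-- Connected members of the class. -/
def Mem (C : GraphClassOn) {T : Type} [Finite T] (F : SimpleGraph T) : Prop := C T F ∧ F.Connected

theorem tr_mem {C : GraphClassOn} (hIso : ClassIsoInvariant C) {X T : Type} [Finite X] [Finite T]
    (σ : X ≃ T) {F : SimpleGraph X} (h : Mem C F) : Mem C (tr σ F) := by
  refine ⟨(hIso _ _ _ _ (tr_iso σ F)).1 h.1, ?_⟩
  obtain ⟨e⟩ := tr_iso σ F
  exact e.connected_iff.1 h.2

theorem tr_attach_mem {C : GraphClassOn} (hIso : ClassIsoInvariant C) (hA : ClassAddable C)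
    {T : Type} [Finite T]
    [Finite U] [Finite J] [Finite K] (hG : Mem C G) (hH : Mem C H) (σ : U ⊕ J × K ≃ T) :
    Mem C (tr σ (attach G H y t)) :=
  tr_mem hIso σ ⟨attach_mem hIso hA hG.1 hG.2 hH.1 hH.2, attach_connected hG.2 hH.2⟩

/-- The data of an attachment is determined by the result and the labelling. -/
theorem attach_det {T : Type} {σ : U ⊕ J × K ≃ T} {G' : SimpleGraph U} {H' : SimpleGraph K}
    {y' : K} {t' : J → U} (h : tr σ (attach G H y t) = tr σ (attach G' H' y' t')) :
    G = G' ∧ (Nonempty J → H = H' ∧ y = y') ∧ t = t' := by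
  have key : ∀ a b, (attach G H y t).Adj a b ↔ (attach G' H' y' t').Adj a b := by
    intro a b
    rw [← tr_adj σ, h, tr_adj σ]
  refine ⟨?_, ?_, ?_⟩
  · ext a b
    exact key (.inl a) (.inl b)
  · rintro ⟨j⟩
    constructor
    · ext a b
      simpa using key (.inr (j, a)) (.inr (j, b))
    · have := key (.inl (t j)) (.inr (j, y))
      simp only [attach_lr, true_and] at this
      exact (this.1 trivial).1
  · ext j
    have := key (.inl (t j)) (.inr (j, y))
    simp only [attach_lr, true_and] at this
    exact (this.1 trivial).2

/-- Members of arbitrarily large diameter. -/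
theorem exists_long {C : GraphClassOn} (hIso : ClassIsoInvariant C) (hA : ClassAddable C)
    (h1 : ∃ G : SimpleGraph (Fin 1), Mem C G) (d : ℕ) :
    ∃ (n : ℕ) (G : SimpleGraph (Fin n)) (x y : Fin n), Mem C G ∧ d ≤ G.dist x y := by
  obtain ⟨E, hE⟩ := h1
  induction d with
  | zero => exact ⟨1, E, 0, 0, hE, Nat.zero_le _⟩
  | succ d ih =>
    obtain ⟨n, G, x, y, hG, hd⟩ := ih
    let σ : Fin n ⊕ Fin 1 × Fin 1 ≃ Fin (n + 1) := Fintype.equivOfCardEq (by simp)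
    have hM := tr_attach_mem hIso hA hG hE (y := 0) (t := fun _ => y) σ
    have hP : Pend G (tr σ (attach G E 0 (fun _ : Fin 1 => y))) y (fun a => σ (.inl a)) := by
      refine ⟨fun a b hab => by simpa using hab, fun a b => by rw [tr_adj, attach_ll], ?_⟩
      intro a ha w hw
      obtain ⟨v, rfl⟩ := σ.surjective w
      rw [tr_adj] at hw
      rcases v with v | ⟨j, k⟩
      · exact ⟨v, rfl⟩
      · rw [attach_lr] at hw
        exact absurd hw.2 ha
    have hw : σ (.inr (0, 0)) ∉ Set.range (fun a => σ (.inl a)) := by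
      rintro ⟨a, ha⟩
      simp at ha
    refine ⟨n + 1, _, σ (.inl x), σ (.inr (0, 0)), hM, ?_⟩
    have h2 := hP.dist_out' hG.2 hM.2 x hw
    have h3 := hM.2.pos_dist_of_ne (u := σ (.inl y)) (v := σ (.inr (0, 0))) (by simp)
    omega

end Attach

end FOZ

/-! ## Part 3: counting -/

namespace FOZ

section Apps

open scoped Classical

variable {T : Type} [Fintype T] {h : ℕ}

/-- Appearances: pendant embeddings whose root has small degree. -/
def IsApp (H : SimpleGraph (Fin h)) (y : Fin h) (G : SimpleGraph T) (f : Fin h → T) : Prop :=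
  Pend H G y f ∧ (Finset.univ.filter (fun w => G.Adj (f y) w)).card ≤ h

/-- The set of appearances. -/
noncomputable def apps (H : SimpleGraph (Fin h)) (y : Fin h) (G : SimpleGraph T) :
    Finset (Fin h → T) := Finset.univ.filter (IsApp H y G)

theorem IsApp.deg {H : SimpleGraph (Fin h)} {y : Fin h} {G : SimpleGraph T} {f : Fin h → T}
    (hf : IsApp H y G f) (a : Fin h) :
    (Finset.univ.filter (fun w => G.Adj (f a) w)).card ≤ h := by
  by_cases ha : a = y
  · subst ha; exact hf.2
  · calc _ ≤ (Finset.univ.image f).card := by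
          apply Finset.card_le_card
          intro w hw
          simp only [Finset.mem_filter, Finset.mem_univ, true_and] at hw
          obtain ⟨b, rfl⟩ := hf.1.closed a ha w hw
          simp
      _ ≤ _ := Finset.card_image_le.trans (by simp)

/-- Vertices reachable by short walks through vertices of degree at most `h`. -/
noncomputable def reach (h : ℕ) (G : SimpleGraph T) (w : T) : ℕ → Finset T
  | 0 => {w}
  | i + 1 => reach h G w i ∪ (reach h G w i).biUnion (fun u =>
      if (Finset.univ.filter (fun v => G.Adj u v)).card ≤ h then
        Finset.univ.filter (fun v => G.Adj u v) else ∅)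

theorem reach_card (G : SimpleGraph T) (w : T) (i : ℕ) : (reach h G w i).card ≤ (h + 1) ^ i := by
  induction i with
  | zero => simp [reach]
  | succ i ih =>
    rw [reach]
    refine (Finset.card_union_le _ _).trans ?_
    have : ((reach h G w i).biUnion (fun u =>
      if (Finset.univ.filter (fun v => G.Adj u v)).card ≤ h then
        Finset.univ.filter (fun v => G.Adj u v) else ∅)).card ≤ (reach h G w i).card * h := by
      apply Finset.card_biUnion_le_card_mul
      intro u _
      split_ifs with hu
      · exact hu
      · simp
    calc _ ≤ (reach h G w i).card + (reach h G w i).card * h := by gcongr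
      _ = (reach h G w i).card * (h + 1) := by ring
      _ ≤ (h + 1) ^ i * (h + 1) := by gcongr
      _ = _ := by ring

theorem reach_mono (G : SimpleGraph T) (w : T) {i j : ℕ} (hij : i ≤ j) :
    reach h G w i ⊆ reach h G w j := by
  induction hij with
  | refl => exact Finset.Subset.refl _
  | step _ ih => exact ih.trans (by rw [reach]; exact Finset.subset_union_left)

theorem IsApp.reach_walk {H : SimpleGraph (Fin h)} {y : Fin h} {G : SimpleGraph T}
    {f : Fin h → T} (hf : IsApp H y G f) (w : T) {a b : Fin h} (p : H.Walk a b) :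
    ∀ i, f a ∈ reach h G w i → f b ∈ reach h G w (i + p.length) := by
  induction p with
  | nil => intro i hi; simpa using hi
  | @cons a b c hab p ih =>
    intro i hi
    have : f b ∈ reach h G w (i + 1) := by
      rw [reach, Finset.mem_union, Finset.mem_biUnion]
      right
      refine ⟨f a, hi, ?_⟩
      rw [if_pos (hf.deg a)]
      simpa using (hf.1.adj a b).2 hab
    have := ih (i + 1) this
    rw [SimpleGraph.Walk.length_cons]
    convert this using 2
    ring

/-- The constant bounding the number of appearances through a vertex. -/
def cst (h : ℕ) : ℕ := ((h + 1) ^ h) ^ h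

theorem apps_through {H : SimpleGraph (Fin h)} (hH : H.Connected) (y : Fin h)
    (G : SimpleGraph T) (w : T) :
    ((apps H y G).filter (fun f => w ∈ Set.range f)).card ≤ cst h := by
  calc _ ≤ (Fintype.piFinset (fun _ : Fin h => reach h G w h)).card := by
        apply Finset.card_le_card
        intro f hf
        simp only [apps, Finset.mem_filter, Finset.mem_univ, true_and] at hf
        obtain ⟨hf, u, hu⟩ := hf
        rw [Fintype.mem_piFinset]
        intro a
        obtain ⟨p, hp, -⟩ := hH.exists_path_of_dist u a
        have h1 := hf.reach_walk w p 0 (by simp [reach, hu])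
        refine reach_mono G w ?_ h1
        have := hp.length_lt
        simp at this
        omega
    _ = (reach h G w h).card ^ h := by simp
    _ ≤ _ := by unfold cst; gcongr; exact reach_card G w h

theorem apps_meet {H : SimpleGraph (Fin h)} (hH : H.Connected) (y : Fin h)
    (G : SimpleGraph T) (X : Finset T) :
    ((apps H y G).filter (fun f => ∃ w ∈ X, w ∈ Set.range f)).card ≤ X.card * cst h := by
  calc _ ≤ (X.biUnion (fun w => (apps H y G).filter (fun f => w ∈ Set.range f))).card := by
        apply Finset.card_le_card
        intro f hf
        simp only [Finset.mem_filter, Finset.mem_biUnion] at hf ⊢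
        obtain ⟨hf, w, hw, hx⟩ := hf
        exact ⟨w, hw, hf, hx⟩
    _ ≤ _ := Finset.card_biUnion_le_card_mul _ _ _ (fun w _ => apps_through hH y G w)

theorem exists_disjoint {H : SimpleGraph (Fin h)} (hH : H.Connected) (y : Fin h)
    (G : SimpleGraph T) (N : ℕ) (hN : N * h * cst h < (apps H y G).card) :
    ∃ F : Fin N → (Fin h → T), (∀ i, Pend H G y (F i)) ∧
      ∀ i j, i ≠ j → Disjoint (Set.range (F i)) (Set.range (F j)) := by
  induction N with
  | zero => exact ⟨fun i => i.elim0, fun i => i.elim0, fun i => i.elim0⟩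
  | succ N ih =>
    have hle : N * h * cst h ≤ (N + 1) * h * cst h := by gcongr; omega
    obtain ⟨F, hF, hd⟩ := ih (lt_of_le_of_lt hle hN)
    let X : Finset T := Finset.univ.biUnion (fun i => Finset.univ.image (F i))
    have hX : X.card ≤ N * h := by
      have := Finset.card_biUnion_le_card_mul (Finset.univ : Finset (Fin N))
        (fun i => Finset.univ.image (F i)) h
        (fun i _ => Finset.card_image_le.trans (by simp))
      simpa using this
    have h1 := apps_meet hH y G X
    have h2 : ((apps H y G).filter (fun f => ∃ w ∈ X, w ∈ Set.range f)).card
        < (apps H y G).card := by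
      refine lt_of_le_of_lt (h1.trans ?_) (lt_of_le_of_lt hle hN)
      gcongr
    obtain ⟨f, hf, hn⟩ : ∃ f ∈ apps H y G, ¬ ∃ w ∈ X, w ∈ Set.range f := by
      by_contra! hcon
      rw [Finset.filter_true_of_mem hcon] at h2
      exact lt_irrefl _ h2
    have hdf : ∀ i, Disjoint (Set.range (F i)) (Set.range f) := by
      intro i
      rw [Set.disjoint_left]
      rintro _ ⟨a, rfl⟩ hw
      exact hn ⟨F i a, by simp only [X, Finset.mem_biUnion]; exact ⟨i, by simp, by simp⟩, hw⟩
    refine ⟨Fin.snoc F f, ?_, ?_⟩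
    · intro i
      induction i using Fin.lastCases with
      | last =>
        simp only [Fin.snoc_last]
        simp only [apps, Finset.mem_filter, Finset.mem_univ, true_and] at hf
        exact hf.1
      | cast i => simpa using hF i
    · intro i j hij
      induction i using Fin.lastCases with
      | last =>
        induction j using Fin.lastCases with
        | last => exact absurd rfl hij
        | cast j => simpa using (hdf j).symm
      | cast i =>
        induction j using Fin.lastCases with
        | last => simpa using hdf i
        | cast j => simpa using hd i j (by rintro rfl; exact hij rfl)

/-- Attached copies are appearances. -/
theorem attach_isApp {U J : Type} {G : SimpleGraph U} {H : SimpleGraph (Fin h)} {y : Fin h}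
    {t : J → U} (σ : U ⊕ J × Fin h ≃ T) (j : J) :
    IsApp H y (tr σ (attach G H y t)) (fun k => σ (.inr (j, k))) := by
  refine ⟨⟨fun a b hab => by simpa using hab, fun a b => by rw [tr_adj]; simp, ?_⟩, ?_⟩
  · intro a ha w hw
    obtain ⟨v, rfl⟩ := σ.surjective w
    rw [tr_adj] at hw
    rcases v with v | ⟨j', k⟩
    · rw [attach_rl] at hw
      exact absurd hw.1 ha
    · rw [attach_rr] at hw
      obtain ⟨rfl, _⟩ := hw
      exact ⟨k, rfl⟩
  · calc _ ≤ ((Finset.univ : Finset (Fin h)).image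
          (fun k => if k = y then σ (.inl (t j)) else σ (.inr (j, k)))).card := by
          apply Finset.card_le_card
          intro w hw
          obtain ⟨v, rfl⟩ := σ.surjective w
          simp only [Finset.mem_filter, Finset.mem_univ, true_and] at hw
          rw [tr_adj] at hw
          simp only [Finset.mem_image, Finset.mem_univ, true_and]
          rcases v with v | ⟨j', k⟩
          · rw [attach_rl] at hw
            exact ⟨y, by simp [hw.2]⟩
          · rw [attach_rr] at hw
            obtain ⟨rfl, hk⟩ := hw
            exact ⟨k, by rw [if_neg hk.ne.symm]⟩
      _ ≤ h := Finset.card_image_le.trans (by simp)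

theorem attach_apps_card {U J : Type} [Fintype U] [Fintype J] {G : SimpleGraph U}
    {H : SimpleGraph (Fin h)} (hH : H.Connected)
    {y : Fin h} {t : J → U} (σ : U ⊕ J × Fin h ≃ T) :
    (apps H y (tr σ (attach G H y t))).card ≤
      (apps H y G).card + Fintype.card J * h * cst h := by
  let X : Finset T := Finset.univ.image (fun p : J × Fin h => σ (.inr p))
  have hX : X.card ≤ Fintype.card J * h := Finset.card_image_le.trans (by simp)
  have hsub : apps H y (tr σ (attach G H y t)) ⊆
      (apps H y G).image (fun g k => σ (.inl (g k))) ∪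
      (apps H y (tr σ (attach G H y t))).filter (fun f => ∃ w ∈ X, w ∈ Set.range f) := by
    intro f hf
    rw [Finset.mem_union, Finset.mem_filter]
    by_cases hx : ∃ w ∈ X, w ∈ Set.range f
    · exact Or.inr ⟨hf, hx⟩
    left
    have hl : ∀ k, ∃ u, f k = σ (.inl u) := by
      intro k
      obtain ⟨v, hv⟩ := σ.surjective (f k)
      rcases v with v | p
      · exact ⟨v, hv.symm⟩
      · exact absurd ⟨f k, by simp only [X, Finset.mem_image]; exact ⟨p, by simp, hv⟩, k, rfl⟩ hx
    choose g hg using hl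
    obtain rfl : f = fun k => σ (.inl (g k)) := funext hg
    refine Finset.mem_image.2 ⟨g, ?_, rfl⟩
    simp only [apps, Finset.mem_filter, Finset.mem_univ, true_and] at hf ⊢
    obtain ⟨⟨h1, h2, h3⟩, h4⟩ := hf
    refine ⟨⟨?_, ?_, ?_⟩, ?_⟩
    · intro a b hab
      exact h1 (by simp [hab])
    · intro a b
      rw [← h2, tr_adj, attach_ll]
    · intro a ha w hw
      obtain ⟨k, hk⟩ := h3 a ha (σ (.inl w)) (by rw [tr_adj]; exact hw)
      exact ⟨k, by simpa using hk⟩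
    · refine le_trans ?_ h4
      apply Finset.card_le_card_of_injOn (fun w => σ (.inl w))
      · intro w hw
        simp only [Finset.coe_filter, Finset.mem_univ, true_and, Set.mem_ofPred_eq] at hw ⊢
        rw [tr_adj]; exact hw
      · intro a _ b _ hab
        simpa using hab
  refine (Finset.card_le_card hsub).trans ((Finset.card_union_le _ _).trans ?_)
  gcongr
  · exact Finset.card_image_le
  · exact (apps_meet hH y _ X).trans (by gcongr)

/-- Number of labellings with prescribed values on the right part. -/
theorem card_equiv_fix {β : Type} [Fintype β] (n : ℕ) (g : β → T) :
    (Finset.univ.filter (fun σ : Fin n ⊕ β ≃ T => ∀ b, σ (.inr b) = g b)).card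
      ≤ n.factorial := by
  by_cases hne : ∃ σ : Fin n ⊕ β ≃ T, ∀ b, σ (.inr b) = g b
  swap
  · push Not at hne
    rw [Finset.filter_false_of_mem]
    · simp
    · intro σ _ hσ
      obtain ⟨b, hb⟩ := hne σ
      exact hb (hσ b)
  obtain ⟨σ₀, h₀⟩ := hne
  rw [← Fintype.card_subtype]
  have hc : Fintype.card {x // x ∉ Set.range g} = n := by
    have e : Fin n ≃ {x // x ∉ Set.range g} := by
      refine Equiv.ofBijective (fun i => ⟨σ₀ (.inl i), ?_⟩) ⟨?_, ?_⟩
      · rintro ⟨b, hb⟩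
        rw [← h₀] at hb
        simp at hb
      · intro i j hij
        simpa using hij
      · rintro ⟨x, hx⟩
        obtain ⟨v, rfl⟩ := σ₀.surjective x
        rcases v with v | b
        · exact ⟨v, rfl⟩
        · exact absurd ⟨b, (h₀ b).symm⟩ hx
    rw [← Fintype.card_congr e]; simp
  calc _ ≤ Fintype.card (Fin n ↪ {x // x ∉ Set.range g}) := by
        refine Fintype.card_le_of_injective (fun σ => ⟨fun i => ⟨σ.1 (.inl i), ?_⟩, ?_⟩) ?_
        · rintro ⟨b, hb⟩
          rw [← σ.2] at hb
          simp at hb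
        · intro i j hij
          simpa using hij
        · intro σ τ hστ
          ext v
          rcases v with v | b
          · have := congrArg (fun e => (e v).1) hστ
            exact this
          · rw [σ.2, τ.2]
    _ = _ := by
      rw [Fintype.card_embedding_eq, hc, Fintype.card_fin, Nat.descFactorial_self]

end Apps

section Count

open scoped Classical

/-- Connected members on `Fin n`. -/
noncomputable def mems (C : GraphClassOn) (n : ℕ) : Finset (SimpleGraph (Fin n)) :=
  Finset.univ.filter (fun G => Mem C G)

theorem mem_mems {C : GraphClassOn} {n : ℕ} {G : SimpleGraph (Fin n)} :
    G ∈ mems C n ↔ Mem C G := by simp [mems]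

/-- The members with few appearances. -/
noncomputable def bad (C : GraphClassOn) {h : ℕ} (H : SimpleGraph (Fin h)) (y : Fin h) (L n : ℕ) :
    Finset (SimpleGraph (Fin n)) :=
  (mems C n).filter (fun G => (apps H y G).card ≤ L)

theorem pendant_count {C : GraphClassOn} (hIso : ClassIsoInvariant C) (hA : ClassAddable C)
    {h : ℕ} {H : SimpleGraph (Fin h)} (hH : Mem C H) (y : Fin h) (L n m : ℕ) :
    (bad C H y L n).card * ((n + m * h).factorial * n ^ m) ≤
      n.factorial * (L + m * h * cst h) ^ m * (mems C (n + m * h)).card := by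
  let I : Finset (SimpleGraph (Fin n) × (Fin n ⊕ Fin m × Fin h ≃ Fin (n + m * h)) ×
    (Fin m → Fin n)) := bad C H y L n ×ˢ (Finset.univ ×ˢ Finset.univ)
  have hI : I.card = (bad C H y L n).card * ((n + m * h).factorial * n ^ m) := by
    simp only [I, Finset.card_product, Finset.card_univ]
    congr 2
    · rw [Fintype.card_equiv (Fintype.equivOfCardEq (by simp))]
      simp
    · simp
  rw [← hI]
  refine Finset.card_le_mul_card_image_of_maps_to
    (f := fun p => tr p.2.1 (attach p.1 H y p.2.2)) ?_ _ ?_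
  · rintro ⟨G, σ, t⟩ hp
    simp only [I, bad, Finset.mem_product, Finset.mem_filter, mem_mems] at hp
    rw [mem_mems]
    exact tr_attach_mem hIso hA hp.1.1 hH σ
  · intro R _
    rcases Finset.eq_empty_or_nonempty (I.filter (fun p => tr p.2.1 (attach p.1 H y p.2.2) = R))
      with he | ⟨⟨G₀, σ₀, t₀⟩, h₀⟩
    · rw [he]; simp
    have hR : (apps H y R).card ≤ L + m * h * cst h := by
      simp only [I, bad, Finset.mem_product, Finset.mem_filter] at h₀
      rw [← h₀.2]
      refine (attach_apps_card hH.2 σ₀).trans ?_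
      have := h₀.1.1.2
      simp only [Fintype.card_fin]
      omega
    let S : Finset (Fin n ⊕ Fin m × Fin h ≃ Fin (n + m * h)) :=
      Finset.univ.filter (fun σ => ∀ j, (fun k => σ (.inr (j, k))) ∈ apps H y R)
    calc _ ≤ S.card := by
          apply Finset.card_le_card_of_injOn (fun p => p.2.1)
          · rintro ⟨G, σ, t⟩ hp
            simp only [Finset.coe_filter, Set.mem_ofPred_eq] at hp
            simp only [S, Finset.coe_filter, Set.mem_ofPred_eq, Finset.mem_univ, true_and]
            intro j
            rw [← hp.2]
            simp only [apps, Finset.mem_filter, Finset.mem_univ, true_and]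
            exact attach_isApp σ j
          · rintro ⟨G, σ, t⟩ hp ⟨G', σ', t'⟩ hp' (rfl : σ = σ')
            simp only [Finset.coe_filter, Set.mem_ofPred_eq] at hp hp'
            obtain ⟨rfl, -, rfl⟩ := attach_det (hp.2.trans hp'.2.symm)
            rfl
      _ ≤ n.factorial * (Fintype.piFinset (fun _ : Fin m => apps H y R)).card := by
          refine Finset.card_le_mul_card_image_of_maps_to
            (f := fun σ j k => σ (.inr (j, k))) ?_ _ ?_
          · intro σ hσ
            simp only [S, Finset.mem_filter, Finset.mem_univ, true_and] at hσ
            exact Fintype.mem_piFinset.2 hσ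
          · intro g _
            refine le_trans (Finset.card_le_card ?_)
              (card_equiv_fix n (fun p : Fin m × Fin h => g p.1 p.2))
            intro σ hσ
            simp only [Finset.mem_filter, Finset.mem_univ, true_and] at hσ ⊢
            rintro ⟨j, k⟩
            rw [← hσ.2]
      _ ≤ _ := by
          rw [Fintype.card_piFinset_const]
          gcongr

end Count

end FOZ

/-! ## Part 4: supermultiplicativity -/

namespace FOZ

section Super

open scoped Classical

/-- Number of labellings with a prescribed image of the left part. -/
theorem card_equiv_image {α β T : Type} [Fintype α] [Fintype β] [Fintype T] (W : Set T) :
    (Finset.univ.filter (fun σ : α ⊕ β ≃ T => Set.range (fun a => σ (.inl a)) = W)).card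
      ≤ (Fintype.card α).factorial * (Fintype.card β).factorial := by
  by_cases hne : ∃ σ : α ⊕ β ≃ T, Set.range (fun a => σ (.inl a)) = W
  swap
  · rw [Finset.filter_false_of_mem]
    · simp
    · intro σ _ hσ
      exact hne ⟨σ, hσ⟩
  obtain ⟨σ₀, h₀⟩ := hne
  have hl : ∀ σ : α ⊕ β ≃ T, Set.range (fun a => σ (.inl a)) = W → ∀ a, σ (.inl a) ∈ W := by
    rintro σ rfl a
    exact ⟨a, rfl⟩
  have hr : ∀ σ : α ⊕ β ≃ T, Set.range (fun a => σ (.inl a)) = W → ∀ b, σ (.inr b) ∉ W := by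
    rintro σ rfl b ⟨a, ha⟩
    simp at ha
  rw [← Fintype.card_subtype]
  have hc : Fintype.card {x // x ∈ W} = Fintype.card α := by
    symm
    refine Fintype.card_congr (Equiv.ofBijective (fun i => ⟨σ₀ (.inl i), hl σ₀ h₀ i⟩) ⟨?_, ?_⟩)
    · intro i j hij
      simpa using hij
    · rintro ⟨x, hx⟩
      rw [← h₀] at hx
      obtain ⟨a, rfl⟩ := hx
      exact ⟨a, rfl⟩
  have hc' : Fintype.card {x // x ∉ W} = Fintype.card β := by
    symm
    refine Fintype.card_congr (Equiv.ofBijective (fun i => ⟨σ₀ (.inr i), hr σ₀ h₀ i⟩) ⟨?_, ?_⟩)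
    · intro i j hij
      simpa using hij
    · rintro ⟨x, hx⟩
      obtain ⟨v, rfl⟩ := σ₀.surjective x
      rcases v with v | b
      · exact absurd (hl σ₀ h₀ v) hx
      · exact ⟨b, rfl⟩
  calc _ ≤ Fintype.card ((α ↪ {x // x ∈ W}) × (β ↪ {x // x ∉ W})) := by
        refine Fintype.card_le_of_injective
          (fun σ => (⟨fun i => ⟨σ.1 (.inl i), hl σ.1 σ.2 i⟩, ?_⟩,
            ⟨fun i => ⟨σ.1 (.inr i), hr σ.1 σ.2 i⟩, ?_⟩)) ?_
        · intro i j hij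
          simpa using hij
        · intro i j hij
          simpa using hij
        · intro σ τ hστ
          ext v
          rcases v with v | b
          · have := congrArg (fun e => (e.1 v).1) hστ
            exact this
          · have := congrArg (fun e => (e.2 b).1) hστ
            exact this
    _ = _ := by
      rw [Fintype.card_prod, Fintype.card_embedding_eq, Fintype.card_embedding_eq, hc, hc',
        Nat.descFactorial_self, Nat.descFactorial_self]

/-- The smaller side of a bridge is determined by its endpoint in it. -/
theorem bridge_side {U K T : Type} [Finite U] [Finite K] [Finite T]
    {G G' : SimpleGraph U} {H H' : SimpleGraph K}
    (hG : G.Connected) (hH : H.Connected) {y y' : K} {t t' : Fin 1 → U}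
    (hcard : Nat.card U ≤ Nat.card K)
    {σ σ' : U ⊕ Fin 1 × K ≃ T} (he : tr σ (attach G H y t) = tr σ' (attach G' H' y' t'))
    (hv : σ (.inl (t 0)) = σ' (.inl (t' 0))) :
    Set.range (fun a => σ (.inl a)) = Set.range (fun a => σ' (.inl a)) := by
  set X := tr σ (attach G H y t) with hX
  set W' := Set.range (fun a => σ' (.inl a)) with hW'
  have hvW : σ (.inl (t 0)) ∈ W' := by rw [hv]; exact ⟨_, rfl⟩
  have hout' : ∀ a b, X.Adj a b → a ∈ W' → b ∉ W' →
      a = σ (.inl (t 0)) ∧ b = σ' (.inr (0, y')) := by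
    rintro _ b hab ⟨a, rfl⟩ hb
    obtain ⟨w, rfl⟩ := σ'.surjective b
    rcases w with w | ⟨j, k⟩
    · exact absurd ⟨w, rfl⟩ hb
    · rw [he, tr_adj, attach_lr] at hab
      obtain ⟨rfl, rfl⟩ := hab
      obtain rfl := Subsingleton.elim j 0
      exact ⟨hv.symm, rfl⟩
  have hedge : X.Adj (σ (.inl (t 0))) (σ (.inr (0, y))) := by
    rw [hX, tr_adj, attach_lr]; exact ⟨rfl, rfl⟩
  by_cases hw : σ (.inr (0, y)) ∈ W'
  · exfalso
    have hsub : ∀ k, σ (.inr (0, k)) ∈ W' := by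
      refine conn_induct hH _ ?_ hw
      intro a b hab ha
      by_contra hb
      have := (hout' (σ (.inr (0, a))) (σ (.inr (0, b)))
        (by rw [hX, tr_adj, attach_rr]; exact ⟨rfl, hab⟩) ha hb).1
      simp at this
    have h1 : (insert (σ (.inl (t 0))) (Set.range fun k => σ (.inr (0, k)))).ncard
        ≤ W'.ncard := by
      refine Set.ncard_le_ncard ?_ (Set.toFinite _)
      rintro _ (rfl | ⟨k, rfl⟩)
      · exact hvW
      · exact hsub k
    rw [Set.ncard_insert_of_notMem (by rintro ⟨k, hk⟩; simp at hk) (Set.toFinite _),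
      Set.ncard_range_of_injective (by intro a b hab; simpa using hab), hW',
      Set.ncard_range_of_injective (by intro a b hab; simpa using hab)] at h1
    omega
  · have hw' : σ (.inr (0, y)) = σ' (.inr (0, y')) := (hout' _ _ hedge hvW hw).2
    have hsub : ∀ a, σ (.inl a) ∈ W' := by
      refine conn_induct hG _ ?_ hvW
      intro a b hab ha
      by_contra hb
      have := (hout' (σ (.inl a)) (σ (.inl b)) (by rw [hX, tr_adj, attach_ll]; exact hab) ha hb).2
      rw [← hw'] at this
      simp at this
    refine Set.eq_of_subset_of_ncard_le ?_ ?_ (Set.toFinite _)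
    · rintro _ ⟨a, rfl⟩; exact hsub a
    · rw [hW', Set.ncard_range_of_injective (by intro a b hab; simpa using hab),
        Set.ncard_range_of_injective (by intro a b hab; simpa using hab)]

theorem super_count_aux {C : GraphClassOn} (hIso : ClassIsoInvariant C) (hA : ClassAddable C)
    (m n : ℕ) (hmn : m ≤ n) :
    (mems C m).card * (mems C n).card * ((m + n).factorial * (m * n)) ≤
      m.factorial * n.factorial * ((mems C (m + n)).card * (m + n)) := by
  let I : Finset ((SimpleGraph (Fin m) × SimpleGraph (Fin n)) ×
    (Fin m ⊕ Fin 1 × Fin n ≃ Fin (m + n)) × (Fin m × Fin n)) :=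
      (mems C m ×ˢ mems C n) ×ˢ (Finset.univ ×ˢ Finset.univ)
  have hI : I.card = (mems C m).card * (mems C n).card * ((m + n).factorial * (m * n)) := by
    simp only [I, Finset.card_product, Finset.card_univ]
    congr 2
    · rw [Fintype.card_equiv (Fintype.equivOfCardEq (by simp))]
      simp
    · simp
  have hO : (mems C (m + n)).card * (m + n) =
      (mems C (m + n) ×ˢ (Finset.univ : Finset (Fin (m + n)))).card := by simp
  rw [← hI, hO]
  refine Finset.card_le_mul_card_image_of_maps_to
    (f := fun p => (tr p.2.1 (attach p.1.1 p.1.2 p.2.2.2 (fun _ => p.2.2.1)),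
      p.2.1 (.inl p.2.2.1))) ?_ _ ?_
  · rintro ⟨⟨G, H⟩, σ, s, t⟩ hp
    simp only [I, Finset.mem_product, mem_mems] at hp
    simp only [Finset.mem_product, mem_mems, Finset.mem_univ, and_true]
    exact tr_attach_mem hIso hA hp.1.1 hp.1.2 σ
  · rintro ⟨R, v⟩ _
    set Fb := I.filter (fun p => (tr p.2.1 (attach p.1.1 p.1.2 p.2.2.2 (fun _ => p.2.2.1)),
      p.2.1 (.inl p.2.2.1)) = (R, v)) with hFb
    rcases Finset.eq_empty_or_nonempty Fb with he | ⟨⟨⟨G₀, H₀⟩, σ₀, s₀, t₀⟩, h₀⟩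
    · rw [he]; simp
    have hmem : ∀ G H σ s t, (((G, H), σ, s, t) : (SimpleGraph (Fin m) × SimpleGraph (Fin n)) ×
      (Fin m ⊕ Fin 1 × Fin n ≃ Fin (m + n)) × (Fin m × Fin n)) ∈ Fb →
        Mem C G ∧ Mem C H ∧ tr σ (attach G H t (fun _ => s)) = R ∧ σ (.inl s) = v := by
      intro G H σ s t hp
      simp only [hFb, I, Finset.mem_filter, Finset.mem_product, mem_mems, Prod.mk.injEq] at hp
      exact ⟨hp.1.1.1, hp.1.1.2, hp.2.1, hp.2.2⟩
    obtain ⟨hG₀, hH₀, hR₀, hv₀⟩ := hmem _ _ _ _ _ h₀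
    have hle := card_equiv_image (α := Fin m) (β := Fin 1 × Fin n)
      (Set.range (fun a => σ₀ (.inl a)))
    simp only [Fintype.card_fin, Fintype.card_prod, one_mul] at hle
    refine le_trans ?_ hle
    apply Finset.card_le_card_of_injOn (fun p => p.2.1)
    · rintro ⟨⟨G, H⟩, σ, s, t⟩ hp
      obtain ⟨hG, hH, hR, hv⟩ := hmem _ _ _ _ _ hp
      simp only [Finset.coe_filter, Set.mem_ofPred_eq, Finset.mem_univ, true_and]
      exact bridge_side hG.2 hH.2 (by simpa using hmn) (hR.trans hR₀.symm) (hv.trans hv₀.symm)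
    · rintro ⟨⟨G, H⟩, σ, s, t⟩ hp ⟨⟨G', H'⟩, σ', s', t'⟩ hp' (rfl : σ = σ')
      obtain ⟨hG, hH, hR, hv⟩ := hmem _ _ _ _ _ hp
      obtain ⟨hG', hH', hR', hv'⟩ := hmem _ _ _ _ _ hp'
      obtain ⟨rfl, h1, h2⟩ := attach_det (hR.trans hR'.symm)
      obtain ⟨rfl, rfl⟩ := h1 ⟨0⟩
      obtain rfl : s = s' := congrFun h2 0
      rfl

theorem super_count {C : GraphClassOn} (hIso : ClassIsoInvariant C) (hA : ClassAddable C)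
    (m n : ℕ) :
    (mems C m).card * (mems C n).card * ((m + n).factorial * (m * n)) ≤
      m.factorial * n.factorial * ((mems C (m + n)).card * (m + n)) := by
  rcases le_total m n with h | h
  · exact super_count_aux hIso hA m n h
  · have := super_count_aux hIso hA n m h
    rw [add_comm n m, mul_comm n m, mul_comm (mems C n).card, mul_comm n.factorial] at this
    exact this

end Super

end FOZ

/-! ## Part 5: growth constant and asymptotics -/

namespace FOZ

section Growth

open scoped Classical

theorem mems_card_le (C : GraphClassOn) (n : ℕ) : (mems C n).card ≤ classCount C n := by
  unfold classCount
  rw [Nat.card_eq_fintype_card, Fintype.card_subtype]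
  apply Finset.card_le_card
  intro G hG
  rw [mem_mems] at hG
  simpa using hG.1

theorem growth {C : GraphClassOn} (hIso : ClassIsoInvariant C) (hA : ClassAddable C)
    (hS : ClassSmall C) (hne : ∀ n, 1 ≤ n → 0 < (mems C n).card) :
    ∃ (L : ℝ) (u : ℕ → ℝ),
      (∀ n : ℕ, 1 ≤ n → (n : ℝ) * (mems C n).card / n.factorial = Real.exp (-u n)) ∧
      (∀ n : ℕ, 1 ≤ n → L * n ≤ u n) ∧ Tendsto (fun n : ℕ => u n / n) atTop (𝓝 L) := by
  let g : ℕ → ℝ := fun n => (n : ℝ) * (mems C n).card / n.factorial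
  let u : ℕ → ℝ := fun n => if n = 0 then 0 else -Real.log (g n)
  have hg : ∀ n, 1 ≤ n → 0 < g n := by
    intro n hn
    have h1 : (0 : ℝ) < (mems C n).card := by exact_mod_cast hne n hn
    have h2 : (0 : ℝ) < n := by exact_mod_cast hn
    have h3 : (0 : ℝ) < n.factorial := by exact_mod_cast n.factorial_pos
    positivity
  have hsup : ∀ m n, 1 ≤ m → 1 ≤ n → g m * g n ≤ g (m + n) := by
    intro m n hm hn
    have h := super_count hIso hA m n
    have h' : ((mems C m).card : ℝ) * (mems C n).card * ((m + n).factorial * (m * n)) ≤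
      m.factorial * n.factorial * ((mems C (m + n)).card * (m + n)) := by exact_mod_cast h
    have h1 : (0 : ℝ) < m.factorial := by exact_mod_cast m.factorial_pos
    have h2 : (0 : ℝ) < n.factorial := by exact_mod_cast n.factorial_pos
    have h3 : (0 : ℝ) < (m + n).factorial := by exact_mod_cast (m + n).factorial_pos
    simp only [g]
    rw [div_mul_div_comm, div_le_div_iff₀ (by positivity) h3]
    push_cast
    linarith
  have hsub : Subadditive u := by
    intro m n
    by_cases hm : m = 0
    · subst hm; simp [u]
    by_cases hn : n = 0
    · subst hn; simp [u]
    have hmn : m + n ≠ 0 := by omega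
    simp only [u, hm, hn, hmn, if_false]
    have h1 := hg m (by omega)
    have h2 := hg n (by omega)
    have h3 := Real.log_le_log (by positivity) (hsup m n (by omega) (by omega))
    rw [Real.log_mul h1.ne' h2.ne'] at h3
    linarith
  have hbdd : BddBelow (Set.range fun n : ℕ => u n / n) := by
    obtain ⟨d, hd⟩ := hS
    set D : ℝ := max d 1 with hD
    have hD1 : 1 ≤ D := le_max_right _ _
    have hlog : 0 ≤ Real.log (2 * D) := Real.log_nonneg (by linarith)
    refine ⟨-Real.log (2 * D), ?_⟩
    rintro _ ⟨n, rfl⟩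
    by_cases hn : n = 0
    · subst hn; simp [u, hlog]
    have hn0 : (0 : ℝ) < n := by exact_mod_cast Nat.pos_of_ne_zero hn
    simp only [u, hn, if_false]
    rw [le_div_iff₀ hn0]
    have h3 : (0 : ℝ) < n.factorial := by exact_mod_cast n.factorial_pos
    have hle : g n ≤ (2 * D) ^ n := by
      simp only [g]
      rw [div_le_iff₀ h3, mul_pow]
      have h4 : ((mems C n).card : ℝ) ≤ D ^ n * n.factorial := by
        have h5 : ((mems C n).card : ℝ) ≤ classCount C n := by exact_mod_cast mems_card_le C n
        have hd0 : 0 ≤ d := by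
          by_contra hd0
          have h1 := hd 1
          have h6 : (0 : ℝ) < (mems C 1).card := by exact_mod_cast hne 1 le_rfl
          have h7 : ((mems C 1).card : ℝ) ≤ classCount C 1 := by exact_mod_cast mems_card_le C 1
          simp only [pow_one, Nat.factorial_one, Nat.cast_one, mul_one] at h1
          linarith
        have hdD : d ^ n ≤ D ^ n := pow_le_pow_left₀ hd0 (le_max_left _ _) n
        exact h5.trans ((hd n).trans (mul_le_mul_of_nonneg_right hdD h3.le))
      have h5 : (n : ℝ) ≤ 2 ^ n := by exact_mod_cast (Nat.lt_two_pow_self).le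
      calc (n : ℝ) * (mems C n).card ≤ 2 ^ n * (D ^ n * n.factorial) := by gcongr
        _ = _ := by ring
    have := Real.log_le_log (hg n (by omega)) hle
    rw [Real.log_pow] at this
    linarith
  refine ⟨hsub.lim, u, ?_, ?_, hsub.tendsto_lim hbdd⟩
  · intro n hn
    have hn' : n ≠ 0 := by omega
    simp only [u, hn', if_false, neg_neg]
    rw [Real.exp_log (hg n hn)]
  · intro n hn
    have := hsub.lim_le_div hbdd (n := n) (by omega)
    have hn0 : (0 : ℝ) < n := by exact_mod_cast hn
    rwa [le_div_iff₀ hn0] at this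

theorem real_bound {B M MN Fn FN n N c L h s un uN k : ℝ} (m : ℕ)
    (hB : B * (FN * n ^ m) ≤ Fn * k ^ m * MN) (hk0 : 0 ≤ k) (hkc : k ≤ c * m)
    (hn0 : 0 < n) (hs0 : 0 < s) (hc0 : 0 ≤ c) (hNn : n ≤ N) (hN : N = n + m * h)
    (a1 : 0 < M) (a2 : 0 < Fn) (a3 : 0 < FN)
    (en : M = Real.exp (-un) * Fn / n) (eN : MN = Real.exp (-uN) * FN / N)
    (hs2 : c * Real.exp (-(L * h)) * Real.exp 1 ≤ s)
    (hms : (m : ℝ) * s ≤ n) (hms' : n ≤ (m + 1) * s)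
    (h1 : L * N ≤ uN) (h2 : un ≤ (L + 1 / (2 * s)) * n) :
    B / M ≤ Real.exp (1 - n / (2 * s)) := by
  have hNpos : 0 < N := by linarith
  have hm0 : (0 : ℝ) ≤ m := Nat.cast_nonneg m
  have step1 : B / M ≤ Real.exp (un - uN) * (c * m / n) ^ m := by
    rw [div_le_iff₀ a1, en]
    have hb : B ≤ Fn * (c * m) ^ m * (Real.exp (-uN) / n) / n ^ m := by
      rw [le_div_iff₀ (by positivity)]
      have h1 : B * n ^ m * FN ≤ Fn * (c * m) ^ m * (Real.exp (-uN) / n) * FN := by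
        calc _ = B * (FN * n ^ m) := by ring
          _ ≤ Fn * k ^ m * MN := hB
          _ = Fn * k ^ m * (Real.exp (-uN) / N) * FN := by rw [eN]; ring
          _ ≤ _ := by gcongr
      exact le_of_mul_le_mul_right h1 a3
    refine hb.trans (le_of_eq ?_)
    have h3 : Real.exp (un - uN) = Real.exp (-uN) * Real.exp un := by
      rw [← Real.exp_add]; ring_nf
    have h4 : Real.exp un * Real.exp (-un) = 1 := by rw [← Real.exp_add]; simp
    rw [h3, div_pow]
    calc _ = Real.exp (-uN) * 1 * ((c * m) ^ m / n ^ m) * (Fn / n) := by ring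
      _ = Real.exp (-uN) * (Real.exp un * Real.exp (-un)) * ((c * m) ^ m / n ^ m) *
            (Fn / n) := by rw [h4]
      _ = _ := by ring
  have step2 : (c * m / n) ^ m ≤ Real.exp (L * h * m - m) := by
    have h1 : c * m / n ≤ c / s := by
      rw [div_le_div_iff₀ hn0 hs0]
      calc c * m * s = c * (m * s) := by ring
        _ ≤ c * n := by gcongr
    have h2 : c / s ≤ Real.exp (L * h - 1) := by
      rw [div_le_iff₀ hs0]
      have h3 : Real.exp (L * h - 1) * (Real.exp (-(L * h)) * Real.exp 1) = 1 := by
        rw [← Real.exp_add, ← Real.exp_add]; simp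
      calc c = Real.exp (L * h - 1) * (c * Real.exp (-(L * h)) * Real.exp 1) := by
            linear_combination (-c) * h3
        _ ≤ _ := by gcongr
    have h0 : 0 ≤ c * m / n := by positivity
    calc (c * m / n) ^ m ≤ (Real.exp (L * h - 1)) ^ m := pow_le_pow_left₀ h0 (h1.trans h2) m
      _ = _ := by rw [← Real.exp_nat_mul]; ring_nf
  calc B / M ≤ Real.exp (un - uN) * (c * m / n) ^ m := step1
    _ ≤ Real.exp (un - uN) * Real.exp (L * h * m - m) := by gcongr
    _ = Real.exp (un - uN + (L * h * m - m)) := by rw [← Real.exp_add]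
    _ ≤ _ := by
      apply Real.exp_le_exp.2
      rw [hN] at h1
      have h4 : n / s ≤ m + 1 := by rw [div_le_iff₀ hs0]; exact hms'
      have h5 : n / s = 2 * (n / (2 * s)) := by field_simp
      have h6 : (L + 1 / (2 * s)) * n = L * n + n / (2 * s) := by ring
      have h7 : L * (n + m * h) = L * n + L * h * m := by ring
      rw [h6] at h2
      rw [h7] at h1
      linarith

theorem bad_tendsto {C : GraphClassOn} (hIso : ClassIsoInvariant C) (hA : ClassAddable C)
    (hS : ClassSmall C) (hne : ∀ n, 1 ≤ n → 0 < (mems C n).card)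
    {h : ℕ} {H : SimpleGraph (Fin h)} (hH : Mem C H) (y : Fin h) (K : ℕ) :
    Tendsto (fun n : ℕ => ((bad C H y K n).card : ℝ) / (mems C n).card) atTop (𝓝 0) := by
  obtain ⟨L, u, hu, hL, hlim⟩ := growth hIso hA hS hne
  obtain ⟨c, hc⟩ : ∃ c : ℝ, c = K + h * cst h := ⟨_, rfl⟩
  have hc0 : 0 ≤ c := by rw [hc]; positivity
  obtain ⟨s, hs⟩ := exists_nat_ge (max 1 (c * Real.exp (-(L * h)) * Real.exp 1))
  have hs1 : (1 : ℝ) ≤ s := (le_max_left _ _).trans hs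
  have hs2 : c * Real.exp (-(L * h)) * Real.exp 1 ≤ s := (le_max_right _ _).trans hs
  have hs0 : (0 : ℝ) < s := by linarith
  have hsN : 1 ≤ s := by exact_mod_cast hs1
  have hmain : ∀ᶠ n : ℕ in atTop, ((bad C H y K n).card : ℝ) / (mems C n).card ≤
      Real.exp (1 - (n : ℝ) / (2 * s)) := by
    have hev : ∀ᶠ n : ℕ in atTop, u n / n < L + 1 / (2 * s) :=
      hlim.eventually_lt_const (by have : 0 < 1 / (2 * (s : ℝ)) := by positivity
                                   linarith)
    filter_upwards [hev, eventually_ge_atTop s] with n hn hns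
    have hn1 : 1 ≤ n := by omega
    have hn0 : (0 : ℝ) < n := by exact_mod_cast hn1
    obtain ⟨m, hm⟩ : ∃ m, m = n / s := ⟨_, rfl⟩
    have hm1 : 1 ≤ m := hm ▸ (Nat.one_le_div_iff (by omega)).2 hns
    have hm1' : (1 : ℝ) ≤ m := by exact_mod_cast hm1
    have hms : (m : ℝ) * s ≤ n := by
      have : m * s ≤ n := hm ▸ Nat.div_mul_le_self n s
      exact_mod_cast this
    have hms' : (n : ℝ) ≤ (m + 1) * s := by
      have := Nat.lt_div_mul_add (a := n) (b := s) (by omega)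
      rw [← hm] at this
      have h2 : n ≤ (m + 1) * s := by rw [add_mul, one_mul]; exact this.le
      exact_mod_cast h2
    have hcount := pendant_count hIso hA hH y K n m
    obtain ⟨N, hN⟩ : ∃ N, N = n + m * h := ⟨_, rfl⟩
    rw [← hN] at hcount
    have hN1 : 1 ≤ N := by omega
    have hNR : (N : ℝ) = n + m * h := by rw [hN]; push_cast; ring
    have hcount' : ((bad C H y K n).card : ℝ) * (N.factorial * (n : ℝ) ^ m) ≤
      n.factorial * (K + m * h * cst h : ℝ) ^ m * (mems C N).card := by exact_mod_cast hcount
    have hNn : (n : ℝ) ≤ N := by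
      have : n ≤ N := by rw [hN]; exact Nat.le_add_right _ _
      exact_mod_cast this
    have hKm : (K + m * h * cst h : ℝ) ≤ c * m := by
      have h1 : (K : ℝ) ≤ K * m := le_mul_of_one_le_right (Nat.cast_nonneg K) hm1'
      have h2 : c * m = K * m + m * h * cst h := by rw [hc]; ring
      linarith
    have a1 : (0 : ℝ) < (mems C n).card := by exact_mod_cast hne n hn1
    have a2 : (0 : ℝ) < n.factorial := by exact_mod_cast n.factorial_pos
    have a3 : (0 : ℝ) < N.factorial := by exact_mod_cast N.factorial_pos
    have hNpos : (0 : ℝ) < N := by exact_mod_cast hN1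
    have en : ((mems C n).card : ℝ) = Real.exp (-u n) * n.factorial / n := by
      rw [← hu n hn1, div_mul_cancel₀ _ a2.ne', mul_div_cancel_left₀ _ hn0.ne']
    have eN : ((mems C N).card : ℝ) = Real.exp (-u N) * N.factorial / N := by
      rw [← hu N hN1, div_mul_cancel₀ _ a3.ne', mul_div_cancel_left₀ _ hNpos.ne']
    exact real_bound m hcount' (by positivity) hKm hn0 hs0 hc0 hNn hNR a1 a2 a3 en eN hs2
      hms hms' (hL N hN1) (by rw [← div_le_iff₀ hn0]; exact hn.le)
  have hz : Tendsto (fun n : ℕ => Real.exp (1 - (n : ℝ) / (2 * s))) atTop (𝓝 0) := by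
    apply Real.tendsto_exp_atBot.comp
    have h1 : Tendsto (fun n : ℕ => (n : ℝ) / (2 * s)) atTop atTop :=
      tendsto_natCast_atTop_atTop.atTop_div_const (by positivity)
    have := tendsto_atBot_add_const_left atTop (1 : ℝ) (tendsto_neg_atTop_atBot.comp h1)
    simpa [sub_eq_add_neg, Function.comp_def] using this
  exact squeeze_zero' (Eventually.of_forall fun n => by positivity) hmain hz

end Growth

end FOZ

/-! ## Part 6: the zero-one law -/

namespace FOZ

section Final

open scoped Classical

/-- A connected member of the class with two marked vertices. -/
structure Rep (C : GraphClassOn) where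
  m : ℕ
  H : SimpleGraph (Fin m)
  x : Fin m
  y : Fin m
  mem : Mem C H

/-- The rooted graph `r` represents the local type `τ`. -/
def Rep.Is {C : GraphClassOn} (r : Rep C) (k : ℕ) (τ : Typ k 1) : Prop :=
  2 ^ k < r.H.dist r.x r.y ∧ ltp r.H k 1 (fun _ => r.x) = τ

/-- The number of appearances required of a representative. -/
def Rep.thr {C : GraphClassOn} (r : Rep C) (q : ℕ) : ℕ := (q + 2) * r.m * cst r.m

/-- Graphs with many appearances of every representative. -/
def Good {C : GraphClassOn} (rep : ∀ k, Typ k 1 → Rep C) (q : ℕ) {n : ℕ}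
    (G : SimpleGraph (Fin n)) : Prop :=
  ∀ k ≤ q, ∀ τ : Typ k 1, (rep k τ).thr q < (apps (rep k τ).H (rep k τ).y G).card

theorem Good.rich {C : GraphClassOn} {rep : ∀ k, Typ k 1 → Rep C} {q n : ℕ}
    {G : SimpleGraph (Fin n)} (hg : Good rep q G) (hG : G.Connected)
    (hrep : ∀ k τ, (∃ r : Rep C, r.Is k τ) → (rep k τ).Is k τ)
    {k : ℕ} (hk : k ≤ q) {τ : Typ k 1} (hτ : ∃ r : Rep C, r.Is k τ) :
    ∃ Y : Fin (q + 2) → Fin n, (∀ i j, i ≠ j → 2 * 2 ^ k < G.dist (Y i) (Y j)) ∧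
      ∀ i, ltp G k 1 (fun _ => Y i) = τ := by
  obtain ⟨h1, h2⟩ := hrep k τ hτ
  obtain ⟨F, hF, hd⟩ := exists_disjoint (rep k τ).mem.2 (rep k τ).y G (q + 2) (hg k hk τ)
  refine ⟨fun i => F i (rep k τ).x, ?_, ?_⟩
  · intro i j hij
    have := (hF i).dist_two (hF j) (rep k τ).mem.2 hG (hd i j hij) (rep k τ).x
    exact lt_of_lt_of_le (by omega) this
  · intro i
    exact ((hF i).ltp_eq (rep k τ).mem.2 hG k (fun _ => (rep k τ).x) (fun _ => h1)).trans h2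

theorem Good.all_rep {C : GraphClassOn} {rep : ∀ k, Typ k 1 → Rep C} {q n : ℕ}
    {G : SimpleGraph (Fin n)} (hg : Good rep q G) (hG : Mem C G)
    (hrep : ∀ k τ, (∃ r : Rep C, r.Is k τ) → (rep k τ).Is k τ)
    (hq : ∃ r : Rep C, 2 ^ q < r.H.dist r.x r.y)
    {k : ℕ} (hk : k ≤ q) (x : Fin n) :
    ∃ r : Rep C, r.Is k (ltp G k 1 (fun _ => x)) := by
  obtain ⟨r, hr⟩ := hq
  obtain ⟨Y, hY, -⟩ := hg.rich hG.2 hrep le_rfl (τ := ltp r.H q 1 (fun _ => r.x)) ⟨r, hr, rfl⟩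
  have h01 := hY 0 1 (by simp)
  have htri := hG.2.dist_triangle (u := Y 0) (v := x) (w := Y 1)
  rw [SimpleGraph.dist_comm (u := Y 0) (v := x)] at htri
  have hkq : 2 ^ k ≤ 2 ^ q := Nat.pow_le_pow_right (by norm_num) hk
  have : ∃ z, 2 ^ k < G.dist x z := by
    by_contra! hcon
    have h1 := hcon (Y 0)
    have h2 := hcon (Y 1)
    omega
  obtain ⟨z, hz⟩ := this
  exact ⟨⟨n, G, x, z, hG⟩, hz, rfl⟩

theorem LEF_single {V W : Type} {G : SimpleGraph V} {H : SimpleGraph W} {k : ℕ} {x : V} {y : W}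
    (h : ltp G k 1 (fun _ => x) = ltp H k 1 (fun _ => y)) : LEF G H k {(x, y)} := by
  have := LEF_of_ltp G H k _ _ h
  rwa [Set.range_const] at this

theorem LEF_empty {V W : Type} (G : SimpleGraph V) (H : SimpleGraph W) (k : ℕ) :
    LEF G H k ∅ := by
  induction k with
  | zero => intro p hp; exact absurd hp (Set.notMem_empty _)
  | succ k ih =>
    refine ⟨ih, ?_, ?_⟩
    · rintro x ⟨p, hp, -⟩; exact absurd hp (Set.notMem_empty _)
    · rintro x ⟨p, hp, -⟩; exact absurd hp (Set.notMem_empty _)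

theorem Good.agree {C : GraphClassOn} {rep : ∀ k, Typ k 1 → Rep C} (φ : Language.graph.Sentence)
    (hrep : ∀ k τ, (∃ r : Rep C, r.Is k τ) → (rep k τ).Is k τ)
    (hq : ∃ r : Rep C, 2 ^ (qr φ) < r.H.dist r.x r.y)
    {n n' : ℕ} {G : SimpleGraph (Fin n)} {G' : SimpleGraph (Fin n')}
    (hg : Good rep (qr φ) G) (hg' : Good rep (qr φ) G') (hG : Mem C G) (hG' : Mem C G') :
    SatFO G φ ↔ SatFO G' φ := by
  apply satFO_iff
  refine EF_of_LEF hG.2 hG'.2 (q := qr φ) (N := qr φ + 2) (by omega) ?_ ?_ _ ∅ Set.finite_empty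
    (by simp) (LEF_empty _ _ _)
  · intro k hk x
    obtain ⟨Y, h1, h2⟩ := hg'.rich hG'.2 hrep hk.le (hg.all_rep hG hrep hq hk.le x)
    exact ⟨Y, h1, fun i => LEF_single (h2 i).symm⟩
  · intro k hk y
    obtain ⟨X, h1, h2⟩ := hg.rich hG.2 hrep hk.le (hg'.all_rep hG' hrep hq hk.le y)
    exact ⟨X, h1, fun i => LEF_single (h2 i)⟩

theorem connClassProb_eq (C : GraphClassOn) (n : ℕ) (P : SimpleGraph (Fin n) → Prop) :
    connClassProb C n P = (((mems C n).filter P).card : ℝ) / (mems C n).card := by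
  unfold connClassProb
  rw [Nat.card_eq_fintype_card, Nat.card_eq_fintype_card, Fintype.card_subtype,
    Fintype.card_subtype]
  have h1 : (Finset.univ.filter fun G : SimpleGraph (Fin n) =>
      (C (Fin n) G ∧ G.Connected) ∧ P G) = (mems C n).filter P := by
    ext G
    simp [mem_mems, Mem]
  have h2 : (Finset.univ.filter fun G : SimpleGraph (Fin n) =>
      C (Fin n) G ∧ G.Connected) = mems C n := by
    ext G
    simp [mem_mems, Mem]
  rw [h1, h2]

theorem not_good_tendsto {C : GraphClassOn} (hIso : ClassIsoInvariant C) (hA : ClassAddable C)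
    (hS : ClassSmall C) (hne : ∀ n, 1 ≤ n → 0 < (mems C n).card)
    (rep : ∀ k, Typ k 1 → Rep C) (q : ℕ) :
    Tendsto (fun n : ℕ => (((mems C n).filter (fun G => ¬ Good rep q G)).card : ℝ) /
      (mems C n).card) atTop (𝓝 0) := by
  let ι := Σ k : Fin (q + 1), Typ k 1
  have : Fintype ι := Fintype.ofFinite ι
  let r : ι → Rep C := fun i => rep i.1 i.2
  have hsum : Tendsto (fun n : ℕ => ∑ i : ι,
      ((bad C (r i).H (r i).y ((r i).thr q) n).card : ℝ) / (mems C n).card) atTop (𝓝 0) := by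
    have := tendsto_finsetSum (Finset.univ : Finset ι) (fun i _ =>
      bad_tendsto hIso hA hS hne (r i).mem (r i).y ((r i).thr q))
    simpa using this
  refine squeeze_zero (fun n => by positivity) (fun n => ?_) hsum
  rw [← Finset.sum_div]
  apply div_le_div_of_nonneg_right _ (Nat.cast_nonneg _)
  have hsub : (mems C n).filter (fun G => ¬ Good rep q G) ⊆
      Finset.univ.biUnion (fun i : ι => bad C (r i).H (r i).y ((r i).thr q) n) := by
    intro G hG
    rw [Finset.mem_filter] at hG
    obtain ⟨h1, h2⟩ := hG
    unfold Good at h2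
    push Not at h2
    obtain ⟨k, hk, τ, h3⟩ := h2
    rw [Finset.mem_biUnion]
    refine ⟨⟨⟨k, by omega⟩, τ⟩, Finset.mem_univ _, ?_⟩
    unfold bad
    rw [Finset.mem_filter]
    exact ⟨h1, h3⟩
  have := (Finset.card_le_card hsub).trans Finset.card_biUnion_le
  exact_mod_cast this

theorem main {C : GraphClassOn} (hIso : ClassIsoInvariant C) (hA : ClassAddable C)
    (hS : ClassSmall C)
    (hne : ∀ n : ℕ, 1 ≤ n → ∃ G : SimpleGraph (Fin n), C (Fin n) G ∧ G.Connected)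
    (φ : Language.graph.Sentence) :
    ∃ p : ℝ, (p = 0 ∨ p = 1) ∧
      Tendsto (fun n : ℕ => connClassProb C n (fun G => SatFO G φ)) atTop (𝓝 p) := by
  have hpos : ∀ n, 1 ≤ n → 0 < (mems C n).card := by
    intro n hn
    obtain ⟨G, hG⟩ := hne n hn
    exact Finset.card_pos.2 ⟨G, mem_mems.2 hG⟩
  obtain ⟨m, H, x, y, hH, hd⟩ := exists_long hIso hA (hne 1 le_rfl) (2 ^ (qr φ) + 1)
  let r₀ : Rep C := ⟨m, H, x, y, hH⟩
  have hq : ∃ r : Rep C, 2 ^ (qr φ) < r.H.dist r.x r.y := ⟨r₀, hd⟩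
  let rep : ∀ k, Typ k 1 → Rep C := fun k τ =>
    if h : ∃ r : Rep C, r.Is k τ then h.choose else r₀
  have hrep : ∀ k τ, (∃ r : Rep C, r.Is k τ) → (rep k τ).Is k τ := by
    intro k τ h
    simp only [rep, dif_pos h]
    exact h.choose_spec
  have hbad := not_good_tendsto hIso hA hS hpos rep (qr φ)
  simp only [connClassProb_eq]
  by_cases hex : ∃ (n : ℕ) (G : SimpleGraph (Fin n)), Mem C G ∧ Good rep (qr φ) G ∧ SatFO G φ
  · obtain ⟨n₀, G₀, hG₀, hg₀, hs₀⟩ := hex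
    refine ⟨1, Or.inr rfl, ?_⟩
    have h1 : Tendsto (fun n : ℕ => 1 - (((mems C n).filter
        (fun G => ¬ Good rep (qr φ) G)).card : ℝ) / (mems C n).card) atTop (𝓝 1) := by
      simpa using hbad.const_sub 1
    refine tendsto_of_tendsto_of_tendsto_of_le_of_le' h1 tendsto_const_nhds ?_ ?_
    · filter_upwards [eventually_ge_atTop 1] with n hn
      have hp : (0 : ℝ) < (mems C n).card := by exact_mod_cast hpos n hn
      rw [sub_le_iff_le_add, ← add_div, le_div_iff₀ hp, one_mul]
      have hle : (mems C n).card ≤ ((mems C n).filter (fun G => SatFO G φ)).card +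
          ((mems C n).filter (fun G => ¬ Good rep (qr φ) G)).card := by
        refine (Finset.card_le_card ?_).trans (Finset.card_union_le _ _)
        intro G hG
        rw [Finset.mem_union, Finset.mem_filter, Finset.mem_filter]
        by_cases hg : Good rep (qr φ) G
        · exact Or.inl ⟨hG, (Good.agree φ hrep hq hg₀ hg hG₀ (mem_mems.1 hG)).1 hs₀⟩
        · exact Or.inr ⟨hG, hg⟩
      exact_mod_cast hle
    · filter_upwards with n
      apply div_le_one_of_le₀ _ (Nat.cast_nonneg _)
      exact_mod_cast Finset.card_filter_le _ _
  · push Not at hex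
    refine ⟨0, Or.inl rfl, squeeze_zero (fun n => by positivity) (fun n => ?_) hbad⟩
    apply div_le_div_of_nonneg_right _ (Nat.cast_nonneg _)
    have hle : ((mems C n).filter (fun G => SatFO G φ)).card ≤
        ((mems C n).filter (fun G => ¬ Good rep (qr φ) G)).card := by
      apply Finset.card_le_card
      intro G hG
      rw [Finset.mem_filter] at hG ⊢
      exact ⟨hG.1, fun hg => hex n G (mem_mems.1 hG.1) hg hG.2⟩
    exact_mod_cast hle

end Final

end FOZ

/-- Zero-one law for first-order logic on the connected graphs of a
small addable class. -/
theorem fo_zero_one_law_connected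
    (C : GraphClassOn) (hIso : ClassIsoInvariant C) (hAdd : ClassAddable C)
    (hSmall : ClassSmall C)
    (hne : ∀ n : ℕ, 1 ≤ n → ∃ G : SimpleGraph (Fin n), C (Fin n) G ∧ G.Connected)
    (φ : Language.graph.Sentence) :
    ∃ p : ℝ, (p = 0 ∨ p = 1) ∧
      Tendsto (fun n : ℕ => connClassProb C n (fun G => SatFO G φ)) atTop (𝓝 p) := by
  exact FOZ.main hIso hAdd hSmall hne φ
end

section
/- Let C be a smooth addable class of finite simple graphs with C_n nonempty for every n ≥ 1, and let φ be a sentence of first-order logic in the language of graphs. Then the probability that the uniformly random graph R_n(C) on vertex set Fin n drawn from C satisfies φ tends to a limit as n → ∞. -/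
open Filter Topology FirstOrder

namespace FOC

/-- Two graphs put side by side, with cross edges prescribed by `X`. -/
def glue {V W : Type} (G : SimpleGraph V) (H : SimpleGraph W) (X : V → W → Prop) :
    SimpleGraph (V ⊕ W) where
  Adj x y := match x, y with
    | .inl a, .inl b => G.Adj a b
    | .inr a, .inr b => H.Adj a b
    | .inl a, .inr b => X a b
    | .inr b, .inl a => X a b
  symm := ⟨by
    rintro (a | a) (b | b) h
    · exact SimpleGraph.Adj.symm (G := G) h
    · exact h
    · exact h
    · exact SimpleGraph.Adj.symm (G := H) h⟩
  loopless := ⟨by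
    rintro (a | a) h
    · exact G.loopless.irrefl a h
    · exact H.loopless.irrefl a h⟩

section glueLemmas
variable {V W : Type} {G : SimpleGraph V} {H : SimpleGraph W} {X : V → W → Prop}
@[simp] lemma glue_ll {a b} : (glue G H X).Adj (.inl a) (.inl b) ↔ G.Adj a b := Iff.rfl
@[simp] lemma glue_rr {a b} : (glue G H X).Adj (.inr a) (.inr b) ↔ H.Adj a b := Iff.rfl
@[simp] lemma glue_lr {a b} : (glue G H X).Adj (.inl a) (.inr b) ↔ X a b := Iff.rfl
@[simp] lemma glue_rl {a b} : (glue G H X).Adj (.inr b) (.inl a) ↔ X a b := Iff.rfl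
end glueLemmas

/-- Extend a tuple by one element. -/
def tcons {ι V : Type} (a : ι → V) (x : V) : Option ι → V := fun o => o.elim x a

@[simp] lemma tcons_none {ι V : Type} (a : ι → V) (x : V) : tcons a x none = x := rfl
@[simp] lemma tcons_some {ι V : Type} (a : ι → V) (x : V) (i : ι) : tcons a x (some i) = a i := rfl

/-- Partial isomorphism. -/
def PIso {ι V W : Type} (G : SimpleGraph V) (H : SimpleGraph W) (a : ι → V) (b : ι → W) : Prop :=
  ∀ i j, (a i = a j ↔ b i = b j) ∧ (G.Adj (a i) (a j) ↔ H.Adj (b i) (b j))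

/-- Ehrenfeucht-Fraisse equivalence. -/
def EF : ℕ → ∀ {ι V W : Type}, SimpleGraph V → SimpleGraph W → (ι → V) → (ι → W) → Prop
  | 0, _, _, _, G, H, a, b => PIso G H a b
  | k + 1, _, _, _, G, H, a, b => PIso G H a b ∧
      (∀ x, ∃ y, EF k G H (tcons a x) (tcons b y)) ∧
      (∀ y, ∃ x, EF k G H (tcons a x) (tcons b y))

lemma EF.base {k : ℕ} {ι V W : Type} {G : SimpleGraph V} {H : SimpleGraph W} {a : ι → V}
    {b : ι → W} (h : EF k G H a b) : PIso G H a b := by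
  cases k with
  | zero => exact h
  | succ k => exact h.1

lemma EF.mono_succ {k : ℕ} : ∀ {ι V W : Type} {G : SimpleGraph V} {H : SimpleGraph W} {a : ι → V}
    {b : ι → W}, EF (k + 1) G H a b → EF k G H a b := by
  induction k with
  | zero => intro ι V W G H a b h; exact h.1
  | succ k ih =>
    intro ι V W G H a b h
    refine ⟨h.1, fun x => ?_, fun y => ?_⟩
    · obtain ⟨y, hy⟩ := h.2.1 x
      exact ⟨y, ih hy⟩
    · obtain ⟨x, hx⟩ := h.2.2 y
      exact ⟨x, ih hx⟩

lemma EF.mono {k l : ℕ} (hkl : k ≤ l) {ι V W : Type} {G : SimpleGraph V} {H : SimpleGraph W}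
    {a : ι → V} {b : ι → W} (h : EF l G H a b) : EF k G H a b := by
  induction hkl with
  | refl => exact h
  | step _ ih => exact ih h.mono_succ

lemma EF.symm {k : ℕ} : ∀ {ι V W : Type} {G : SimpleGraph V} {H : SimpleGraph W} {a : ι → V}
    {b : ι → W}, EF k G H a b → EF k H G b a := by
  induction k with
  | zero => intro ι V W G H a b h i j; exact ⟨(h i j).1.symm, (h i j).2.symm⟩
  | succ k ih =>
    intro ι V W G H a b h
    refine ⟨fun i j => ⟨(h.1 i j).1.symm, (h.1 i j).2.symm⟩, fun x => ?_, fun y => ?_⟩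
    · obtain ⟨y, hy⟩ := h.2.2 x
      exact ⟨y, ih hy⟩
    · obtain ⟨x, hx⟩ := h.2.1 y
      exact ⟨x, ih hx⟩

lemma EF.trans {k : ℕ} : ∀ {ι V W U : Type} {G : SimpleGraph V} {H : SimpleGraph W}
    {K : SimpleGraph U} {a : ι → V} {b : ι → W} {c : ι → U},
    EF k G H a b → EF k H K b c → EF k G K a c := by
  induction k with
  | zero => intro ι V W U G H K a b c h h' i j
            exact ⟨(h i j).1.trans (h' i j).1, (h i j).2.trans (h' i j).2⟩
  | succ k ih =>
    intro ι V W U G H K a b c h h'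
    refine ⟨fun i j => ⟨(h.1 i j).1.trans (h'.1 i j).1, (h.1 i j).2.trans (h'.1 i j).2⟩,
      fun x => ?_, fun z => ?_⟩
    · obtain ⟨y, hy⟩ := h.2.1 x
      obtain ⟨z, hz⟩ := h'.2.1 y
      exact ⟨z, ih hy hz⟩
    · obtain ⟨y, hy⟩ := h'.2.2 z
      obtain ⟨x, hx⟩ := h.2.2 y
      exact ⟨x, ih hx hy⟩

lemma tcons_comp_map {ι κ V : Type} (a : ι → V) (x : V) (f : κ → ι) :
    tcons a x ∘ Option.map f = tcons (a ∘ f) x := by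
  funext o; cases o <;> rfl

lemma EF.reindex {k : ℕ} : ∀ {ι κ V W : Type} {G : SimpleGraph V} {H : SimpleGraph W} {a : ι → V}
    {b : ι → W} (f : κ → ι), EF k G H a b → EF k G H (a ∘ f) (b ∘ f) := by
  induction k with
  | zero => intro ι κ V W G H a b f h i j; exact h (f i) (f j)
  | succ k ih =>
    intro ι κ V W G H a b f h
    refine ⟨fun i j => h.1 (f i) (f j), fun x => ?_, fun y => ?_⟩
    · obtain ⟨y, hy⟩ := h.2.1 x
      refine ⟨y, ?_⟩
      rw [← tcons_comp_map, ← tcons_comp_map]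
      exact ih _ hy
    · obtain ⟨x, hx⟩ := h.2.2 y
      refine ⟨x, ?_⟩
      rw [← tcons_comp_map, ← tcons_comp_map]
      exact ih _ hx

lemma comp_tcons {ι V W : Type} (e : V → W) (a : ι → V) (x : V) :
    e ∘ tcons a x = tcons (e ∘ a) (e x) := by
  funext o; cases o <;> rfl

lemma EF.of_iso {k : ℕ} : ∀ {ι V W : Type} {G : SimpleGraph V} {H : SimpleGraph W} (e : G ≃g H)
    (a : ι → V), EF k G H a (e ∘ a) := by
  induction k with
  | zero => intro ι V W G H e a i j; exact ⟨by simp, by simp [e.map_adj_iff]⟩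
  | succ k ih =>
    intro ι V W G H e a
    refine ⟨fun i j => ⟨by simp, by simp [e.map_adj_iff]⟩, fun x => ⟨e x, ?_⟩,
      fun y => ⟨e.symm y, ?_⟩⟩
    · rw [← comp_tcons]; exact ih e _
    · have := ih e (tcons a (e.symm y))
      rw [comp_tcons] at this
      simpa using this

lemma EF.refl {k : ℕ} {ι V : Type} (G : SimpleGraph V) (a : ι → V) : EF k G G a a :=
  EF.of_iso (SimpleGraph.Iso.refl) a

def shL {ι κ : Type} : Option (ι ⊕ κ) → Option ι ⊕ κ
  | none => .inl none
  | some (.inl i) => .inl (some i)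
  | some (.inr j) => .inr j

def shR {ι κ : Type} : Option (ι ⊕ κ) → ι ⊕ Option κ
  | none => .inr none
  | some (.inl i) => .inl i
  | some (.inr j) => .inr (some j)

lemma shL_eq {ι κ V W : Type} (a : ι → V) (b : κ → W) (x : V) :
    tcons (Sum.map a b) (.inl x) = Sum.map (tcons a x) b ∘ shL := by
  funext o; rcases o with _ | (i | j) <;> rfl

lemma shR_eq {ι κ V W : Type} (a : ι → V) (b : κ → W) (x : W) :
    tcons (Sum.map a b) (.inr x) = Sum.map a (tcons b x) ∘ shR := by
  funext o; rcases o with _ | (i | j) <;> rfl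

lemma EF.glue_aux {ι κ V W V' W' : Type} {G : SimpleGraph V} {G' : SimpleGraph V'}
    {H : SimpleGraph W} {H' : SimpleGraph W'} {a : ι → V} {a' : ι → V'} {b : κ → W} {b' : κ → W'}
    (R : ι → κ → Prop) {X : V → W → Prop} {X' : V' → W' → Prop}
    (hX : ∀ x y, X x y ↔ ∃ i j, R i j ∧ x = a i ∧ y = b j)
    (hX' : ∀ x y, X' x y ↔ ∃ i j, R i j ∧ x = a' i ∧ y = b' j)
    (h1 : PIso G G' a a') (h2 : PIso H H' b b') :
    PIso (glue G H X) (glue G' H' X') (Sum.map a b) (Sum.map a' b') := by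
  have key : ∀ i j, X (a i) (b j) ↔ X' (a' i) (b' j) := by
    intro i j
    rw [hX, hX']
    constructor
    · rintro ⟨i', j', h, e1, e2⟩
      exact ⟨i', j', h, (h1 _ _).1.1 e1, (h2 _ _).1.1 e2⟩
    · rintro ⟨i', j', h, e1, e2⟩
      exact ⟨i', j', h, (h1 _ _).1.2 e1, (h2 _ _).1.2 e2⟩
  rintro (i | i) (j | j)
  · simpa using h1 i j
  · simpa using key i j
  · simpa using key j i
  · simpa using h2 i j

lemma EF.glue {k : ℕ} : ∀ {ι κ V W V' W' : Type} {G : SimpleGraph V} {G' : SimpleGraph V'}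
    {H : SimpleGraph W} {H' : SimpleGraph W'} {a : ι → V} {a' : ι → V'} {b : κ → W} {b' : κ → W'}
    (R : ι → κ → Prop) {X : V → W → Prop} {X' : V' → W' → Prop}
    (_ : ∀ x y, X x y ↔ ∃ i j, R i j ∧ x = a i ∧ y = b j)
    (_ : ∀ x y, X' x y ↔ ∃ i j, R i j ∧ x = a' i ∧ y = b' j)
    (_ : EF k G G' a a') (_ : EF k H H' b b'),
    EF k (FOC.glue G H X) (FOC.glue G' H' X') (Sum.map a b) (Sum.map a' b') := by
  induction k with
  | zero =>
    intro ι κ V W V' W' G G' H H' a a' b b' R X X' hX hX' h1 h2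
    exact EF.glue_aux R hX hX' h1 h2
  | succ k ih =>
    intro ι κ V W V' W' G G' H H' a a' b b' R X X' hX hX' h1 h2
    have hL : ∀ x x', EF k G G' (tcons a x) (tcons a' x') →
        EF k (FOC.glue G H X) (FOC.glue G' H' X') (tcons (Sum.map a b) (.inl x))
          (tcons (Sum.map a' b') (.inl x')) := by
      intro x x' h
      rw [shL_eq, shL_eq]
      apply EF.reindex
      refine ih (fun o j => ∃ i, o = some i ∧ R i j) ?_ ?_ h h2.mono_succ
      · intro u v; rw [hX]; constructor
        · rintro ⟨i, j, h, e1, e2⟩; exact ⟨some i, j, ⟨i, rfl, h⟩, e1, e2⟩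
        · rintro ⟨_, j, ⟨i, rfl, h⟩, e1, e2⟩; exact ⟨i, j, h, e1, e2⟩
      · intro u v; rw [hX']; constructor
        · rintro ⟨i, j, h, e1, e2⟩; exact ⟨some i, j, ⟨i, rfl, h⟩, e1, e2⟩
        · rintro ⟨_, j, ⟨i, rfl, h⟩, e1, e2⟩; exact ⟨i, j, h, e1, e2⟩
    have hR : ∀ x x', EF k H H' (tcons b x) (tcons b' x') →
        EF k (FOC.glue G H X) (FOC.glue G' H' X') (tcons (Sum.map a b) (.inr x))
          (tcons (Sum.map a' b') (.inr x')) := by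
      intro x x' h
      rw [shR_eq, shR_eq]
      apply EF.reindex
      refine ih (fun i o => ∃ j, o = some j ∧ R i j) ?_ ?_ h1.mono_succ h
      · intro u v; rw [hX]; constructor
        · rintro ⟨i, j, h, e1, e2⟩; exact ⟨i, some j, ⟨j, rfl, h⟩, e1, e2⟩
        · rintro ⟨i, _, ⟨j, rfl, h⟩, e1, e2⟩; exact ⟨i, j, h, e1, e2⟩
      · intro u v; rw [hX']; constructor
        · rintro ⟨i, j, h, e1, e2⟩; exact ⟨i, some j, ⟨j, rfl, h⟩, e1, e2⟩
        · rintro ⟨i, _, ⟨j, rfl, h⟩, e1, e2⟩; exact ⟨i, j, h, e1, e2⟩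
    refine ⟨EF.glue_aux R hX hX' h1.1 h2.1, ?_, ?_⟩
    · rintro (x | x)
      · obtain ⟨y, hy⟩ := h1.2.1 x
        exact ⟨.inl y, hL _ _ hy⟩
      · obtain ⟨y, hy⟩ := h2.2.1 x
        exact ⟨.inr y, hR _ _ hy⟩
    · rintro (x | x)
      · obtain ⟨y, hy⟩ := h1.2.2 x
        exact ⟨.inl y, hL _ _ hy⟩
      · obtain ⟨y, hy⟩ := h2.2.2 x
        exact ⟨.inr y, hR _ _ hy⟩

/-! Finitely many types -/

/-- The (finite) type of rank-`k` types. -/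
def Ty : ℕ → Type → Type
  | 0, ι => (ι → ι → Prop) × (ι → ι → Prop)
  | k + 1, ι => ((ι → ι → Prop) × (ι → ι → Prop)) × Set (Ty k (Option ι))

/-- The rank-`k` type of a tuple. -/
def tp : ∀ (k : ℕ) {ι V : Type}, SimpleGraph V → (ι → V) → Ty k ι
  | 0, _, _, G, a => (fun i j => a i = a j, fun i j => G.Adj (a i) (a j))
  | k + 1, _, _, G, a => ((fun i j => a i = a j, fun i j => G.Adj (a i) (a j)),
      Set.range fun x => tp k G (tcons a x))

lemma finite_Ty (k : ℕ) : ∀ (ι : Type) [Finite ι], Finite (Ty k ι) := by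
  induction k with
  | zero => intro ι _; unfold Ty; infer_instance
  | succ k ih => intro ι _; unfold Ty; have := ih (Option ι); infer_instance

lemma PIso_iff {ι V W : Type} {G : SimpleGraph V} {H : SimpleGraph W} {a : ι → V}
    {b : ι → W} : ((fun i j => a i = a j, fun i j => G.Adj (a i) (a j)) :
      (ι → ι → Prop) × (ι → ι → Prop)) =
      (fun i j => b i = b j, fun i j => H.Adj (b i) (b j)) ↔ PIso G H a b := by
  simp only [Prod.mk.injEq, funext_iff, eq_iff_iff, PIso]
  exact ⟨fun h i j => ⟨h.1 i j, h.2 i j⟩, fun h => ⟨fun i j => (h i j).1, fun i j => (h i j).2⟩⟩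

lemma tp_eq_iff {k : ℕ} : ∀ {ι V W : Type} {G : SimpleGraph V} {H : SimpleGraph W} {a : ι → V}
    {b : ι → W}, tp k G a = tp k H b ↔ EF k G H a b := by
  induction k with
  | zero => intro ι V W G H a b; exact PIso_iff
  | succ k ih =>
    intro ι V W G H a b
    show (_, _) = (_, _) ↔ _
    rw [Prod.mk.injEq, PIso_iff]
    refine and_congr Iff.rfl ?_
    rw [Set.ext_iff]
    constructor
    · intro h
      constructor
      · intro x
        obtain ⟨y, hy⟩ := (h (tp k G (tcons a x))).1 ⟨x, rfl⟩
        exact ⟨y, ih.1 hy.symm⟩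
      · intro y
        obtain ⟨x, hx⟩ := (h (tp k H (tcons b y))).2 ⟨y, rfl⟩
        exact ⟨x, ih.1 hx⟩
    · rintro ⟨h1, h2⟩ τ
      constructor
      · rintro ⟨x, rfl⟩
        obtain ⟨y, hy⟩ := h1 x
        exact ⟨y, (ih.2 hy).symm⟩
      · rintro ⟨y, rfl⟩
        obtain ⟨x, hx⟩ := h2 y
        exact ⟨x, ih.2 hx⟩

/-! Formulas -/

/-- Satisfaction of a bounded formula in a simple graph. -/
def RealizeIn {V : Type} (G : SimpleGraph V) {n : ℕ}
    (φ : Language.graph.BoundedFormula Empty n) (a : Fin n → V) : Prop :=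
  letI := G.structure
  φ.Realize (default : Empty → V) a

lemma term_var {n : ℕ} (t : Language.graph.Term (Empty ⊕ Fin n)) :
    ∃ i, t = Language.Term.var (Sum.inr i) := by
  cases t with
  | var x =>
    rcases x with x | i
    · exact x.elim
    · exact ⟨i, rfl⟩
  | func f _ => exact isEmptyElim f

lemma realize_EF {n : ℕ} (φ : Language.graph.BoundedFormula Empty n) :
    ∃ k, ∀ {V W : Type} (G : SimpleGraph V) (H : SimpleGraph W) (a : Fin n → V) (b : Fin n → W),
      EF k G H a b → (RealizeIn G φ a ↔ RealizeIn H φ b) := by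
  induction φ with
  | falsum => exact ⟨0, fun _ _ _ _ _ => Iff.rfl⟩
  | equal t1 t2 =>
    obtain ⟨i, rfl⟩ := term_var t1
    obtain ⟨j, rfl⟩ := term_var t2
    exact ⟨0, fun G H a b h => (h i j).1⟩
  | rel R ts =>
    refine ⟨0, fun G H a b h => ?_⟩
    cases R
    obtain ⟨i, hi⟩ := term_var (ts 0)
    obtain ⟨j, hj⟩ := term_var (ts 1)
    have key : ∀ {V : Type} (G : SimpleGraph V) (a : _ → V),
        RealizeIn G (Language.BoundedFormula.rel Language.graphRel.adj ts) a ↔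
          G.Adj (a i) (a j) := by
      intro V G a
      unfold RealizeIn
      let := G.structure
      show G.Adj ((ts 0).realize _) ((ts 1).realize _) ↔ _
      rw [hi, hj]; rfl
    rw [key, key]
    exact (h i j).2
  | imp φ ψ ih1 ih2 =>
    obtain ⟨k, hk⟩ := ih1
    obtain ⟨l, hl⟩ := ih2
    refine ⟨max k l, fun G H a b h => ?_⟩
    have := hk G H a b (h.mono (le_max_left _ _))
    have := hl G H a b (h.mono (le_max_right _ _))
    show (RealizeIn G φ a → RealizeIn G ψ a) ↔ (RealizeIn H φ b → RealizeIn H ψ b)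
    tauto
  | @all n φ ih =>
    obtain ⟨k, hk⟩ := ih
    refine ⟨k + 1, fun G H a b h => ?_⟩
    have key : ∀ {V W : Type} (G : SimpleGraph V) (H : SimpleGraph W) (a : Fin n → V)
        (b : Fin n → W) x y, EF k G H (tcons a x) (tcons b y) →
        (RealizeIn G φ (Fin.snoc a x : Fin (n + 1) → _) ↔
          RealizeIn H φ (Fin.snoc b y : Fin (n + 1) → _)) := by
      intro V W G H a b x y h
      apply hk
      have e : ∀ {V : Type} (a : Fin n → V) (x : V), (Fin.snoc a x : Fin (n + 1) → V) =
          tcons a x ∘ (Fin.lastCases none some : Fin (n + 1) → Option (Fin n)) := by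
        intro V a x
        funext i
        refine Fin.lastCases ?_ (fun i => ?_) i <;> simp
      rw [e, e]
      exact h.reindex _
    show (∀ x, RealizeIn G φ (Fin.snoc a x)) ↔ (∀ x, RealizeIn H φ (Fin.snoc b x))
    constructor
    · intro hh y
      obtain ⟨x, hx⟩ := h.2.2 y
      exact (key _ _ _ _ _ _ hx).1 (hh x)
    · intro hh x
      obtain ⟨y, hy⟩ := h.2.1 x
      exact (key _ _ _ _ _ _ hy).2 (hh y)

/-- Rank of a sentence. -/
lemma satFO_EF (φ : Language.graph.Sentence) :
    ∃ k, ∀ {V W : Type} (G : SimpleGraph V) (H : SimpleGraph W),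
      EF k G H (Empty.elim : Empty → V) (Empty.elim : Empty → W) → (SatFO G φ ↔ SatFO H φ) := by
  obtain ⟨k, hk⟩ := realize_EF φ
  refine ⟨k, fun G H h => ?_⟩
  have := hk G H default default (by
    have := h.reindex (fun i : Fin 0 => i.elim0)
    convert this using 1)
  exact this

end FOC

namespace FOC

/-- Glueing of isomorphisms. -/
def glueIso {V W V' W' : Type} {G : SimpleGraph V} {G' : SimpleGraph V'}
    {H : SimpleGraph W} {H' : SimpleGraph W'} {X : V → W → Prop} {X' : V' → W' → Prop}
    (e : G ≃g G') (f : H ≃g H') (hX : ∀ x y, X x y ↔ X' (e x) (f y)) :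
    glue G H X ≃g glue G' H' X' where
  toEquiv := Equiv.sumCongr e.toEquiv f.toEquiv
  map_rel_iff' := by
    rintro (a | a) (b | b)
    · exact e.map_adj_iff
    · exact (hX a b).symm
    · exact (hX b a).symm
    · exact f.map_adj_iff

/-- Join two rooted graphs by an edge between their roots. -/
abbrev br {V W : Type} (G : SimpleGraph V) (H : SimpleGraph W) (r : V) (p : W) :
    SimpleGraph (V ⊕ W) := glue G H (fun x y => x = r ∧ y = p)

/-- Disjoint union. -/
abbrev du {V W : Type} (G : SimpleGraph V) (H : SimpleGraph W) :
    SimpleGraph (V ⊕ W) := glue G H (fun _ _ => False)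

def brSwap {V W : Type} (G : SimpleGraph V) (H : SimpleGraph W) (r : V) (p : W) :
    br G H r p ≃g br H G p r where
  toEquiv := Equiv.sumComm V W
  map_rel_iff' := by
    rintro (a | a) (b | b)
    · exact Iff.rfl
    · exact and_comm
    · exact and_comm
    · exact Iff.rfl

/-- Disjoint copies. -/
def copies {W : Type} (ι : Type) (T : SimpleGraph W) : SimpleGraph (ι × W) where
  Adj p q := p.1 = q.1 ∧ T.Adj p.2 q.2
  symm := ⟨fun _ _ h => ⟨h.1.symm, h.2.symm⟩⟩
  loopless := ⟨fun _ h => T.loopless.irrefl _ h.2⟩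

/-- Attach copies of `(T,t)` to `h`. -/
abbrev glueN {V W : Type} (G : SimpleGraph V) (h : V) (T : SimpleGraph W) (t : W) (ι : Type) :
    SimpleGraph (V ⊕ ι × W) := glue G (copies ι T) (fun x y => x = h ∧ y.2 = t)

def glueNOption {V W : Type} (G : SimpleGraph V) (h : V) (T : SimpleGraph W) (t : W) (ι : Type) :
    br (glueN G h T t ι) T (.inl h) t ≃g glueN G h T t (Option ι) where
  toFun
    | .inl (.inl x) => .inl x
    | .inl (.inr (i, w)) => .inr (some i, w)
    | .inr w => .inr (none, w)
  invFun
    | .inl x => .inl (.inl x)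
    | .inr (some i, w) => .inl (.inr (i, w))
    | .inr (none, w) => .inr w
  left_inv := by rintro ((x | ⟨i, w⟩) | w) <;> rfl
  right_inv := by rintro (x | ⟨_ | i, w⟩) <;> rfl
  map_rel_iff' := by
    rintro ((x | ⟨i, w⟩) | w) ((x' | ⟨i', w'⟩) | w') <;> simp [copies]

def glueNIso {V W : Type} (G : SimpleGraph V) (h : V) (T : SimpleGraph W) (t : W) {ι κ : Type}
    (e : ι ≃ κ) : glueN G h T t ι ≃g glueN G h T t κ :=
  glueIso SimpleGraph.Iso.refl
    { toEquiv := Equiv.prodCongr e (Equiv.refl W)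
      map_rel_iff' := by rintro ⟨i, w⟩ ⟨j, w'⟩; simp [copies] } (by rintro x ⟨i, w⟩; rfl)

lemma exists_fresh {J ι : Type} [Finite J] [Finite ι] {k : ℕ} (s : J → ι)
    (h : Nat.card J + (k + 1) ≤ Nat.card ι) : ∃ i, ∀ j, s j ≠ i := by
  by_contra hc
  push Not at hc
  have : Function.Surjective s := hc
  have := Nat.card_le_card_of_surjective s this
  omega

/-- push an index map -/
def pmap {V W J ι : Type} (s : J → ι) : V ⊕ J × W → V ⊕ ι × W := Sum.map id (Prod.map s id)

lemma pmap_piso {V W J ι ι' κ : Type} (G : SimpleGraph V) (h : V) (T : SimpleGraph W) (t : W)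
    {s : J → ι} {s' : J → ι'} (hs : Function.Injective s) (hs' : Function.Injective s')
    (a : κ → V ⊕ J × W) :
    PIso (glueN G h T t ι) (glueN G h T t ι') (pmap s ∘ a) (pmap s' ∘ a) := by
  intro i j
  simp only [Function.comp]
  generalize a i = x, a j = y
  rcases x with x | ⟨i, x⟩ <;> rcases y with y | ⟨j, y⟩ <;>
    simp [pmap, copies, hs.eq_iff, hs'.eq_iff]

lemma pmap_tcons {V W J ι κ : Type} (s : J → ι) (i : ι) (a : κ → V ⊕ J × W) (w : W) :
    tcons (pmap s ∘ a) (.inr (i, w)) =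
      pmap (tcons s i) ∘ (tcons (pmap some ∘ a) (.inr (none, w))) := by
  funext o
  rcases o with _ | o
  · rfl
  · simp only [tcons_some, Function.comp]
    rcases a o with x | ⟨j, x⟩ <;> rfl

lemma tcons_inj {J ι : Type} {s : J → ι} (hs : Function.Injective s) {i : ι}
    (hi : ∀ j, s j ≠ i) : Function.Injective (tcons s i) := by
  rintro (_ | x) (_ | y) h
  · rfl
  · exact (hi y h.symm).elim
  · exact (hi x h).elim
  · exact congrArg some (hs h)

lemma absorb {k : ℕ} : ∀ {V W J ι ι' κ : Type} [Finite J] [Finite ι] [Finite ι']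
    (G : SimpleGraph V) (h : V) (T : SimpleGraph W) (t : W)
    {s : J → ι} {s' : J → ι'} (_ : Function.Injective s) (_ : Function.Injective s')
    (a : κ → V ⊕ J × W) (_ : Nat.card J + k ≤ Nat.card ι) (_ : Nat.card J + k ≤ Nat.card ι'),
    EF k (glueN G h T t ι) (glueN G h T t ι') (pmap s ∘ a) (pmap s' ∘ a) := by
  induction k with
  | zero =>
    intro V W J ι ι' κ _ _ _ G h T t s s' hs hs' a _ _
    exact pmap_piso G h T t hs hs' a
  | succ k ih =>
    intro V W J ι ι' κ _ _ _ G h T t s s' hs hs' a h1 h2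
    have hold : ∀ z : V ⊕ J × W, EF k (glueN G h T t ι) (glueN G h T t ι')
        (tcons (pmap s ∘ a) (pmap s z)) (tcons (pmap s' ∘ a) (pmap s' z)) := by
      intro z
      rw [← comp_tcons, ← comp_tcons]
      exact ih G h T t hs hs' _ (by omega) (by omega)
    have hnew : ∀ i i' w, (∀ j, s j ≠ i) → (∀ j, s' j ≠ i') →
        EF k (glueN G h T t ι) (glueN G h T t ι')
        (tcons (pmap s ∘ a) (.inr (i, w))) (tcons (pmap s' ∘ a) (.inr (i', w))) := by
      intro i i' w hi hi'
      rw [pmap_tcons s, pmap_tcons s']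
      refine ih G h T t (tcons_inj hs hi) (tcons_inj hs' hi') _ ?_ ?_ <;>
        rw [Finite.card_option] <;> omega
    refine ⟨pmap_piso G h T t hs hs' a, ?_, ?_⟩
    · rintro (x | ⟨i, w⟩)
      · exact ⟨_, hold (.inl x)⟩
      · by_cases hi : ∃ j, s j = i
        · obtain ⟨j, rfl⟩ := hi
          exact ⟨_, hold (.inr (j, w))⟩
        · push Not at hi
          obtain ⟨i', hi'⟩ := exists_fresh s' h2
          exact ⟨_, hnew i i' w hi hi'⟩
    · rintro (x | ⟨i, w⟩)
      · exact ⟨_, hold (.inl x)⟩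
      · by_cases hi : ∃ j, s' j = i
        · obtain ⟨j, rfl⟩ := hi
          exact ⟨_, hold (.inr (j, w))⟩
        · push Not at hi
          obtain ⟨i', hi'⟩ := exists_fresh s h1
          exact ⟨_, hnew i' i w hi' hi⟩

/-- `(G,r)` absorbs pendant graphs of type `τ`. -/
def Abs (k : ℕ) {V : Type} (G : SimpleGraph V) (r : V) (τ : Ty k Unit) : Prop :=
  ∀ (W : Type) (P : SimpleGraph W) (p : W), tp k P (fun _ : Unit => p) = τ →
    EF k (br G P r p) G (fun _ : Unit => .inl r) (fun _ => r)

lemma br_congr {k : ℕ} {V V' W W' : Type} {G : SimpleGraph V} {G' : SimpleGraph V'}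
    {P : SimpleGraph W} {P' : SimpleGraph W'} {r : V} {r' : V'} {p : W} {p' : W'}
    (h1 : EF k G G' (fun _ : Unit => r) (fun _ => r'))
    (h2 : EF k P P' (fun _ : Unit => p) (fun _ => p')) :
    EF k (br G P r p) (br G' P' r' p') (fun _ : Unit => .inl r) (fun _ => .inl r') := by
  have := EF.glue (k := k) (fun _ _ => True) (X := fun x y => x = r ∧ y = p)
    (X' := fun x y => x = r' ∧ y = p') (by simp) (by simp) h1 h2
  exact this.reindex (fun _ : Unit => Sum.inl ())

lemma abs_glueN {k : ℕ} {V W : Type} (G : SimpleGraph V) (h : V) (T : SimpleGraph W) (t : W) :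
    Abs k (glueN G h T t (Fin k)) (.inl h) (tp k T (fun _ : Unit => t)) := by
  intro W' P p hp
  rw [tp_eq_iff] at hp
  refine (br_congr (EF.refl _ _) hp).trans ?_
  refine (EF.of_iso (glueNOption G h T t (Fin k)) _).trans ?_
  have := absorb (k := k) (J := Empty) (ι := Option (Fin k)) (ι' := Fin k) (κ := Unit) G h T t
    (s := Empty.elim) (s' := Empty.elim) (fun x => x.elim) (fun x => x.elim)
    (fun _ => .inl h) (by simp) (by simp)
  exact this

def glueComm {V Q P : Type} (G : SimpleGraph V) (H : SimpleGraph Q) (K : SimpleGraph P)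
    (X : V → Q → Prop) (r : V) (p : P) :
    br (glue G H X) K (.inl r) p ≃g
      glue (br G K r p) H (fun x y => ∃ v, x = .inl v ∧ X v y) where
  toFun
    | .inl (.inl x) => .inl (.inl x)
    | .inl (.inr x) => .inr x
    | .inr x => .inl (.inr x)
  invFun
    | .inl (.inl x) => .inl (.inl x)
    | .inr x => .inl (.inr x)
    | .inl (.inr x) => .inr x
  left_inv := by rintro ((x | x) | x) <;> rfl
  right_inv := by rintro ((x | x) | x) <;> rfl
  map_rel_iff' := by
    rintro ((x | x) | x) ((y | y) | y) <;> simp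

lemma Abs.glue {k : ℕ} {V Q : Type} {G : SimpleGraph V} {r : V} {τ : Ty k Unit}
    (h : Abs k G r τ) (H : SimpleGraph Q) (Y : Q → Prop) :
    Abs k (glue G H (fun x y => x = r ∧ Y y)) (.inl r) τ := by
  intro W P p hp
  refine (EF.of_iso (glueComm G H P _ r p) _).trans ?_
  have := EF.glue (k := k) (fun _ y => Y y)
    (X := fun x y => ∃ v, x = .inl v ∧ (v = r ∧ Y y))
    (X' := fun x y => x = r ∧ Y y) (by aesop) (by aesop) (h W P p hp) (EF.refl H id)
  exact this.reindex (fun _ : Unit => Sum.inl ())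

lemma Abs.iso {k : ℕ} {V V' : Type} {G : SimpleGraph V} {G' : SimpleGraph V'} {r : V}
    {τ : Ty k Unit} (h : Abs k G r τ) (e : G ≃g G') : Abs k G' (e r) τ := by
  intro W P p hp
  have e1 : EF k G' G (fun _ : Unit => e r) (fun _ => r) :=
    EF.symm (EF.of_iso e (fun _ : Unit => r))
  exact (br_congr e1 (EF.refl _ _)).trans ((h W P p hp).trans e1.symm)

/-! ### Class lemmas -/

lemma reach_du_inl {V W : Type} {G : SimpleGraph V} {H : SimpleGraph W} {v : V} {x : V ⊕ W} :
    (du G H).Reachable (.inl v) x ↔ ∃ u, x = .inl u ∧ G.Reachable v u := by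
  constructor
  · intro h
    rw [SimpleGraph.reachable_iff_reflTransGen] at h
    induction h with
    | refl => exact ⟨v, rfl, SimpleGraph.Reachable.refl _⟩
    | tail _ hbc ih =>
      obtain ⟨u, rfl, hu⟩ := ih
      rename_i c _
      rcases c with c | c
      · exact ⟨c, rfl, hu.trans (SimpleGraph.Adj.reachable hbc)⟩
      · exact hbc.elim
  · rintro ⟨u, rfl, hu⟩
    exact hu.map (⟨Sum.inl, fun h => h⟩ : G →g du G H)

lemma reach_du_inr {V W : Type} {G : SimpleGraph V} {H : SimpleGraph W} {v : W} {x : V ⊕ W} :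
    (du G H).Reachable (.inr v) x ↔ ∃ u, x = .inr u ∧ H.Reachable v u := by
  constructor
  · intro h
    rw [SimpleGraph.reachable_iff_reflTransGen] at h
    induction h with
    | refl => exact ⟨v, rfl, SimpleGraph.Reachable.refl _⟩
    | tail _ hbc ih =>
      obtain ⟨u, rfl, hu⟩ := ih
      rename_i c _
      rcases c with c | c
      · exact hbc.elim
      · exact ⟨c, rfl, hu.trans (SimpleGraph.Adj.reachable hbc)⟩
  · rintro ⟨u, rfl, hu⟩
    exact hu.map (⟨Sum.inr, fun h => h⟩ : H →g du G H)

/-- The component of a vertex as a graph. -/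
abbrev compG {V : Type} (G : SimpleGraph V) (v : V) : SimpleGraph {u // G.Reachable v u} :=
  G.comap Subtype.val

noncomputable def compL {V W : Type} (G : SimpleGraph V) (H : SimpleGraph W) (v : V) :
    compG G v ≃g compG (du G H) (.inl v) where
  toEquiv := Equiv.ofBijective (fun u => ⟨.inl u.1, reach_du_inl.2 ⟨u.1, rfl, u.2⟩⟩) (by
    constructor
    · intro x y h
      have := congrArg Subtype.val h
      simp at this
      exact Subtype.ext this
    · rintro ⟨x, hx⟩
      obtain ⟨u, rfl, hu⟩ := reach_du_inl.1 hx
      exact ⟨⟨u, hu⟩, rfl⟩)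
  map_rel_iff' := Iff.rfl

noncomputable def compR {V W : Type} (G : SimpleGraph V) (H : SimpleGraph W) (v : W) :
    compG H v ≃g compG (du G H) (.inr v) where
  toEquiv := Equiv.ofBijective (fun u => ⟨.inr u.1, reach_du_inr.2 ⟨u.1, rfl, u.2⟩⟩) (by
    constructor
    · intro x y h
      have := congrArg Subtype.val h
      simp at this
      exact Subtype.ext this
    · rintro ⟨x, hx⟩
      obtain ⟨u, rfl, hu⟩ := reach_du_inr.1 hx
      exact ⟨⟨u, hu⟩, rfl⟩)
  map_rel_iff' := Iff.rfl

/-- Isomorphism-equal relabeling of subtypes. -/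
def subIso {V : Type} (G : SimpleGraph V) {p q : V → Prop} (h : ∀ x, p x ↔ q x) :
    G.comap (Subtype.val : {x // p x} → V) ≃g G.comap (Subtype.val : {x // q x} → V) where
  toEquiv := Equiv.subtypeEquivRight h
  map_rel_iff' := Iff.rfl

section cls
variable {C : GraphClassOn} (hIso : ClassIsoInvariant C) (hDec : ClassDecomposable C)

lemma dec_iff (hIso : ClassIsoInvariant C) (hDec : ClassDecomposable C)
    {V : Type} [Finite V] (G : SimpleGraph V) :
    C V G ↔ ∀ v, C _ (compG G v) := by
  rw [hDec V G]
  have key : ∀ v, C _ (G.induce (G.connectedComponentMk v).supp) ↔ C _ (compG G v) := by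
    intro v
    refine hIso _ _ _ _ ⟨subIso G (fun x => ?_)⟩
    show x ∈ (G.connectedComponentMk v).supp ↔ _
    rw [SimpleGraph.ConnectedComponent.mem_supp_iff, SimpleGraph.ConnectedComponent.eq]
    exact SimpleGraph.reachable_comm
  constructor
  · intro h v; exact (key v).1 (h _)
  · intro h c
    induction c using SimpleGraph.ConnectedComponent.ind with
    | h v => exact (key v).2 (h v)

lemma class_du (hIso : ClassIsoInvariant C) (hDec : ClassDecomposable C)
    {V W : Type} [Finite V] [Finite W] (G : SimpleGraph V) (H : SimpleGraph W) :
    C _ (du G H) ↔ C _ G ∧ C _ H := by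
  rw [dec_iff hIso hDec (du G H), dec_iff hIso hDec G, dec_iff hIso hDec H, Sum.forall]
  refine and_congr (forall_congr' fun v => ?_) (forall_congr' fun v => ?_)
  · exact (hIso _ _ _ _ ⟨compL G H v⟩).symm
  · exact (hIso _ _ _ _ ⟨compR G H v⟩).symm

lemma class_br (hIso : ClassIsoInvariant C) (hAdd : ClassAddable C)
    {V W : Type} [Finite V] [Finite W] {G : SimpleGraph V} {H : SimpleGraph W}
    (hG : C _ G) (hH : C _ H) (r : V) (p : W) : C _ (br G H r p) := by
  have h := hAdd.2 _ (du G H) (.inl r) (.inr p) ((class_du hIso hAdd.1 G H).2 ⟨hG, hH⟩) (by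
    rw [reach_du_inl]; simp)
  convert h using 1
  ext x y
  rcases x with x | x <;> rcases y with y | y <;> simp [and_comm]

lemma conn_br {V W : Type} {G : SimpleGraph V} {H : SimpleGraph W}
    (hG : G.Connected) (hH : H.Connected) (r : V) (p : W) : (br G H r p).Connected := by
  have hl : ∀ u v, (br G H r p).Reachable (.inl u) (.inl v) := fun u v =>
    (hG.preconnected u v).map (⟨Sum.inl, fun h => h⟩ : G →g br G H r p)
  have hr : ∀ u v, (br G H r p).Reachable (.inr u) (.inr v) := fun u v =>
    (hH.preconnected u v).map (⟨Sum.inr, fun h => h⟩ : H →g br G H r p)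
  have hx : (br G H r p).Reachable (.inl r) (.inr p) :=
    SimpleGraph.Adj.reachable (show (br G H r p).Adj _ _ from ⟨rfl, rfl⟩)
  have ha : ∀ x, (br G H r p).Reachable (.inl r) x := by
    rintro (x | x)
    · exact hl _ _
    · exact hx.trans (hr _ _)
  exact { preconnected := fun x y => (ha x).symm.trans (ha y), nonempty := ⟨.inl r⟩ }

lemma conn_iso {V W : Type} {G : SimpleGraph V} {H : SimpleGraph W} (e : G ≃g H) :
    G.Connected ↔ H.Connected := e.connected_iff

lemma glueN_class (hIso : ClassIsoInvariant C) (hAdd : ClassAddable C)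
    {V W : Type} [Finite V] [Finite W] {G : SimpleGraph V} {T : SimpleGraph W} (h : V) (t : W)
    (hG : C _ G) (hGc : G.Connected) (hT : C _ T) (hTc : T.Connected) (n : ℕ) :
    C _ (glueN G h T t (Fin n)) ∧ (glueN G h T t (Fin n)).Connected := by
  induction n with
  | zero =>
    have e : G ≃g glueN G h T t (Fin 0) :=
      { toEquiv := (Equiv.sumEmpty V (Fin 0 × W)).symm
        map_rel_iff' := Iff.rfl }
    exact ⟨(hIso _ _ _ _ ⟨e⟩).1 hG, (conn_iso e).1 hGc⟩
  | succ n ih =>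
    have e : br (glueN G h T t (Fin n)) T (.inl h) t ≃g glueN G h T t (Fin (n + 1)) :=
      (glueNOption G h T t (Fin n)).trans (glueNIso G h T t (finSuccEquiv n).symm)
    exact ⟨(hIso _ _ _ _ ⟨e⟩).1 (class_br hIso hAdd ih.1 hT _ _),
      (conn_iso e).1 (conn_br ih.2 hTc _ _)⟩

/-- `τ` is the type of a connected rooted graph in the class. -/
def RealTy (C : GraphClassOn) (k : ℕ) (τ : Ty k Unit) : Prop :=
  ∃ (V : Type) (_ : Finite V) (G : SimpleGraph V) (r : V), C V G ∧ G.Connected ∧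
    tp k G (fun _ : Unit => r) = τ

lemma exists_universal_aux (hIso : ClassIsoInvariant C) (hAdd : ClassAddable C)
    (h1 : ∃ G : SimpleGraph (Fin 1), C (Fin 1) G) (k : ℕ) (S : Finset (Ty k Unit)) :
    ∃ (V : Type) (_ : Finite V) (M : SimpleGraph V) (r : V), C V M ∧ M.Connected ∧
      ∀ τ ∈ S, RealTy C k τ → Abs k M r τ := by
  classical
  induction S using Finset.induction_on with
  | empty =>
    obtain ⟨G, hG⟩ := h1
    refine ⟨Fin 1, inferInstance, G, 0, hG, ?_, by simp⟩
    exact { preconnected := fun x y => by rw [Subsingleton.elim x y], nonempty := ⟨0⟩ }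
  | insert τ S _ ih =>
    obtain ⟨V, _, M, r, hM, hMc, hS⟩ := ih
    by_cases hτ : RealTy C k τ
    · obtain ⟨W, _, T, t, hT, hTc, rfl⟩ := hτ
      obtain ⟨hc, hcc⟩ := glueN_class hIso hAdd r t hM hMc hT hTc k
      refine ⟨_, inferInstance, glueN M r T t (Fin k), .inl r, hc, hcc, ?_⟩
      intro σ hσ hσr
      rcases Finset.mem_insert.1 hσ with rfl | hσ
      · exact abs_glueN M r T t
      · exact (hS σ hσ hσr).glue _ _
    · refine ⟨V, inferInstance, M, r, hM, hMc, ?_⟩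
      intro σ hσ hσr
      rcases Finset.mem_insert.1 hσ with rfl | hσ
      · exact (hτ hσr).elim
      · exact hS σ hσ hσr

/-- Universality of a rooted graph. -/
lemma universal {k : ℕ} {VM V : Type} [Finite VM] [Finite V] {M : SimpleGraph VM} {r : VM}
    (hM : C VM M) (hMc : M.Connected) (hU : ∀ τ, RealTy C k τ → Abs k M r τ)
    {G : SimpleGraph V} (hG : C V G) (hGc : G.Connected) {R : Type} {K : SimpleGraph R} {v : R}
    (e : br M K r v ≃g G) :
    EF k G M (Empty.elim : Empty → V) (Empty.elim : Empty → VM) := by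
  set w := e (.inl r) with hw
  have hGA : ∀ τ, RealTy C k τ → Abs k G w τ := fun τ hτ => ((hU τ hτ).glue K _).iso e
  have h1 := hGA _ ⟨VM, inferInstance, M, r, hM, hMc, rfl⟩ VM M r rfl
  have h2 := hU _ ⟨V, inferInstance, G, w, hG, hGc, rfl⟩ V G w rfl
  have h1' := h1.reindex (Empty.elim : Empty → Unit)
  have h2' := h2.reindex (Empty.elim : Empty → Unit)
  have h3 := EF.of_iso (k := k) (brSwap G M w r) (Empty.elim : Empty → _)
  have h4 := (h1'.symm.trans ?_).trans h2'
  · convert h4 using 1 <;> · funext x; exact x.elim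
  · convert h3 using 1 <;> · funext x; exact x.elim

end cls

end FOC

namespace FOC

lemma card_class {P : GraphClassOn} (hP : ClassIsoInvariant P) (V : Type) [Finite V] :
    Nat.card {G : SimpleGraph V // P V G} = classCount P (Nat.card V) := by
  have e : V ≃ Fin (Nat.card V) := Finite.equivFin V
  refine Nat.card_congr (e.simpleGraph.subtypeEquiv fun G => ?_)
  exact hP _ _ _ _ ⟨(SimpleGraph.Iso.comap e.symm G).symm⟩

/-- No edges leave `W`. -/
def Closed {V : Type} (W : Finset V) (G : SimpleGraph V) : Prop :=
  ∀ x y, x ∈ W → y ∉ W → ¬ G.Adj x y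

/-- Inside part. -/
abbrev ins {V : Type} (W : Finset V) (G : SimpleGraph V) : SimpleGraph {x // x ∈ W} :=
  G.comap Subtype.val
/-- Outside part. -/
abbrev outs {V : Type} (W : Finset V) (G : SimpleGraph V) : SimpleGraph {x // x ∉ W} :=
  G.comap Subtype.val

open Classical in
noncomputable def closedIso {V : Type} {W : Finset V} {G : SimpleGraph V} (h : Closed W G) :
    du (ins W G) (outs W G) ≃g G where
  toEquiv := Equiv.sumCompl (· ∈ W)
  map_rel_iff' := by
    rintro (⟨a, ha⟩ | ⟨a, ha⟩) (⟨b, hb⟩ | ⟨b, hb⟩)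
    · simp
    · simpa using h a b ha hb
    · simpa using fun h' : G.Adj a b => h b a hb ha h'.symm
    · simp

@[simp] lemma closedIso_inl {V : Type} {W : Finset V} {G : SimpleGraph V} (h : Closed W G) (x) :
    closedIso h (.inl x) = x.1 := rfl
@[simp] lemma closedIso_inr {V : Type} {W : Finset V} {G : SimpleGraph V} (h : Closed W G) (x) :
    closedIso h (.inr x) = x.1 := rfl

open Classical in
/-- Splitting a graph along a closed set. -/
noncomputable def splitEquiv {V : Type} (W : Finset V) :
    {G : SimpleGraph V // Closed W G} ≃ SimpleGraph {x // x ∈ W} × SimpleGraph {x // x ∉ W} where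
  toFun G := (ins W G.1, outs W G.1)
  invFun p := ⟨(du p.1 p.2).comap (Equiv.sumCompl (· ∈ W)).symm, by
    intro x y hx hy
    simp [Equiv.sumCompl_symm_apply_of_pos hx, Equiv.sumCompl_symm_apply_of_neg hy]⟩
  left_inv := by
    rintro ⟨G, hG⟩
    apply Subtype.ext
    ext x y
    simp only [SimpleGraph.comap_adj]
    by_cases hx : x ∈ W <;> by_cases hy : y ∈ W
    · simp [Equiv.sumCompl_symm_apply_of_pos hx, Equiv.sumCompl_symm_apply_of_pos hy]
    · simpa [Equiv.sumCompl_symm_apply_of_pos hx, Equiv.sumCompl_symm_apply_of_neg hy] using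
        hG x y hx hy
    · simpa [Equiv.sumCompl_symm_apply_of_neg hx, Equiv.sumCompl_symm_apply_of_pos hy] using
        fun h : G.Adj x y => hG y x hy hx h.symm
    · simp [Equiv.sumCompl_symm_apply_of_neg hx, Equiv.sumCompl_symm_apply_of_neg hy]
  right_inv := by
    rintro ⟨G, H⟩
    refine Prod.ext ?_ ?_
    · ext ⟨x, hx⟩ ⟨y, hy⟩
      simp [Equiv.sumCompl_symm_apply_of_pos hx, Equiv.sumCompl_symm_apply_of_pos hy]
    · ext ⟨x, hx⟩ ⟨y, hy⟩
      simp [Equiv.sumCompl_symm_apply_of_neg hx, Equiv.sumCompl_symm_apply_of_neg hy]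

lemma split_card {P Q : GraphClassOn} (hP : ClassIsoInvariant P) (hQ : ClassIsoInvariant Q)
    {n : ℕ} (W : Finset (Fin n)) :
    Nat.card {G : SimpleGraph (Fin n) // Closed W G ∧ P _ (ins W G) ∧ Q _ (outs W G)} =
      classCount P W.card * classCount Q (n - W.card) := by
  have e : {G : SimpleGraph (Fin n) // Closed W G ∧ P _ (ins W G) ∧ Q _ (outs W G)} ≃
      {G : SimpleGraph {x // x ∈ W} // P _ G} × {G : SimpleGraph {x // x ∉ W} // Q _ G} := by
    refine Equiv.trans (Equiv.subtypeSubtypeEquivSubtypeInter (Closed W)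
      (fun G => P _ (ins W G) ∧ Q _ (outs W G))).symm ?_
    refine Equiv.trans ?_ Equiv.subtypeProdEquivProd
    exact (splitEquiv W).subtypeEquiv fun G => Iff.rfl
  rw [Nat.card_congr e, Nat.card_prod, card_class hP, card_class hQ]
  congr 2
  · simp
  · classical
    rw [Nat.card_eq_fintype_card, Fintype.card_subtype_compl]; simp

/-- Size of the component of `v`. -/
noncomputable def csize {V : Type} (G : SimpleGraph V) (v : V) : ℕ :=
  Nat.card {u // G.Reachable v u}

lemma csize_iso {V W : Type} {G : SimpleGraph V} {H : SimpleGraph W} (e : G ≃g H) (v : V) :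
    csize H (e v) = csize G v :=
  (Nat.card_congr (e.toEquiv.subtypeEquiv fun u => (e.reachable_iff (u := v) (v := u)).symm)).symm

lemma csize_du_inl {V W : Type} (G : SimpleGraph V) (H : SimpleGraph W) (v : V) :
    csize (du G H) (.inl v) = csize G v := (Nat.card_congr (compL G H v).toEquiv).symm

lemma csize_du_inr {V W : Type} (G : SimpleGraph V) (H : SimpleGraph W) (v : W) :
    csize (du G H) (.inr v) = csize H v := (Nat.card_congr (compR G H v).toEquiv).symm

lemma csize_ins {V : Type} {W : Finset V} {G : SimpleGraph V} (h : Closed W G) (x) :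
    csize (ins W G) x = csize G x.1 := by
  rw [← csize_du_inl (ins W G) (outs W G), ← csize_iso (closedIso h)]; rfl

lemma csize_outs {V : Type} {W : Finset V} {G : SimpleGraph V} (h : Closed W G) (x) :
    csize (outs W G) x = csize G x.1 := by
  rw [← csize_du_inr (ins W G) (outs W G), ← csize_iso (closedIso h)]; rfl

lemma csize_eq_of_reach {V : Type} {G : SimpleGraph V} {u v : V} (h : G.Reachable u v) :
    csize G u = csize G v :=
  Nat.card_congr (Equiv.subtypeEquivRight fun _ => ⟨fun h' => h.symm.trans h', fun h' => h.trans h'⟩)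

lemma class_closed {C : GraphClassOn} (hIso : ClassIsoInvariant C) (hDec : ClassDecomposable C)
    {V : Type} [Finite V] {W : Finset V} {G : SimpleGraph V} (h : Closed W G) :
    C V G ↔ C _ (ins W G) ∧ C _ (outs W G) := by
  rw [← class_du hIso hDec]
  exact (hIso _ _ _ _ ⟨closedIso h⟩).symm

/-- Vertices in components of size at most `K`. -/
noncomputable def smallSet {V : Type} [Finite V] (K : ℕ) (G : SimpleGraph V) : Finset V :=
  (Set.toFinite {v | csize G v ≤ K}).toFinset

@[simp] lemma mem_smallSet {V : Type} [Finite V] {K : ℕ} {G : SimpleGraph V} {v : V} :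
    v ∈ smallSet K G ↔ csize G v ≤ K := by simp [smallSet]

lemma smallSet_closed {V : Type} [Finite V] (K : ℕ) (G : SimpleGraph V) :
    Closed (smallSet K G) G := by
  intro x y hx hy h
  rw [mem_smallSet] at hx hy
  rw [csize_eq_of_reach h.reachable] at hx
  exact hy hx

/-- All components small, with a further property `Q`. -/
def SmallC (C Q : GraphClassOn) (K : ℕ) : GraphClassOn :=
  fun V _ G => C V G ∧ (∀ v, csize G v ≤ K) ∧ Q V G
/-- All components large. -/
def BigC (C : GraphClassOn) (K : ℕ) : GraphClassOn := fun V _ G => C V G ∧ ∀ v, K < csize G v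
/-- Small connected graphs. -/
def ConnC (C : GraphClassOn) (K : ℕ) : GraphClassOn :=
  fun V _ G => C V G ∧ G.Connected ∧ Nat.card V ≤ K
/-- Trivial class. -/
def TrueC : GraphClassOn := fun _ _ _ => True

lemma forall_csize_iso {V W : Type} {G : SimpleGraph V} {H : SimpleGraph W} (e : G ≃g H)
    (p : ℕ → Prop) : (∀ v, p (csize G v)) ↔ ∀ v, p (csize H v) := by
  constructor
  · intro h v
    have := h (e.symm v)
    rw [← csize_iso e] at this
    simpa using this
  · intro h v
    rw [← csize_iso e]; exact h _

lemma iso_SmallC {C Q : GraphClassOn} (hC : ClassIsoInvariant C) (hQ : ClassIsoInvariant Q) (K : ℕ) :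
    ClassIsoInvariant (SmallC C Q K) := by
  rintro V W _ _ G H ⟨e⟩
  exact and_congr (hC _ _ _ _ ⟨e⟩) (and_congr (forall_csize_iso e (· ≤ K)) (hQ _ _ _ _ ⟨e⟩))

lemma iso_BigC {C : GraphClassOn} (hC : ClassIsoInvariant C) (K : ℕ) :
    ClassIsoInvariant (BigC C K) := by
  rintro V W _ _ G H ⟨e⟩
  exact and_congr (hC _ _ _ _ ⟨e⟩) (forall_csize_iso e (K < ·))

lemma iso_ConnC {C : GraphClassOn} (hC : ClassIsoInvariant C) (K : ℕ) :
    ClassIsoInvariant (ConnC C K) := by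
  rintro V W _ _ G H ⟨e⟩
  exact and_congr (hC _ _ _ _ ⟨e⟩) (and_congr (conn_iso e) (by rw [Nat.card_congr e.toEquiv]))

lemma iso_TrueC : ClassIsoInvariant TrueC := fun _ _ _ _ _ _ _ => Iff.rfl

lemma card_fiber {α β : Type} [Finite α] [Fintype β] (f : α → β) :
    Nat.card α = ∑ b, Nat.card {a // f a = b} := by
  rw [← Nat.card_sigma]
  exact Nat.card_congr (Equiv.sigmaFiberEquiv f).symm

lemma count_small {C Q : GraphClassOn} (hC : ClassIsoInvariant C) (hDec : ClassDecomposable C)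
    (hQ : ClassIsoInvariant Q) (K n : ℕ) :
    Nat.card {G : SimpleGraph (Fin n) // C _ G ∧ Q _ (ins (smallSet K G) G)} =
      ∑ W : Finset (Fin n), classCount (SmallC C Q K) W.card * classCount (BigC C K) (n - W.card) := by
  rw [card_fiber (fun G => smallSet K G.1)]
  refine Finset.sum_congr rfl fun W _ => ?_
  rw [← split_card (iso_SmallC hC hQ K) (iso_BigC hC K)]
  refine Nat.card_congr ((Equiv.subtypeSubtypeEquivSubtypeInter
    (fun G : SimpleGraph (Fin n) => C _ G ∧ Q _ (ins (smallSet K G) G))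
    (fun G => smallSet K G = W)).trans (Equiv.subtypeEquivRight fun G => ?_))
  constructor
  · rintro ⟨⟨h1, h2⟩, rfl⟩
    have hc := smallSet_closed K G
    have := (class_closed hC hDec hc).1 h1
    refine ⟨hc, ⟨this.1, fun v => ?_, h2⟩, this.2, fun v => ?_⟩
    · rw [csize_ins hc]; exact mem_smallSet.1 v.2
    · rw [csize_outs hc]; have := v.2; simp only [mem_smallSet] at this; omega
  · rintro ⟨hc, ⟨h1, h2, h3⟩, h4, h5⟩
    have : smallSet K G = W := by
      ext v
      rw [mem_smallSet]
      constructor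
      · intro hv
        by_contra hvW
        have := h5 ⟨v, hvW⟩
        rw [csize_outs hc] at this
        simp only at this
        omega
      · intro hv
        have := h2 ⟨v, hv⟩
        rwa [csize_ins hc] at this
    subst this
    exact ⟨⟨(class_closed hC hDec hc).2 ⟨h1, h4⟩, h3⟩, rfl⟩

/-- Component as a finset. -/
noncomputable def compSet {V : Type} [Finite V] (G : SimpleGraph V) (v : V) : Finset V :=
  (Set.toFinite {u | G.Reachable v u}).toFinset

@[simp] lemma mem_compSet {V : Type} [Finite V] {G : SimpleGraph V} {u v : V} :
    u ∈ compSet G v ↔ G.Reachable v u := by simp [compSet]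

lemma compSet_closed {V : Type} [Finite V] (G : SimpleGraph V) (v : V) :
    Closed (compSet G v) G := by
  intro x y hx hy h
  rw [mem_compSet] at hx hy
  exact hy (hx.trans h.reachable)

lemma card_compSet {V : Type} [Finite V] (G : SimpleGraph V) (v : V) :
    (compSet G v).card = csize G v := by
  rw [csize, ← Nat.card_congr (Equiv.subtypeEquivRight (fun x => mem_compSet (G := G) (v := v))),
    Nat.card_eq_fintype_card, Fintype.card_coe]

lemma reach_ins {V : Type} {W : Finset V} {G : SimpleGraph V} (h : Closed W G) {x y}
    (hx : x ∈ W) : G.Reachable x y ↔ ∃ hy : y ∈ W, (ins W G).Reachable ⟨x, hx⟩ ⟨y, hy⟩ := by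
  constructor
  · intro hr
    have h1 : (du (ins W G) (outs W G)).Reachable (.inl ⟨x, hx⟩) ((closedIso h).symm y) := by
      rw [← (closedIso h).reachable_iff]; simpa using hr
    obtain ⟨⟨u, hu⟩, h2, h3⟩ := reach_du_inl.1 h1
    have : y = u := by
      have := congrArg (closedIso h) h2
      simpa using this
    subst this
    exact ⟨hu, h3⟩
  · rintro ⟨hy, hr⟩
    exact hr.map (⟨Subtype.val, fun h => h⟩ : ins W G →g G)

lemma compSet_conn {V : Type} [Finite V] (G : SimpleGraph V) (v : V) :
    (ins (compSet G v) G).Connected := by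
  have hv : v ∈ compSet G v := by simp
  have : ∀ x, (ins (compSet G v) G).Reachable ⟨v, hv⟩ x := by
    rintro ⟨x, hx⟩
    obtain ⟨_, h⟩ := (reach_ins (compSet_closed G v) hv).1 (mem_compSet.1 hx)
    exact h
  exact { preconnected := fun x y => (this x).symm.trans (this y), nonempty := ⟨⟨v, hv⟩⟩ }

lemma csize_le_card {V : Type} [Finite V] (G : SimpleGraph V) (v : V) : csize G v ≤ Nat.card V :=
  Nat.card_le_card_of_injective Subtype.val Subtype.val_injective

lemma count_ode {C : GraphClassOn} (hC : ClassIsoInvariant C) (hDec : ClassDecomposable C)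
    (K n : ℕ) :
    n * classCount (SmallC C TrueC K) n =
      ∑ W : Finset (Fin n), (W.card * classCount (ConnC C K) W.card) *
        classCount (SmallC C TrueC K) (n - W.card) := by
  have h0 : n * classCount (SmallC C TrueC K) n =
      Nat.card (Fin n × {G : SimpleGraph (Fin n) // SmallC C TrueC K _ G}) := by
    rw [Nat.card_prod]; simp [classCount]
  rw [h0, card_fiber (fun p => compSet p.2.1 p.1)]
  refine Finset.sum_congr rfl fun W _ => ?_
  have hW : W.card = Nat.card {x // x ∈ W} := by simp
  rw [mul_assoc, ← split_card (iso_ConnC hC K) (iso_SmallC hC iso_TrueC K)]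
  rw [hW, ← Nat.card_prod]
  have key : ∀ (v : Fin n) (G : SimpleGraph (Fin n)),
      (SmallC C TrueC K _ G ∧ compSet G v = W) ↔ (v ∈ W ∧ (Closed W G ∧ ConnC C K _ (ins W G) ∧
        SmallC C TrueC K _ (outs W G))) := by
    intro v G
    constructor
    · rintro ⟨⟨h1, h2, -⟩, rfl⟩
      have hc := compSet_closed G v
      have h3 := (class_closed hC hDec hc).1 h1
      refine ⟨by simp, hc, ⟨h3.1, compSet_conn G v, ?_⟩, h3.2, fun u => ?_, trivial⟩
      · rw [← hW, card_compSet]; exact h2 v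
      · rw [csize_outs hc]; exact h2 _
    · rintro ⟨hv, hc, ⟨h1, h2, h3⟩, h4, h5, -⟩
      refine ⟨⟨(class_closed hC hDec hc).2 ⟨h1, h4⟩, fun u => ?_, trivial⟩, ?_⟩
      · by_cases hu : u ∈ W
        · have := csize_ins hc ⟨u, hu⟩
          rw [← this]
          exact (csize_le_card _ _).trans h3
        · have := csize_outs hc ⟨u, hu⟩
          rw [← this]
          exact h5 _
      · ext u
        rw [mem_compSet, reach_ins hc hv]
        exact ⟨fun ⟨h, _⟩ => h, fun h => ⟨h, h2.preconnected _ _⟩⟩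
  refine Nat.card_congr
    { toFun := fun p => (⟨p.1.1, ((key p.1.1 p.1.2.1).1 ⟨p.1.2.2, p.2⟩).1⟩,
        ⟨p.1.2.1, ((key p.1.1 p.1.2.1).1 ⟨p.1.2.2, p.2⟩).2⟩)
      invFun := fun q => ⟨(q.1.1, ⟨q.2.1, ((key q.1.1 q.2.1).2 ⟨q.1.2, q.2.2⟩).1⟩),
        ((key q.1.1 q.2.1).2 ⟨q.1.2, q.2.2⟩).2⟩
      left_inv := fun p => rfl
      right_inv := fun q => rfl }

end FOC

namespace FOC

open PowerSeries in
/-- Exponential generating function. -/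
noncomputable def egf (f : ℕ → ℕ) : PowerSeries ℝ := PowerSeries.mk fun n => (f n : ℝ) / n.factorial

lemma coeff_egf (f : ℕ → ℕ) (n : ℕ) : PowerSeries.coeff n (egf f) = (f n : ℝ) / n.factorial := by
  simp [egf]

lemma egf_mul (f g : ℕ → ℕ) (n : ℕ) :
    ((∑ W : Finset (Fin n), f W.card * g (n - W.card) : ℕ) : ℝ) / n.factorial =
      PowerSeries.coeff n (egf f * egf g) := by
  have := Finset.sum_powerset_apply_card (fun k => f k * g (n - k)) (x := (Finset.univ : Finset (Fin n)))
  simp only [Finset.powerset_univ, Finset.card_univ, Fintype.card_fin] at this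
  rw [this, PowerSeries.coeff_mul, Finset.Nat.sum_antidiagonal_eq_sum_range_succ_mk]
  push_cast
  rw [Finset.sum_div]
  refine Finset.sum_congr rfl fun k hk => ?_
  have hk : k ≤ n := by simpa [Nat.lt_succ_iff] using hk
  rw [coeff_egf, coeff_egf, nsmul_eq_mul]
  push_cast
  rw [Nat.cast_choose ℝ hk]
  have h1 : (n.factorial : ℝ) ≠ 0 := by exact_mod_cast n.factorial_ne_zero
  have h2 : (k.factorial : ℝ) ≠ 0 := by exact_mod_cast k.factorial_ne_zero
  have h3 : ((n-k).factorial : ℝ) ≠ 0 := by exact_mod_cast (n-k).factorial_ne_zero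
  field_simp

lemma sum_antidiag_le (β g : ℕ → ℝ) (hβ : ∀ n, 0 ≤ β n) (hg : ∀ n, 0 ≤ g n) (N : ℕ) :
    ∑ n ∈ Finset.range N, ∑ p ∈ Finset.HasAntidiagonal.antidiagonal n, β p.1 * g p.2 ≤
      (∑ i ∈ Finset.range N, β i) * ∑ j ∈ Finset.range N, g j := by
  rw [Finset.sum_mul_sum, Finset.sum_sigma', ← Finset.sum_product']
  rw [← Finset.sum_image (s := (Finset.range N).sigma fun n => Finset.HasAntidiagonal.antidiagonal n)
    (g := fun x : (Σ _ : ℕ, ℕ × ℕ) => x.2) (f := fun p : ℕ × ℕ => β p.1 * g p.2)]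
  · refine Finset.sum_le_sum_of_subset_of_nonneg ?_ fun p _ _ => mul_nonneg (hβ _) (hg _)
    intro p hp
    simp only [Finset.mem_image, Finset.mem_sigma, Finset.mem_range, Finset.HasAntidiagonal.mem_antidiagonal] at hp
    obtain ⟨⟨n, q⟩, ⟨h1, h2⟩, rfl⟩ := hp
    simp only [Finset.mem_product, Finset.mem_range]
    simp only at h1 h2
    omega
  · rintro ⟨n, q⟩ h ⟨m, r⟩ h' e
    simp at h h' e
    obtain rfl := e
    obtain rfl : n = m := by omega
    rfl

lemma summable_of_ode (β g : ℕ → ℝ) (hβ : ∀ n, 0 ≤ β n) (hg : ∀ n, 0 ≤ g n) (K : ℕ)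
    (hK : ∀ n, K < n → β n = 0)
    (h : ∀ n, n * g n ≤ ∑ p ∈ Finset.HasAntidiagonal.antidiagonal n, β p.1 * g p.2) : Summable g := by
  set B := ∑ i ∈ Finset.range (K + 1), β i with hB
  have hB0 : 0 ≤ B := Finset.sum_nonneg fun _ _ => hβ _
  obtain ⟨L, hL⟩ := exists_nat_gt (B + 1)
  set S := ∑ i ∈ Finset.range L, (L : ℝ) * g i
  refine summable_of_sum_range_le (c := S) hg fun N => ?_
  have hS0 : 0 ≤ ∑ n ∈ Finset.range N, g n := Finset.sum_nonneg fun _ _ => hg _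
  have h1 : ∑ n ∈ Finset.range N, (n : ℝ) * g n ≤ B * ∑ n ∈ Finset.range N, g n := by
    refine (Finset.sum_le_sum fun n _ => h n).trans ((sum_antidiag_le β g hβ hg N).trans ?_)
    refine mul_le_mul_of_nonneg_right ?_ hS0
    have : ∑ i ∈ Finset.range N, β i ≤ ∑ i ∈ Finset.range (max N (K+1)), β i :=
      Finset.sum_le_sum_of_subset_of_nonneg (by simp) fun _ _ _ => hβ _
    refine this.trans (le_of_eq ?_)
    refine (Finset.sum_subset (by simp) fun i _ hi => hK i ?_).symm
    simp at hi; omega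
  have h2 : ∑ n ∈ Finset.range N, (L : ℝ) * g n ≤
      ∑ n ∈ Finset.range N, (n : ℝ) * g n + S := by
    have : ∑ n ∈ Finset.range N, (if n < L then (L : ℝ) * g n else 0) ≤ S := by
      rw [← Finset.sum_filter]
      refine Finset.sum_le_sum_of_subset_of_nonneg (fun i hi => ?_)
        fun _ _ _ => mul_nonneg (Nat.cast_nonneg _) (hg _)
      simp at hi ⊢; exact hi.2
    refine le_trans ?_ (add_le_add_right this _)
    rw [← Finset.sum_add_distrib]
    refine Finset.sum_le_sum fun n _ => ?_
    split_ifs with hn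
    · have := mul_nonneg (Nat.cast_nonneg (α := ℝ) n) (hg n); linarith
    · rw [add_zero]
      exact mul_le_mul_of_nonneg_right (by exact_mod_cast not_lt.1 hn) (hg n)
  rw [← Finset.mul_sum] at h2
  nlinarith

lemma ratio_tendsto {a : ℕ → ℝ} (ha : ∀ n, 0 < a n) {γ : ℝ} (hγ : γ ≠ 0)
    (h : Tendsto (fun n => a (n + 1) / a n) atTop (𝓝 γ)) (j : ℕ) :
    Tendsto (fun n => a n / a (n + j)) atTop (𝓝 (γ⁻¹ ^ j)) := by
  induction j with
  | zero => simp [div_self (ha _).ne']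
  | succ j ih =>
    have h1 := h.inv₀ hγ
    have h2 := (tendsto_add_atTop_iff_nat 1).2 ih
    rw [pow_succ']
    refine (h1.mul h2).congr fun n => ?_
    have := (ha n).ne'
    have := (ha (n+1)).ne'
    have e : n + 1 + j = n + (j + 1) := by ring
    rw [e]
    field_simp

lemma conv_tendsto {a h : ℕ → ℝ} (ha : ∀ n, 0 < a n) (hm : Monotone a) {γ : ℝ} (hγ : γ ≠ 0)
    (hr : Tendsto (fun n => a (n + 1) / a n) atTop (𝓝 γ)) (hs : Summable fun n => |h n|) :
    ∃ p, Tendsto (fun n => (∑ p ∈ Finset.HasAntidiagonal.antidiagonal n, h p.1 * a p.2) / a n) atTop (𝓝 p) := by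
  refine ⟨∑' j, h j * γ⁻¹ ^ j, ?_⟩
  have := tendsto_tsum_of_dominated_convergence (𝓕 := atTop)
    (f := fun n j => if j ≤ n then h j * (a (n - j) / a n) else 0)
    (g := fun j => h j * γ⁻¹ ^ j) (bound := fun j => |h j|) hs ?_ ?_
  · refine this.congr fun n => ?_
    rw [Finset.Nat.sum_antidiagonal_eq_sum_range_succ_mk, Finset.sum_div,
      tsum_eq_sum (s := Finset.range (n+1))]
    · refine Finset.sum_congr rfl fun k hk => ?_
      rw [if_pos (by simpa [Nat.lt_succ_iff] using hk)]
      ring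
    · intro b hb
      rw [if_neg]; simp at hb; omega
  · intro j
    rw [← tendsto_add_atTop_iff_nat j]
    refine ((ratio_tendsto ha hγ hr j).const_mul (h j)).congr fun n => ?_
    simp
  · refine Eventually.of_forall fun n j => ?_
    split_ifs
    · rw [norm_mul, Real.norm_eq_abs]
      refine mul_le_of_le_one_right (abs_nonneg _) ?_
      rw [Real.norm_eq_abs, abs_of_nonneg (div_nonneg (ha _).le (ha _).le), div_le_one (ha _)]
      exact hm (Nat.sub_le _ _)
    · simp

lemma class_zero {C : GraphClassOn} (hDec : ClassDecomposable C) {V : Type} [Finite V] [IsEmpty V]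
    (G : SimpleGraph V) : C V G := by
  rw [hDec]
  intro c
  obtain ⟨v, rfl⟩ := c.exists_rep
  exact isEmptyElim v

/-- Normalised counts. -/
noncomputable def an (C : GraphClassOn) (n : ℕ) : ℝ := (classCount C n : ℝ) / n.factorial

lemma count_pos {C : GraphClassOn} (hDec : ClassDecomposable C)
    (hne : ∀ n : ℕ, 1 ≤ n → ∃ G : SimpleGraph (Fin n), C (Fin n) G) (n : ℕ) :
    0 < classCount C n := by
  rw [classCount, Nat.card_pos_iff]
  refine ⟨?_, inferInstance⟩
  rcases Nat.eq_zero_or_pos n with rfl | h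
  · exact ⟨⟨⊥, class_zero hDec _⟩⟩
  · obtain ⟨G, hG⟩ := hne n h
    exact ⟨⟨G, hG⟩⟩

lemma an_pos {C : GraphClassOn} (hDec : ClassDecomposable C)
    (hne : ∀ n : ℕ, 1 ≤ n → ∃ G : SimpleGraph (Fin n), C (Fin n) G) (n : ℕ) :
    0 < an C n := by
  have := count_pos hDec hne n
  have := n.factorial_pos
  unfold an; positivity

lemma count_succ {C : GraphClassOn} (hIso : ClassIsoInvariant C) (hAdd : ClassAddable C)
    (hne : ∀ n : ℕ, 1 ≤ n → ∃ G : SimpleGraph (Fin n), C (Fin n) G) (n : ℕ) :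
    (n + 1) * classCount C n ≤ classCount C (n + 1) := by
  obtain ⟨P, hP⟩ := hne 1 le_rfl
  have h1 : classCount C (n + 1) = Nat.card {G : SimpleGraph (Fin n ⊕ Fin 1) // C _ G} := by
    rw [card_class hIso]; simp
  have h2 : (n + 1) * classCount C n =
      Nat.card (Option (Fin n) × {G : SimpleGraph (Fin n) // C _ G}) := by
    rw [Nat.card_prod]; simp [classCount]
  rw [h1, h2]
  refine Nat.card_le_card_of_injective
    (fun p => ⟨glue p.2.1 P (fun x _ => some x = p.1), ?_⟩) ?_
  · obtain ⟨o, G, hG⟩ := p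
    rcases o with _ | r
    · have := (class_du hIso hAdd.1 G P).2 ⟨hG, hP⟩
      convert this using 2
      ext x y
      simp
    · have := class_br hIso hAdd hG hP r 0
      convert this using 2
      ext x y
      simp [Subsingleton.elim y 0]
  · rintro ⟨o, G, hG⟩ ⟨o', G', hG'⟩ h
    have h : glue G P (fun x _ => some x = o) = glue G' P (fun x _ => some x = o') :=
      congrArg Subtype.val h
    have e1 : G = G' := by
      ext x y
      have := congrArg (fun H => H.Adj (.inl x) (.inl y)) h
      simpa using this
    subst e1
    have e2 : ∀ x, some x = o ↔ some x = o' := by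
      intro x
      have := congrArg (fun H => H.Adj (.inl x) (.inr 0)) h
      simpa using this
    have e3 : o = o' := Option.ext fun x => by
      have := e2 x
      constructor
      · intro hh; exact (this.1 hh.symm).symm
      · intro hh; exact (this.2 hh.symm).symm
    subst e3
    rfl

lemma an_mono {C : GraphClassOn} (hIso : ClassIsoInvariant C) (hAdd : ClassAddable C)
    (hne : ∀ n : ℕ, 1 ≤ n → ∃ G : SimpleGraph (Fin n), C (Fin n) G) : Monotone (an C) := by
  refine monotone_nat_of_le_succ fun n => ?_
  unfold an
  have h := count_succ hIso hAdd hne n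
  have h' : ((n : ℝ) + 1) * classCount C n ≤ classCount C (n + 1) := by exact_mod_cast h
  rw [Nat.factorial_succ]
  push_cast
  have : (0 : ℝ) < n.factorial := by exact_mod_cast n.factorial_pos
  rw [div_le_div_iff₀ this (by positivity)]
  nlinarith

lemma an_ratio {C : GraphClassOn} (hIso : ClassIsoInvariant C) (hAdd : ClassAddable C)
    (hSmooth : ClassSmooth C)
    (hne : ∀ n : ℕ, 1 ≤ n → ∃ G : SimpleGraph (Fin n), C (Fin n) G) :
    ∃ γ : ℝ, γ ≠ 0 ∧ Tendsto (fun n => an C (n + 1) / an C n) atTop (𝓝 γ) := by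
  obtain ⟨γ, h⟩ := hSmooth
  rw [← tendsto_add_atTop_iff_nat 1] at h
  have h' : Tendsto (fun n => an C (n + 1) / an C n) atTop (𝓝 γ) := by
    refine h.congr fun n => ?_
    unfold an
    have : (0 : ℝ) < n.factorial := by exact_mod_cast n.factorial_pos
    have : (0 : ℝ) < classCount C n := by exact_mod_cast count_pos hAdd.1 hne n
    rw [Nat.factorial_succ, Nat.add_sub_cancel]
    push_cast
    field_simp
  refine ⟨γ, ?_, h'⟩
  have : 1 ≤ γ := ge_of_tendsto' h' fun n => by
    rw [one_le_div (an_pos hAdd.1 hne n)]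
    exact an_mono hIso hAdd hne n.le_succ
  linarith

lemma egf_small {C : GraphClassOn} (hC : ClassIsoInvariant C) (hDec : ClassDecomposable C) (K : ℕ) :
    egf (classCount C) = egf (classCount (SmallC C TrueC K)) * egf (classCount (BigC C K)) := by
  ext n
  rw [← egf_mul, ← count_small hC hDec iso_TrueC, coeff_egf]
  simp [TrueC, classCount]

lemma ode_small {C : GraphClassOn} (hC : ClassIsoInvariant C) (hDec : ClassDecomposable C) (K : ℕ) :
    PowerSeries.X * PowerSeries.derivative ℝ (egf (classCount (SmallC C TrueC K))) =
      egf (fun h => h * classCount (ConnC C K) h) * egf (classCount (SmallC C TrueC K)) := by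
  ext n
  rw [← egf_mul, ← count_ode hC hDec]
  rcases n with _ | n
  · simp
  · rw [PowerSeries.coeff_succ_X_mul, PowerSeries.coeff_derivative, coeff_egf]
    push_cast
    ring

lemma abs_ode {B F : PowerSeries ℝ} (K : ℕ) (hB : ∀ n, 0 ≤ PowerSeries.coeff n B)
    (hK : ∀ n, K < n → PowerSeries.coeff n B = 0)
    (h : PowerSeries.X * PowerSeries.derivative ℝ F = B * F ∨
      PowerSeries.X * PowerSeries.derivative ℝ F = - (B * F)) :
    Summable fun n => |PowerSeries.coeff n F| := by
  refine summable_of_ode (fun n => PowerSeries.coeff n B) _ hB (fun n => abs_nonneg _) K hK fun n => ?_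
  have h1 : |PowerSeries.coeff n (PowerSeries.X * PowerSeries.derivative ℝ F)| =
      n * |PowerSeries.coeff n F| := by
    rcases n with _ | n
    · simp
    · rw [PowerSeries.coeff_succ_X_mul, PowerSeries.coeff_derivative, abs_mul, mul_comm]
      congr 1
      push_cast
      exact abs_of_nonneg (by positivity)
  have h2 : |PowerSeries.coeff n (PowerSeries.X * PowerSeries.derivative ℝ F)| =
      |PowerSeries.coeff n (B * F)| := by
    rcases h with h | h <;> rw [h]
    rw [map_neg, abs_neg]
  rw [← h1, h2, PowerSeries.coeff_mul]
  refine (Finset.abs_sum_le_sum_abs _ _).trans (Finset.sum_le_sum fun p _ => ?_)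
  rw [abs_mul, abs_of_nonneg (hB _)]

lemma conv_small {C Q : GraphClassOn} (hIso : ClassIsoInvariant C) (hAdd : ClassAddable C)
    (hSmooth : ClassSmooth C)
    (hne : ∀ n : ℕ, 1 ≤ n → ∃ G : SimpleGraph (Fin n), C (Fin n) G)
    (hQ : ClassIsoInvariant Q) (K : ℕ) :
    ∃ p : ℝ, Tendsto (fun n : ℕ => classProb C n (fun G => Q _ (ins (smallSet K G) G)))
      atTop (𝓝 p) := by
  obtain ⟨γ, hγ, hr⟩ := an_ratio hIso hAdd hSmooth hne
  set E := egf (classCount (SmallC C TrueC K)) with hE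
  set EQ := egf (classCount (SmallC C Q K)) with hEQ
  set D := egf (classCount (BigC C K)) with hD
  set A := egf (classCount C) with hA
  set B := egf (fun h => h * classCount (ConnC C K) h) with hB
  have hAED : A = E * D := egf_small hIso hAdd.1 K
  have hode : PowerSeries.X * PowerSeries.derivative ℝ E = B * E := ode_small hIso hAdd.1 K
  have hE0 : PowerSeries.constantCoeff E ≠ 0 := by
    rw [← PowerSeries.coeff_zero_eq_constantCoeff_apply, hE, coeff_egf]
    have : 0 < classCount (SmallC C TrueC K) 0 := by
      rw [classCount, Nat.card_pos_iff]
      exact ⟨⟨⟨⊥, class_zero hAdd.1 _, fun v => v.elim0, trivial⟩⟩, inferInstance⟩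
    positivity
  have hEE : E * E⁻¹ = 1 := PowerSeries.mul_inv_cancel _ hE0
  have hodeF : PowerSeries.X * PowerSeries.derivative ℝ E⁻¹ = -(B * E⁻¹) := by
    rw [PowerSeries.derivative_inv']
    calc _ = -(E⁻¹ ^ 2 * (PowerSeries.X * PowerSeries.derivative ℝ E)) := by ring
      _ = -(B * E⁻¹ * (E * E⁻¹)) := by rw [hode]; ring
      _ = _ := by rw [hEE, mul_one]
  have hB0 : ∀ n, 0 ≤ PowerSeries.coeff n B := fun n => by rw [hB, coeff_egf]; positivity
  have hBK : ∀ n, K < n → PowerSeries.coeff n B = 0 := fun n hn => by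
    rw [hB, coeff_egf]
    have : classCount (ConnC C K) n = 0 := by
      rw [classCount, Nat.card_eq_zero]
      left
      refine ⟨fun G => ?_⟩
      have := G.2.2.2
      simp at this
      omega
    simp [this]
  have sE := abs_ode K hB0 hBK (Or.inl hode)
  have sF := abs_ode K hB0 hBK (Or.inr hodeF)
  have sEQ : Summable fun n => |PowerSeries.coeff n EQ| := by
    refine Summable.of_nonneg_of_le (fun _ => abs_nonneg _) (fun n => ?_) sE
    rw [hEQ, hE, coeff_egf, coeff_egf, abs_of_nonneg (by positivity), abs_of_nonneg (by positivity)]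
    gcongr
    exact Nat.card_le_card_of_injective (fun G => (⟨G.1, G.2.1, G.2.2.1, trivial⟩ :
      {G : SimpleGraph (Fin n) // SmallC C TrueC K _ G}))
      (fun G G' h => Subtype.ext (Subtype.mk.inj h))
  have sH : Summable fun n => |PowerSeries.coeff n (EQ * E⁻¹)| := by
    have := summable_norm_sum_mul_antidiagonal_of_summable_norm
      (f := fun n => PowerSeries.coeff n EQ) (g := fun n => PowerSeries.coeff n E⁻¹) sEQ sF
    refine this.congr fun n => ?_
    rw [PowerSeries.coeff_mul, Real.norm_eq_abs]
  have hmain : EQ * D = (EQ * E⁻¹) * A := by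
    rw [hAED]
    calc _ = EQ * D * 1 := by rw [mul_one]
      _ = EQ * D * (E * E⁻¹) := by rw [hEE]
      _ = _ := by ring
  obtain ⟨p, hp⟩ := conv_tendsto (an_pos hAdd.1 hne) (an_mono hIso hAdd hne) hγ hr sH
  refine ⟨p, hp.congr fun n => ?_⟩
  have h1 : ∑ q ∈ Finset.HasAntidiagonal.antidiagonal n,
      PowerSeries.coeff q.1 (EQ * E⁻¹) * an C q.2 = PowerSeries.coeff n (EQ * D) := by
    rw [hmain, PowerSeries.coeff_mul]
    refine Finset.sum_congr rfl fun q _ => ?_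
    rw [hA, coeff_egf, an]
  rw [h1, ← egf_mul, ← count_small hIso hAdd.1 hQ, classProb, an]
  have : (0 : ℝ) < n.factorial := by exact_mod_cast n.factorial_pos
  field_simp

end FOC

namespace FOC

/-- The graph of bridges. -/
def bridgeG {V : Type} (G : SimpleGraph V) : SimpleGraph V where
  Adj u v := G.Adj u v ∧ G.IsBridge s(u, v)
  symm := ⟨fun u v h => ⟨h.1.symm, by rw [Sym2.eq_swap]; exact h.2⟩⟩
  loopless := ⟨fun v h => G.loopless.1 v h.1⟩

lemma bridgeG_acyclic {V : Type} (G : SimpleGraph V) : (bridgeG G).IsAcyclic := by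
  rw [SimpleGraph.isAcyclic_iff_forall_adj_isBridge]
  intro u v h
  exact h.2.anti (fun _ _ h => h.1)

open Classical in
lemma card_bridges {n : ℕ} (G : SimpleGraph (Fin n)) :
    Nat.card {p : Fin n × Fin n // (bridgeG G).Adj p.1 p.2} ≤ 2 * n := by
  rcases Nat.eq_zero_or_pos n with rfl | hn
  · have : IsEmpty {p : Fin 0 × Fin 0 // (bridgeG G).Adj p.1 p.2} := ⟨fun p => p.1.1.elim0⟩
    simp
  have : Nonempty (Fin n) := ⟨⟨0, hn⟩⟩
  obtain ⟨T, h1, -, h2⟩ := SimpleGraph.Connected.exists_isTree_le_of_le_of_isAcyclic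
    (G := (⊤ : SimpleGraph (Fin n))) SimpleGraph.connected_top le_top (bridgeG_acyclic G)
  have h3 := h2.card_edgeFinset
  have h4 := T.two_mul_card_edgeFinset
  have h5 : Nat.card {p : Fin n × Fin n // (bridgeG G).Adj p.1 p.2} ≤
      Nat.card {p : Fin n × Fin n // T.Adj p.1 p.2} :=
    Nat.card_le_card_of_injective (fun p => ⟨p.1, h1 p.2⟩)
      (fun p q h => Subtype.ext (Subtype.mk.inj h))
  have h6 : Nat.card {p : Fin n × Fin n // T.Adj p.1 p.2} =
      (Finset.univ.filter fun p : Fin n × Fin n => T.Adj p.1 p.2).card := by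
    rw [Nat.card_eq_fintype_card, Fintype.card_subtype]
  simp only [Fintype.card_fin] at h3
  have h7 : (Finset.univ.filter fun p : Fin n × Fin n => T.Adj p.1 p.2).card =
    2 * T.edgeFinset.card := h4.symm
  omega

lemma card_unreach {n K : ℕ} (G : SimpleGraph (Fin n)) (h : ∀ v, csize G v + K ≤ n) :
    n * K ≤ Nat.card {p : Fin n × Fin n // ¬ G.Reachable p.1 p.2} := by
  have e : {p : Fin n × Fin n // ¬ G.Reachable p.1 p.2} ≃
      Σ u : Fin n, {v // ¬ G.Reachable u v} :=
    { toFun := fun p => ⟨p.1.1, p.1.2, p.2⟩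
      invFun := fun q => ⟨(q.1, q.2.1), q.2.2⟩
      left_inv := fun _ => rfl
      right_inv := fun _ => rfl }
  rw [Nat.card_congr e, Nat.card_sigma]
  have : ∀ u ∈ Finset.univ, K ≤ Nat.card {v // ¬ G.Reachable u v} := by
    intro u _
    classical
    have h1 := h u
    rw [Nat.card_eq_fintype_card, Fintype.card_subtype_compl]
    rw [csize, Nat.card_eq_fintype_card] at h1
    simp only [Fintype.card_fin]
    omega
  have := Finset.card_nsmul_le_sum _ _ _ this
  simpa using this

lemma badA {C : GraphClassOn} (hAdd : ClassBridgeAddable C) (n K : ℕ) (hn : 0 < n) :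
    Nat.card {G : SimpleGraph (Fin n) // C _ G ∧ ∀ v, csize G v + K ≤ n} * K ≤ 2 * classCount C n := by
  classical
  set A := {G : SimpleGraph (Fin n) // C _ G ∧ ∀ v, csize G v + K ≤ n}
  have h1 : Nat.card A * (n * K) ≤
      Nat.card (Σ G : A, {p : Fin n × Fin n // ¬ G.1.Reachable p.1 p.2}) := by
    rw [Nat.card_sigma]
    have := Finset.card_nsmul_le_sum (Finset.univ : Finset A)
      (fun G => Nat.card {p : Fin n × Fin n // ¬ G.1.Reachable p.1 p.2}) (n * K)
      (fun G _ => card_unreach G.1 G.2.2)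
    simpa [Nat.card_eq_fintype_card] using this
  have h2 : Nat.card (Σ G : {G : SimpleGraph (Fin n) // C _ G},
      {p : Fin n × Fin n // (bridgeG G.1).Adj p.1 p.2}) ≤ classCount C n * (2 * n) := by
    rw [Nat.card_sigma]
    have := Finset.sum_le_card_nsmul (Finset.univ : Finset {G : SimpleGraph (Fin n) // C _ G})
      (fun G => Nat.card {p : Fin n × Fin n // (bridgeG G.1).Adj p.1 p.2}) (2 * n)
      (fun G _ => card_bridges G.1)
    simpa [classCount, Nat.card_eq_fintype_card] using this
  have h3 : Nat.card (Σ G : A, {p : Fin n × Fin n // ¬ G.1.Reachable p.1 p.2}) ≤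
      Nat.card (Σ G : {G : SimpleGraph (Fin n) // C _ G},
      {p : Fin n × Fin n // (bridgeG G.1).Adj p.1 p.2}) := by
    refine Nat.card_le_card_of_injective
      (fun x => ⟨⟨x.1.1 ⊔ SimpleGraph.fromEdgeSet {s(x.2.1.1, x.2.1.2)},
        hAdd _ _ _ _ x.1.2.1 x.2.2⟩, x.2.1, ?_, ?_⟩) ?_
    · have : x.2.1.1 ≠ x.2.1.2 := fun h => x.2.2 (by rw [h])
      simp [this]
    · exact SimpleGraph.isBridge_sup_edge.2 (SimpleGraph.IsBridge.of_not_reachable x.2.2)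
    · rintro ⟨⟨G, hG⟩, ⟨u, v⟩, hp⟩ ⟨⟨G', hG'⟩, ⟨u', v'⟩, hp'⟩ h
      have hh := Sigma.mk.inj h
      have h1 : G ⊔ SimpleGraph.fromEdgeSet {s(u, v)} = G' ⊔ SimpleGraph.fromEdgeSet {s(u', v')} :=
        Subtype.mk.inj hh.1
      have h2 : (u, v) = (u', v') := by
        have aux : ∀ (x y : Σ G : {G : SimpleGraph (Fin n) // C _ G},
            {p : Fin n × Fin n // (bridgeG G.1).Adj p.1 p.2}), x = y → x.2.1 = y.2.1 := by
          rintro x y rfl; rfl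
        exact aux _ _ h
      obtain ⟨rfl, rfl⟩ := Prod.mk.inj h2
      have h3 : G = G' := by
        have n1 : ¬ G.Adj u v := fun h => hp h.reachable
        have n2 : ¬ G'.Adj u v := fun h => hp' h.reachable
        ext x y
        have := congrArg (fun H => H.Adj x y) h1
        simp only [SimpleGraph.sup_adj, SimpleGraph.fromEdgeSet_adj, Set.mem_singleton_iff,
          Sym2.eq_iff, eq_iff_iff] at this
        by_cases hxy : (x = u ∧ y = v) ∨ (x = v ∧ y = u)
        · rcases hxy with ⟨rfl, rfl⟩ | ⟨rfl, rfl⟩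
          · exact iff_of_false n1 n2
          · exact iff_of_false (fun h => n1 h.symm) (fun h => n2 h.symm)
        · simpa [hxy] using this
      subst h3
      rfl
  have h4 := (h1.trans h3).trans h2
  refine Nat.le_of_mul_le_mul_right (?_ : _ * n ≤ _ * n) hn
  calc _ = Nat.card A * (n * K) := by ring
    _ ≤ _ := h4
    _ = _ := by ring

end FOC

namespace FOC

/-- `j` embeds a pendant copy of `M`, attached to `w` at the root `r`. -/
def Att {V W : Type} (M : SimpleGraph W) (r : W) (G : SimpleGraph V) (j : W → V) (w : V) : Prop :=
  Function.Injective j ∧ (∀ a b, G.Adj (j a) (j b) ↔ M.Adj a b) ∧ (∀ a, j a ≠ w) ∧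
    ∀ x, (∀ a, j a ≠ x) → ∀ a, G.Adj x (j a) ↔ (x = w ∧ a = r)

/-- No pendant copy of `M` in the component of `v`. -/
def NoAtt {V W : Type} (M : SimpleGraph W) (r : W) (G : SimpleGraph V) (v : V) : Prop :=
  ¬ ∃ j w, Att M r G j w ∧ G.Reachable v w

lemma reach_of_step {V W : Type} {G : SimpleGraph V} {H : SimpleGraph W} (f : V → W)
    (hf : ∀ x y, G.Adj x y → H.Reachable (f x) (f y)) {x y : V} (h : G.Reachable x y) :
    H.Reachable (f x) (f y) := by
  obtain ⟨p⟩ := h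
  induction p with
  | nil => exact SimpleGraph.Reachable.refl _
  | cons h p ih => exact (hf _ _ h).trans ih

lemma reach_closed {V : Type} {G : SimpleGraph V} (P : V → Prop)
    (hP : ∀ x y, G.Adj x y → P x → P y) {x y : V} (h : G.Reachable x y) (hx : P x) : P y := by
  obtain ⟨p⟩ := h
  induction p with
  | nil => exact hx
  | cons h p ih => exact ih (hP _ _ h hx)

lemma reach_br {V W : Type} {G : SimpleGraph V} {M : SimpleGraph W} {v : V} {r : W} {x y : V}
    (h : (br G M v r).Reachable (.inl x) (.inl y)) : G.Reachable x y := by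
  refine reach_of_step (G := br G M v r) (Sum.elim id fun _ => v) ?_ h
  rintro (a | a) (b | b) hab
  · exact SimpleGraph.Adj.reachable hab
  · obtain ⟨rfl, -⟩ := hab; exact SimpleGraph.Reachable.refl _
  · obtain ⟨rfl, -⟩ := hab; exact SimpleGraph.Reachable.refl _
  · exact SimpleGraph.Reachable.refl _

section core
variable {V W X : Type} {M : SimpleGraph W} {r : W} {G G2 : SimpleGraph V} {v v2 : V}
  {H : SimpleGraph X} {e e2 : V ⊕ W ≃ X}

lemma reach_lift (he : ∀ x y, H.Adj (e x) (e y) ↔ (br G M v r).Adj x y) {x y : V}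
    (h : G.Reachable x y) : H.Reachable (e (.inl x)) (e (.inl y)) :=
  reach_of_step (fun x => e (.inl x)) (fun _ _ h => ((he _ _).2 h).reachable) h

lemma reach_drop (he : ∀ x y, H.Adj (e x) (e y) ↔ (br G M v r).Adj x y) {x y : V}
    (h : H.Reachable (e (.inl x)) (e (.inl y))) : G.Reachable x y := by
  refine reach_br (M := M) (v := v) (r := r) ?_
  have := reach_of_step (H := br G M v r) e.symm (fun x y h => by
    have := (he (e.symm x) (e.symm y)).1 (by simpa using h)
    exact this.reachable) h
  simpa using this

lemma meet [Finite X] (he : ∀ x y, H.Adj (e x) (e y) ↔ (br G M v r).Adj x y)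
    (he2 : ∀ x y, H.Adj (e2 x) (e2 y) ↔ (br G2 M v2 r).Adj x y)
    (hs : Nat.card X < csize G v + csize G2 v2) :
    H.Reachable (e (.inl v)) (e2 (.inl v2)) := by
  by_contra hcon
  have hinj : Function.Injective (fun z : {u // G.Reachable v u} ⊕ {u // G2.Reachable v2 u} =>
      z.elim (fun x => e (.inl x.1)) (fun x => e2 (.inl x.1))) := by
    rintro (⟨x, hx⟩ | ⟨x, hx⟩) (⟨y, hy⟩ | ⟨y, hy⟩) h
    · simpa using h
    · exfalso; apply hcon
      have h : e (.inl x) = e2 (.inl y) := h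
      have h1 := reach_lift he hx
      have h2 := reach_lift he2 hy
      rw [h] at h1
      exact h1.trans h2.symm
    · exfalso; apply hcon
      have h : e2 (.inl x) = e (.inl y) := h
      have h1 := reach_lift he hy
      have h2 := reach_lift he2 hx
      rw [← h] at h1
      exact h1.trans h2.symm
    · simpa using h
  have hfinV : Finite (V ⊕ W) := Finite.of_equiv _ e.symm
  have : Finite V := Finite.of_injective (Sum.inl : V → V ⊕ W) Sum.inl_injective
  have := Nat.card_le_card_of_injective _ hinj
  rw [Nat.card_sum] at this
  unfold csize at hs
  omega

lemma half [Finite X] (hM : M.Connected)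
    (he : ∀ x y, H.Adj (e x) (e y) ↔ (br G M v r).Adj x y)
    (he2 : ∀ x y, H.Adj (e2 x) (e2 y) ↔ (br G2 M v2 r).Adj x y)
    (hs : Nat.card X < csize G v + csize G2 v2)
    (hG : NoAtt M r G v) (hq : ∀ a, e2 (.inl v2) ≠ e (.inr a))
    (hSU : ∃ a, ∀ b, e (.inr a) ≠ e2 (.inr b)) : False := by
  -- disjointness
  have hdis : ∀ a b, e (.inr a) ≠ e2 (.inr b) := by
    intro a b hab
    obtain ⟨a', ha'⟩ := hSU
    obtain ⟨b', hb'⟩ := reach_closed (G := M) (fun a => ∃ b, e (.inr a) = e2 (.inr b)) (by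
      rintro x y hxy ⟨b, hb⟩
      have h1 : H.Adj (e (.inr x)) (e (.inr y)) := (he _ _).2 hxy
      rcases h2 : e2.symm (e (.inr y)) with z | z
      · exfalso
        have h3 : e (.inr y) = e2 (.inl z) := by rw [← h2]; simp
        rw [hb, h3, he2] at h1
        obtain ⟨rfl, -⟩ := h1
        exact hq y h3.symm
      · exact ⟨z, by rw [← h2]; simp⟩) (hM.preconnected a a') ⟨b, hab⟩
    exact ha' b' hb'
  have hj : ∀ b, ∃ x, e2 (.inr b) = e (.inl x) := by
    intro b
    rcases h2 : e.symm (e2 (.inr b)) with z | z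
    · exact ⟨z, by rw [← h2]; simp⟩
    · exact absurd (by rw [← h2]; simp) (hdis z b)
  choose j hj using hj
  obtain ⟨w, hw⟩ : ∃ w, e2 (.inl v2) = e (.inl w) := by
    rcases h2 : e.symm (e2 (.inl v2)) with z | z
    · exact ⟨z, by rw [← h2]; simp⟩
    · exact absurd (by rw [← h2]; simp) (hq z)
  refine hG ⟨j, w, ⟨?_, ?_, ?_, ?_⟩, ?_⟩
  · intro a b hab
    have : e2 (.inr a) = e2 (.inr b) := by rw [hj, hj, hab]
    simpa using this
  · intro a b
    have := he2 (.inr a) (.inr b)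
    rw [hj, hj, he] at this
    exact this
  · intro a h
    have : e2 (.inr a) = e2 (.inl v2) := by rw [hj, hw, h]
    simp at this
  · intro x hx a
    obtain ⟨y, hy⟩ : ∃ y, e (.inl x) = e2 (.inl y) := by
      rcases h2 : e2.symm (e (.inl x)) with z | z
      · exact ⟨z, by rw [← h2]; simp⟩
      · exfalso
        have h3 : e (.inl x) = e2 (.inr z) := by rw [← h2]; simp
        rw [hj] at h3
        exact hx z (by simpa using h3.symm)
    have h1 := he2 (.inl y) (.inr a)
    rw [← hy, hj, he] at h1
    refine Iff.trans h1 ?_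
    rw [glue_lr]
    refine and_congr ?_ Iff.rfl
    constructor
    · rintro rfl
      rw [hw] at hy
      simpa using hy
    · rintro rfl
      rw [← hw] at hy
      simpa using hy.symm
  · have := meet he he2 hs
    rw [hw] at this
    exact reach_drop he this

lemma core [Finite X] (hM : M.Connected)
    (he : ∀ x y, H.Adj (e x) (e y) ↔ (br G M v r).Adj x y)
    (he2 : ∀ x y, H.Adj (e2 x) (e2 y) ↔ (br G2 M v2 r).Adj x y)
    (hs : Nat.card X < csize G v + csize G2 v2) (hs' : 2 * Nat.card W < csize G v)
    (hG : NoAtt M r G v) (hG2 : NoAtt M r G2 v2)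
    (hSU : ∃ a, ∀ b, e (.inr a) ≠ e2 (.inr b)) (hUS : ∃ a, ∀ b, e2 (.inr a) ≠ e (.inr b)) :
    False := by
  by_cases h1 : ∃ a, e2 (.inl v2) = e (.inr a)
  · by_cases h2 : ∃ a, e (.inl v) = e2 (.inr a)
    · have hfinX : Finite (V ⊕ W) := Finite.of_equiv _ e.symm
      have : Finite W := Finite.of_injective (Sum.inr : W → V ⊕ W) Sum.inr_injective
      have hc : ∀ u : {u // G.Reachable v u}, ∃ z : W ⊕ W,
          e (.inl u.1) = z.elim (fun a => e (.inr a)) (fun a => e2 (.inr a)) := by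
        rintro ⟨u, hu⟩
        refine reach_closed (fun x => ∃ z : W ⊕ W,
          x = z.elim (fun a => e (.inr a)) (fun a => e2 (.inr a))) ?_ (reach_lift he hu) ?_
        · rintro x y hxy ⟨z | z, rfl⟩
          · simp only [Sum.elim_inl] at hxy
            rcases h3 : e.symm y with t | t
            · have h4 : y = e (.inl t) := by rw [← h3]; simp
              rw [h4, he] at hxy
              obtain ⟨rfl, -⟩ := hxy
              obtain ⟨a, ha⟩ := h2
              exact ⟨.inr a, by rw [h4, ha]; rfl⟩
            · exact ⟨.inl t, by rw [Sum.elim_inl, ← h3]; simp⟩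
          · simp only [Sum.elim_inr] at hxy
            rcases h3 : e2.symm y with t | t
            · have h4 : y = e2 (.inl t) := by rw [← h3]; simp
              rw [h4, he2] at hxy
              obtain ⟨rfl, -⟩ := hxy
              obtain ⟨a, ha⟩ := h1
              exact ⟨.inl a, by rw [h4, ha]; rfl⟩
            · exact ⟨.inr t, by rw [Sum.elim_inr, ← h3]; simp⟩
        · obtain ⟨a, ha⟩ := h2
          exact ⟨.inr a, ha⟩
      choose f hf using hc
      have hfi : Function.Injective f := by
        intro x y hxy
        have := hf x
        rw [hxy, ← hf y] at this
        exact Subtype.ext (by simpa using this)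
      have := Nat.card_le_card_of_injective f hfi
      rw [Nat.card_sum] at this
      unfold csize at hs'
      omega
    · push Not at h2
      exact half hM he2 he (by omega) hG2 h2 hUS
  · push Not at h1
    exact half hM he he2 hs hG h1 hSU

end core

/-- Good attaching vertices. -/
def Good {m n : ℕ} (M : SimpleGraph (Fin m)) (r : Fin m) (K : ℕ) (G : SimpleGraph (Fin n))
    (v : Fin n) : Prop := n ≤ csize G v + K ∧ NoAtt M r G v

lemma card_good {m n : ℕ} (M : SimpleGraph (Fin m)) (r : Fin m) (K : ℕ) (G : SimpleGraph (Fin n))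
    (h : ∃ v, Good M r K G v) : n - K ≤ Nat.card {v // Good M r K G v} := by
  obtain ⟨v, h1, h2⟩ := h
  have : csize G v ≤ Nat.card {v // Good M r K G v} :=
    Nat.card_le_card_of_injective
      (fun u => ⟨u.1, by rw [← csize_eq_of_reach u.2]; exact h1,
        fun ⟨j, w, h3, h4⟩ => h2 ⟨j, w, h3, u.2.trans h4⟩⟩)
      (fun x y h => Subtype.ext (Subtype.mk.inj h))
  omega

lemma exists_e {n m : ℕ} (S : Finset (Fin (n + m))) (hS : S.card = m) :
    ∃ e : Fin n ⊕ Fin m ≃ Fin (n + m), ∀ x, x ∈ S ↔ ∃ a, x = e (.inr a) := by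
  classical
  have e1 : Fin m ≃ {x // x ∈ S} := Fintype.equivOfCardEq (by simp [hS])
  have e2 : Fin n ≃ {x // ¬ x ∈ S} := Fintype.equivOfCardEq (by
    rw [Fintype.card_subtype_compl]; simp [hS])
  refine ⟨((Equiv.sumComm _ _).trans (Equiv.sumCongr e1 e2)).trans (Equiv.sumCompl (· ∈ S)), ?_⟩
  intro x
  constructor
  · intro hx
    exact ⟨e1.symm ⟨x, hx⟩, by simp⟩
  · rintro ⟨a, rfl⟩
    simp

lemma badB {C : GraphClassOn} (hIso : ClassIsoInvariant C) (hAdd : ClassAddable C)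
    {m : ℕ} (M : SimpleGraph (Fin m)) (r : Fin m) (hM : M.Connected) (hCM : C _ M) (K n : ℕ)
    (hn : 2 * m + 2 * K < n) :
    Nat.card {G : SimpleGraph (Fin n) // C _ G ∧ ∃ v, Good M r K G v} *
      ((n - K) * (n + m).choose m) ≤ classCount C (n + m) := by
  classical
  set B := {G : SimpleGraph (Fin n) // C _ G ∧ ∃ v, Good M r K G v} with hB
  choose E hE using fun S : {S : Finset (Fin (n + m)) // S.card = m} => exists_e S.1 S.2
  have h1 : Nat.card B * (n - K) ≤ Nat.card (Σ G : B, {v // Good M r K G.1 v}) := by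
    rw [Nat.card_sigma]
    have := Finset.card_nsmul_le_sum (Finset.univ : Finset B)
      (fun G => Nat.card {v // Good M r K G.1 v}) (n - K)
      (fun G _ => card_good M r K G.1 G.2.2)
    simpa [Nat.card_eq_fintype_card] using this
  have h2 : Nat.card {S : Finset (Fin (n + m)) // S.card = m} = (n + m).choose m := by
    rw [Nat.card_eq_fintype_card, Fintype.card_finset_len, Fintype.card_fin]
  have h3 : Nat.card ((Σ G : B, {v // Good M r K G.1 v}) ×
      {S : Finset (Fin (n + m)) // S.card = m}) ≤ classCount C (n + m) := by
    have hadj : ∀ (S : {S : Finset (Fin (n + m)) // S.card = m}) (G : SimpleGraph (Fin n)) v,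
        ∀ x y, ((br G M v r).comap (E S).symm).Adj (E S x) (E S y) ↔ (br G M v r).Adj x y := by
      intro S G v x y
      simp
    refine Nat.card_le_card_of_injective
      (fun z => ⟨(br z.1.1.1 M z.1.2.1 r).comap (E z.2).symm, ?_⟩) ?_
    · refine (hIso _ _ _ _ ⟨SimpleGraph.Iso.comap (E z.2).symm _⟩).2 ?_
      exact class_br hIso hAdd z.1.1.2.1 hCM _ _
    · rintro ⟨⟨⟨G, hG⟩, v, hv⟩, S⟩ ⟨⟨⟨G2, hG2⟩, v2, hv2⟩, U⟩ h
      have h : (br G M v r).comap (E S).symm = (br G2 M v2 r).comap (E U).symm :=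
        Subtype.mk.inj h
      have he := hadj S G v
      have he2 := hadj U G2 v2
      rw [← h] at he2
      have hSU : S = U := by
        by_contra hne
        have hne' : S.1 ≠ U.1 := fun h => hne (Subtype.ext h)
        have n1 : ¬ S.1 ⊆ U.1 := fun h => hne' (Finset.eq_of_subset_of_card_le h (by rw [S.2, U.2]))
        have n2 : ¬ U.1 ⊆ S.1 := fun h => hne' (Finset.eq_of_subset_of_card_le h (by rw [S.2, U.2])).symm
        rw [Finset.not_subset] at n1 n2
        have g1 : n ≤ csize G v + K := hv.1
        have g2 : n ≤ csize G2 v2 + K := hv2.1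
        refine core hM he he2 (by simp; omega) (by simp; omega) hv.2 hv2.2 ?_ ?_
        · obtain ⟨x, hx, hx'⟩ := n1
          obtain ⟨a, rfl⟩ := (hE S x).1 hx
          exact ⟨a, fun b hb => hx' ((hE U _).2 ⟨b, hb⟩)⟩
        · obtain ⟨x, hx, hx'⟩ := n2
          obtain ⟨a, rfl⟩ := (hE U x).1 hx
          exact ⟨a, fun b hb => hx' ((hE S _).2 ⟨b, hb⟩)⟩
      subst hSU
      have hbr : ∀ x y, (br G M v r).Adj x y ↔ (br G2 M v2 r).Adj x y := fun x y =>
        (he x y).symm.trans (he2 x y)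
      have hGG : G = G2 := by
        ext x y; exact hbr (.inl x) (.inl y)
      have hvv : v = v2 := by
        have := (hbr (.inl v) (.inr r)).1 ⟨rfl, rfl⟩
        exact this.1
      subst hGG
      subst hvv
      rfl
  rw [Nat.card_prod, h2] at h3
  refine le_trans ?_ h3
  rw [← mul_assoc]
  exact Nat.mul_le_mul_right _ h1

end FOC

namespace FOC

lemma att_iso {V W : Type} {M : SimpleGraph W} {r : W} {G : SimpleGraph V} {j : W → V} {w : V}
    (h : Att M r G j w) :
    Nonempty (br M (G.comap (Subtype.val : {x // ∀ a, j a ≠ x} → V)) r ⟨w, h.2.2.1⟩ ≃g G) := by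
  obtain ⟨h1, h2, h3, h4⟩ := h
  refine ⟨{ toEquiv := Equiv.ofBijective (Sum.elim j Subtype.val) ⟨?_, ?_⟩, map_rel_iff' := ?_ }⟩
  · rintro (a | ⟨a, ha⟩) (b | ⟨b, hb⟩) hab
    · exact congrArg _ (h1 hab)
    · exact absurd hab (hb a)
    · exact absurd hab.symm (ha b)
    · simpa using hab
  · intro x
    by_cases hx : ∃ a, j a = x
    · obtain ⟨a, ha⟩ := hx
      exact ⟨.inl a, ha⟩
    · push Not at hx
      exact ⟨.inr ⟨x, hx⟩, rfl⟩
  · rintro (a | ⟨a, ha⟩) (b | ⟨b, hb⟩)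
    · exact h2 a b
    · show G.Adj (j a) b ↔ _
      rw [SimpleGraph.adj_comm, h4 b hb a, glue_lr, Subtype.mk.injEq, and_comm]
    · show G.Adj a (j b) ↔ _
      rw [h4 a ha b, glue_rl, Subtype.mk.injEq, and_comm]
    · rfl

lemma reach_outs {V : Type} {W : Finset V} {G : SimpleGraph V} (h : Closed W G) (x y : {x // x ∉ W})
    (hr : G.Reachable x.1 y.1) : (outs W G).Reachable x y := by
  have h1 : (du (ins W G) (outs W G)).Reachable (.inr x) (.inr y) := by
    rw [← (closedIso h).reachable_iff]; exact hr
  obtain ⟨u, h2, h3⟩ := reach_du_inr.1 h1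
  rw [Sum.inr.inj h2]; exact h3

lemma csize_add {V : Type} [Finite V] {G : SimpleGraph V} {u v : V} (h : ¬ G.Reachable u v) :
    csize G u + csize G v ≤ Nat.card V := by
  unfold csize
  rw [← Nat.card_sum]
  refine Nat.card_le_card_of_injective (Sum.elim Subtype.val Subtype.val) ?_
  rintro (⟨a, ha⟩ | ⟨a, ha⟩) (⟨b, hb⟩ | ⟨b, hb⟩) hab
  · simpa using hab
  · obtain rfl : a = b := hab
    exact absurd (ha.trans hb.symm) h
  · obtain rfl : a = b := hab
    exact absurd (hb.trans ha.symm) h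
  · simpa using hab

lemma good_case {C : GraphClassOn} (hIso : ClassIsoInvariant C) (hDec : ClassDecomposable C)
    {m k n K : ℕ} {M : SimpleGraph (Fin m)} {r : Fin m} (hM : C _ M) (hMc : M.Connected)
    (hU : ∀ τ, RealTy C k τ → Abs k M r τ) {G : SimpleGraph (Fin n)} (hG : C _ G) (hn : 2 * K < n)
    (hA : ¬ ∀ v, csize G v + K ≤ n) (hB : ¬ ∃ v, Good M r K G v) :
    EF k G (du (ins (smallSet K G) G) M) (Empty.elim : Empty → _) (Empty.elim : Empty → _) := by
  push Not at hA
  obtain ⟨v, hv⟩ := hA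
  have hN : ¬ NoAtt M r G v := fun h => hB ⟨v, by omega, h⟩
  rw [NoAtt, not_not] at hN
  obtain ⟨j, w, hatt, hvw⟩ := hN
  have hc := smallSet_closed K G
  have hW : ∀ x, x ∉ smallSet K G ↔ G.Reachable v x := by
    intro x
    rw [mem_smallSet]
    constructor
    · intro h
      by_contra hcon
      have := csize_add hcon
      simp at this
      omega
    · intro h
      rw [← csize_eq_of_reach h]
      omega
  have hjr : ∀ a, G.Reachable v (j a) := by
    intro a
    have h1 : G.Adj w (j r) := (hatt.2.2.2 w hatt.2.2.1 r).2 ⟨rfl, rfl⟩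
    have h2 : G.Reachable (j r) (j a) :=
      reach_of_step j (fun x y h => ((hatt.2.1 x y).2 h).reachable) (hMc.preconnected r a)
    exact hvw.trans (h1.reachable.trans h2)
  have hO : (outs (smallSet K G) G).Connected :=
    { preconnected := fun x y => reach_outs hc x y
        (((hW x.1).1 x.2).symm.trans ((hW y.1).1 y.2))
      nonempty := ⟨⟨v, (hW v).2 (SimpleGraph.Reachable.refl _)⟩⟩ }
  have hatt' : Att M r (outs (smallSet K G) G) (fun a => ⟨j a, (hW _).2 (hjr a)⟩)
      ⟨w, (hW _).2 hvw⟩ := by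
    refine ⟨fun a b hab => hatt.1 (Subtype.mk.inj hab), fun a b => hatt.2.1 a b,
      fun a h => hatt.2.2.1 a (Subtype.mk.inj h), fun x hx a => ?_⟩
    refine (hatt.2.2.2 x.1 (fun b hb => hx b (Subtype.ext hb)) a).trans ?_
    rw [Subtype.ext_iff]
  obtain ⟨e⟩ := att_iso hatt'
  have h1 := universal hM hMc hU ((class_closed hIso hDec hc).1 hG).2 hO e
  have h2 := EF.glue (k := k) (fun (_ _ : Empty) => False) (X := fun _ _ => False)
    (X' := fun _ _ => False) (by simp) (by simp)
    (EF.refl (k := k) (ins (smallSet K G) G) (Empty.elim : Empty → _)) h1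
  have h3 := h2.reindex (Empty.elim : Empty → Empty ⊕ Empty)
  have h4 := EF.of_iso (k := k) (closedIso hc) (Empty.elim : Empty → _)
  have q : ∀ {Y : Type} (f g : Empty → Y), f = g := fun f g => funext fun x => x.elim
  rw [q ((closedIso hc) ∘ (Empty.elim : Empty → _)) Empty.elim] at h4
  refine h4.symm.trans ?_
  convert h3 using 1

lemma converges_of_approx (f : ℕ → ℝ)
    (h : ∀ ε > 0, ∃ (g : ℕ → ℝ) (p : ℝ), Tendsto g atTop (𝓝 p) ∧ ∀ᶠ n in atTop, |f n - g n| ≤ ε) :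
    ∃ p, Tendsto f atTop (𝓝 p) := by
  refine cauchySeq_tendsto_of_complete (Metric.cauchySeq_iff'.2 fun ε hε => ?_)
  obtain ⟨g, p, hg, hfg⟩ := h (ε / 5) (by positivity)
  have h1 : ∀ᶠ n in atTop, |g n - p| < ε / 5 := by
    have := Metric.tendsto_atTop.1 hg (ε / 5) (by positivity)
    obtain ⟨N, hN⟩ := this
    filter_upwards [eventually_ge_atTop N] with n hn
    have := hN n hn
    rwa [Real.dist_eq] at this
  obtain ⟨N, hN⟩ := eventually_atTop.1 (h1.and hfg)
  refine ⟨N, fun n hn => ?_⟩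
  obtain ⟨a1, a2⟩ := hN n hn
  obtain ⟨b1, b2⟩ := hN N le_rfl
  rw [Real.dist_eq]
  rw [abs_lt] at *
  rw [abs_le] at *
  constructor <;> linarith

lemma card_le_of_imp {α : Type} [Finite α] (C P Q A B : α → Prop)
    (h : ∀ x, C x → P x → ¬ A x → ¬ B x → Q x) :
    Nat.card {x // C x ∧ P x} ≤ Nat.card {x // C x ∧ Q x} + Nat.card {x // C x ∧ A x} +
      Nat.card {x // C x ∧ B x} := by
  classical
  have := Fintype.ofFinite α
  simp only [Nat.card_eq_fintype_card, Fintype.card_subtype]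
  refine le_trans (Finset.card_le_card ?_) ((Finset.card_union_le (_ ∪ _) _).trans
    (Nat.add_le_add_right (Finset.card_union_le _ _) _))
  intro x
  simp only [Finset.mem_filter, Finset.mem_union, Finset.mem_univ, true_and]
  intro hx
  have := h x hx.1 hx.2
  tauto

lemma prob_diff {C : GraphClassOn} {n : ℕ} (P Q A B : SimpleGraph (Fin n) → Prop)
    (h : ∀ G, C _ G → ¬ A G → ¬ B G → (P G ↔ Q G)) :
    |classProb C n P - classProb C n Q| ≤ classProb C n A + classProb C n B := by
  have h1 := card_le_of_imp (fun G => C _ G) P Q A B (fun G hC hP hA hB => (h G hC hA hB).1 hP)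
  have h2 := card_le_of_imp (fun G => C _ G) Q P A B (fun G hC hP hA hB => (h G hC hA hB).2 hP)
  unfold classProb
  rw [← sub_div, ← add_div, abs_div, abs_of_nonneg (Nat.cast_nonneg (classCount C n) : (0 : ℝ) ≤ classCount C n)]
  refine div_le_div_of_nonneg_right ?_ (Nat.cast_nonneg _)
  have h1' := (Nat.cast_le (α := ℝ)).2 h1
  have h2' := (Nat.cast_le (α := ℝ)).2 h2
  push_cast at h1' h2'
  rw [abs_le]
  constructor <;> linarith

lemma probA {C : GraphClassOn} (hAdd : ClassAddable C)
    (hne : ∀ n : ℕ, 1 ≤ n → ∃ G : SimpleGraph (Fin n), C (Fin n) G) {n K : ℕ} (hn : 0 < n)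
    (hK : 0 < K) : classProb C n (fun G => ∀ v, csize G v + K ≤ n) ≤ 2 / K := by
  have h := (Nat.cast_le (α := ℝ)).2 (badA hAdd.2 n K hn)
  push_cast at h
  have h0 : (0 : ℝ) < classCount C n := by exact_mod_cast count_pos hAdd.1 hne n
  have hK' : (0 : ℝ) < K := by exact_mod_cast hK
  unfold classProb
  rw [div_le_div_iff₀ h0 hK']
  exact h

lemma probB {C : GraphClassOn} (hIso : ClassIsoInvariant C) (hAdd : ClassAddable C)
    (hSmooth : ClassSmooth C)
    (hne : ∀ n : ℕ, 1 ≤ n → ∃ G : SimpleGraph (Fin n), C (Fin n) G)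
    {m : ℕ} (M : SimpleGraph (Fin m)) (r : Fin m) (hM : M.Connected) (hCM : C _ M) (K : ℕ) :
    Tendsto (fun n => classProb C n (fun G => ∃ v, Good M r K G v)) atTop (𝓝 0) := by
  obtain ⟨γ, hγ, hr⟩ := an_ratio hIso hAdd hSmooth hne
  have h1 := (ratio_tendsto (an_pos hAdd.1 hne) hγ hr m).inv₀ (pow_ne_zero _ (inv_ne_zero hγ))
  have h2 : Tendsto (fun n : ℕ => ((m.factorial : ℝ) / ((n - K : ℕ) : ℝ))) atTop (𝓝 0) :=
    tendsto_const_nhds.div_atTop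
      (tendsto_natCast_atTop_atTop.comp (tendsto_sub_atTop_nat K))
  have h3 := h1.mul h2
  rw [mul_zero] at h3
  refine tendsto_of_tendsto_of_tendsto_of_le_of_le' tendsto_const_nhds h3
    (Eventually.of_forall fun n => by unfold classProb; positivity) ?_
  filter_upwards [eventually_gt_atTop (2 * m + 2 * K)] with n hn
  have h := (Nat.cast_le (α := ℝ)).2 (badB hIso hAdd M r hM hCM K n hn)
  push_cast at h
  have h0 : (0 : ℝ) < classCount C n := by exact_mod_cast count_pos hAdd.1 hne n
  have hnK : (0 : ℝ) < ((n - K : ℕ) : ℝ) := by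
    have : 0 < n - K := by omega
    exact_mod_cast this
  have hch : (((n + m).choose m : ℕ) : ℝ) = (n + m).factorial / (m.factorial * n.factorial) := by
    rw [Nat.cast_choose ℝ (Nat.le_add_left m n), Nat.add_sub_cancel]
  rw [hch] at h
  have f1 : (0 : ℝ) < n.factorial := by exact_mod_cast n.factorial_pos
  have f2 : (0 : ℝ) < m.factorial := by exact_mod_cast m.factorial_pos
  have f3 : (0 : ℝ) < (n + m).factorial := by exact_mod_cast (n + m).factorial_pos
  have e1 : (an C n / an C (n + m))⁻¹ * ((m.factorial : ℝ) / ((n - K : ℕ) : ℝ)) =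
      classCount C (n + m) / (classCount C n *
        (((n - K : ℕ) : ℝ) * ((n + m).factorial / (m.factorial * n.factorial)))) := by
    unfold an
    field_simp
  rw [e1, classProb, div_le_div_iff₀ h0 (by positivity)]
  calc _ = classCount C n * (_ * (((n - K : ℕ) : ℝ) * ((n + m).factorial / (m.factorial * n.factorial)))) := by ring
    _ ≤ classCount C n * _ := mul_le_mul_of_nonneg_left h h0.le
    _ = _ := by ring

lemma exists_universal {C : GraphClassOn} (hIso : ClassIsoInvariant C) (hAdd : ClassAddable C)
    (h1 : ∃ G : SimpleGraph (Fin 1), C (Fin 1) G) (k : ℕ) :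
    ∃ (m : ℕ) (M : SimpleGraph (Fin m)) (r : Fin m), C _ M ∧ M.Connected ∧
      ∀ τ, RealTy C k τ → Abs k M r τ := by
  have := finite_Ty k Unit
  have := Fintype.ofFinite (Ty k Unit)
  obtain ⟨V, _, M, r, hM, hMc, hU⟩ := exists_universal_aux hIso hAdd h1 k Finset.univ
  have e : V ≃ Fin (Nat.card V) := Finite.equivFin V
  have e' : M ≃g M.comap e.symm := (SimpleGraph.Iso.comap e.symm M).symm
  exact ⟨Nat.card V, M.comap e.symm, e' r, (hIso _ _ _ _ ⟨e'⟩).1 hM, (conn_iso e').1 hMc,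
    fun τ hτ => (hU τ (Finset.mem_univ _) hτ).iso e'⟩

lemma main {C : GraphClassOn} (hIso : ClassIsoInvariant C) (hAdd : ClassAddable C)
    (hSmooth : ClassSmooth C)
    (hne : ∀ n : ℕ, 1 ≤ n → ∃ G : SimpleGraph (Fin n), C (Fin n) G)
    (φ : Language.graph.Sentence) :
    ∃ p : ℝ, Tendsto (fun n : ℕ => classProb C n (fun G => SatFO G φ)) atTop (𝓝 p) := by
  obtain ⟨k, hk⟩ := satFO_EF φ
  obtain ⟨m, M, r, hM, hMc, hU⟩ := exists_universal hIso hAdd (hne 1 le_rfl) k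
  let Q : GraphClassOn := fun V _ F => SatFO (du F M) φ
  have hQ : ClassIsoInvariant Q := by
    rintro V W _ _ G H ⟨e⟩
    have h4 := EF.of_iso (k := k) (glueIso (X := fun _ _ => False) (X' := fun _ _ => False) e
      (SimpleGraph.Iso.refl (G := M)) (by simp)) (Empty.elim : Empty → _)
    refine hk (du G M) (du H M) ?_
    convert h4 using 1
  refine converges_of_approx _ fun ε hε => ?_
  obtain ⟨K, hK⟩ := exists_nat_gt (2 / (ε / 2))
  have hK0 : (0 : ℝ) < K := lt_trans (by positivity) hK
  obtain ⟨p, hp⟩ := conv_small hIso hAdd hSmooth hne hQ K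
  refine ⟨_, p, hp, ?_⟩
  have hB := (probB hIso hAdd hSmooth hne M r hMc hM K).eventually (gt_mem_nhds (half_pos hε))
  filter_upwards [hB, eventually_gt_atTop (2 * K)] with n h1 h2
  refine (prob_diff _ _ (fun G => ∀ v, csize G v + K ≤ n) (fun G => ∃ v, Good M r K G v) ?_).trans ?_
  · intro G hG h3 h4
    exact hk _ _ (good_case hIso hAdd.1 hM hMc hU hG h2 h3 h4)
  · have h5 := probA hAdd hne (n := n) (K := K) (by omega) (by exact_mod_cast hK0)
    have h6 : (2 : ℝ) / K ≤ ε / 2 := by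
      rw [div_lt_iff₀ (by positivity)] at hK
      rw [div_le_iff₀ hK0]
      linarith
    linarith

end FOC
/-- Convergence law for first-order logic on a smooth addable class. -/
theorem fo_convergence_law
    (C : GraphClassOn) (hIso : ClassIsoInvariant C) (hAdd : ClassAddable C)
    (hSmooth : ClassSmooth C)
    (hne : ∀ n : ℕ, 1 ≤ n → ∃ G : SimpleGraph (Fin n), C (Fin n) G)
    (φ : Language.graph.Sentence) :
    ∃ p : ℝ, Tendsto (fun n : ℕ => classProb C n (fun G => SatFO G φ)) atTop (𝓝 p) := by
  exact FOC.main hIso hAdd hSmooth hne φ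
end
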